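/- arXiv:1104.1231 — 6 statements merged into one kernel-verified Lean document; each statement's English description precedes it below -/
import Mathlib

section
/- Every finitely generated infinite group admits a translation-like action by the group of integers ℤ. -/
open scoped Pointwise

/-- A right action of a group `H` on a type `X`. -/
structure RightAction (H X : Type*) [Group H] where
  act : X → H → X
  act_one : ∀ x, act x 1 = x
  act_mul : ∀ x h k, act (act x h) k = act x (h * k)

/-- A right action is translation-like w.r.t. a distance function `d` if it is free and
every element moves points a uniformly bounded distance. -/
def RightAction.IsTranslationLike {H X : Type*} [Group H]
    (a : RightAction H X) (d : X → X → ℝ) : Prop :=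
  (∀ (x : X) (h : H), a.act x h = x → h = 1) ∧
  (∀ h : H, ∃ C : ℝ, ∀ x : X, d x (a.act x h) ≤ C)

/-- A right action is transitive if any point can be moved to any other point. -/
def RightAction.IsTransitive {H X : Type*} [Group H] (a : RightAction H X) : Prop :=
  ∀ x y : X, ∃ h : H, a.act x h = y

/-- `S` is a finite generating set of the group `G`. -/
def IsFinGenSet {G : Type*} [Group G] (S : Set G) : Prop :=
  S.Finite ∧ Subgroup.closure S = ⊤

/-- The left-invariant word-length distance associated to a generating set `S`:
`wordDist S g h` is the least `n` with `g⁻¹ * h ∈ (S ∪ S⁻¹) ^ n`. -/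
noncomputable def wordDist {G : Type*} [Group G] (S : Set G) (g h : G) : ℕ :=
  sInf {n : ℕ | g⁻¹ * h ∈ (S ∪ S⁻¹) ^ n}

/-- The word metric as a real-valued distance function. -/
noncomputable def wordMetric {G : Type*} [Group G] (S : Set G) : G → G → ℝ :=
  fun g h => (wordDist S g h : ℝ)




namespace GBP

variable {G : Type*} [Group G]

/-- Cyclic order on `B` with small steps; each vertex owns one of its two incident arcs. -/
def Good (T : Set G) (B : Finset G) : Prop :=
  ∃ (φ : Equiv.Perm G) (o : G → Bool), φ.IsCycleOn (B : Set G) ∧ (∀ a, a ∉ B → φ a = a) ∧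
    ∀ a ∈ B, a⁻¹ * φ a ∈ T ^ (3 - (if o a then 1 else 0) - (if o (φ a) then 0 else 1))

theorem good_one (T : Set G) (h1 : (1 : G) ∈ T) : Good T {1} := by
  refine ⟨1, fun _ => true, ?_, ?_, ?_⟩
  · simp
  · simp
  · intro a _
    simpa using Set.one_mem_pow h1

theorem cyc_insert [DecidableEq G] {φ : Equiv.Perm G} {B : Finset G}
    (hc : φ.IsCycleOn (B : Set G)) (hf : ∀ a, a ∉ B → φ a = a) {u w : G} (hu : u ∈ B)
    (hw : w ∉ B) :
    (φ * Equiv.swap u w).IsCycleOn ((insert w B : Finset G) : Set G) ∧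
    (∀ a, a ∉ insert w B → (φ * Equiv.swap u w) a = a) ∧
    (φ * Equiv.swap u w) u = w ∧ (φ * Equiv.swap u w) w = φ u ∧
    ∀ a ∈ B, a ≠ u → (φ * Equiv.swap u w) a = φ a := by
  have e1 : (φ * Equiv.swap u w) u = w := by simp [hf w hw]
  have e2 : (φ * Equiv.swap u w) w = φ u := by simp
  have e3 : ∀ a, a ≠ w → a ≠ u → (φ * Equiv.swap u w) a = φ a := by
    intro a h1 h2
    simp [Equiv.swap_apply_of_ne_of_ne h2 h1]
  have e4 : ∀ a ∈ B, a ≠ w := fun a ha h => hw (h ▸ ha)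
  have hB : ∀ a ∈ B, φ a ∈ B := fun a ha => hc.1.mapsTo ha
  have e5 : ∀ a, a ∉ insert w B → (φ * Equiv.swap u w) a = a := by
    intro a ha
    simp only [Finset.mem_insert, not_or] at ha
    rw [e3 a ha.1 (fun h => ha.2 (h ▸ hu)), hf a ha.2]
  refine ⟨?_, e5, e1, e2, fun a ha h => e3 a (e4 a ha) h⟩
  generalize φ * Equiv.swap u w = ψ at *
  have hpow : ∀ n : ℕ, (φ ^ n) u ∈ B ∧ ψ.SameCycle u ((φ ^ n) u) := by
    intro n
    induction n with
    | zero => exact ⟨by simpa using hu, Equiv.Perm.SameCycle.refl _ _⟩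
    | succ n ih =>
      obtain ⟨h1, h2⟩ := ih
      rw [pow_succ', Equiv.Perm.mul_apply]
      refine ⟨hB _ h1, ?_⟩
      by_cases h : (φ ^ n) u = u
      · rw [h, ← e2, Equiv.Perm.sameCycle_apply_right, ← e1, Equiv.Perm.sameCycle_apply_right]
      · rw [← e3 _ (e4 _ h1) h, Equiv.Perm.sameCycle_apply_right]
        exact h2
  have hall : ∀ y ∈ insert w B, ψ.SameCycle u y := by
    intro y hy
    rcases Finset.mem_insert.1 hy with rfl | hy
    · rw [← e1, Equiv.Perm.sameCycle_apply_right]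
    · obtain ⟨n, hn⟩ := hc.exists_pow_eq' B.finite_toSet hu hy
      rw [← hn]
      exact (hpow n).2
  refine ⟨?_, fun x hx y hy => (hall x hx).symm.trans (hall y hy)⟩
  have hm : Set.MapsTo ψ ((insert w B : Finset G) : Set G) ((insert w B : Finset G) : Set G) := by
    intro a ha
    rcases Finset.mem_insert.1 ha with rfl | ha
    · rw [e2]; exact Finset.mem_insert_of_mem (hB _ hu)
    · by_cases h : a = u
      · rw [h, e1]; exact Finset.mem_insert_self _ _
      · rw [e3 a (e4 a ha) h]; exact Finset.mem_insert_of_mem (hB _ ha)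
  exact ⟨hm, ψ.injective.injOn,
    Finset.surjOn_of_injOn_of_card_le _ hm ψ.injective.injOn le_rfl⟩

theorem good_insert [DecidableEq G] (T : Set G) (hinv : ∀ t ∈ T, t⁻¹ ∈ T) {B : Finset G}
    (hB : Good T B) {v t : G} (hv : v ∈ B) (ht : t ∈ T) : Good T (insert (v * t) B) := by
  by_cases hw : v * t ∈ B
  · rwa [Finset.insert_eq_of_mem hw]
  obtain ⟨φ, o, hc, hf, hd⟩ := hB
  have e4 : ∀ a ∈ B, a ≠ v * t := fun a ha h => hw (h ▸ ha)
  have hBB : ∀ a ∈ B, φ a ∈ B := fun a ha => hc.1.mapsTo ha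
  cases ho : o v with
  | true =>
    obtain ⟨c1, c2, c3, c4, c5⟩ := cyc_insert hc hf hv hw
    refine ⟨φ * Equiv.swap v (v * t), Function.update o (v * t) false, c1, c2, ?_⟩
    generalize φ * Equiv.swap v (v * t) = ψ at *
    have ou : ∀ a ∈ B, Function.update o (v * t) false a = o a :=
      fun a ha => Function.update_of_ne (e4 a ha) _ _
    intro a ha
    rcases Finset.mem_insert.1 ha with rfl | ha
    · rw [c4, ou _ (hBB v hv)]
      have h := hd v hv
      have h2 := Set.mul_mem_mul (hinv t ht) h
      rw [← pow_succ'] at h2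
      rw [ho] at h
      simp only [ho, Function.update_self] at h2 ⊢
      cases hx : o (φ v) <;> simpa [hx, mul_assoc] using h2
    · by_cases h : a = v
      · subst h
        rw [c3, ou _ hv]
        simpa [ho] using ht
      · rw [c5 a ha h, ou _ ha, ou _ (hBB a ha)]
        exact hd a ha
  | false =>
    obtain ⟨u, hu, huv⟩ := hc.1.surjOn hv
    obtain ⟨c1, c2, c3, c4, c5⟩ := cyc_insert hc hf hu hw
    refine ⟨φ * Equiv.swap u (v * t), Function.update o (v * t) true, c1, c2, ?_⟩
    generalize φ * Equiv.swap u (v * t) = ψ at *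
    have ou : ∀ a ∈ B, Function.update o (v * t) true a = o a :=
      fun a ha => Function.update_of_ne (e4 a ha) _ _
    intro a ha
    rcases Finset.mem_insert.1 ha with rfl | ha
    · rw [c4, huv, ou _ hv]
      simpa [ho] using hinv t ht
    · by_cases h : a = u
      · subst h
        rw [c3, ou _ ha]
        have h := hd a ha
        have h2 := Set.mul_mem_mul h ht
        rw [← pow_succ] at h2
        simp only [ho, huv, Function.update_self] at h2 ⊢
        cases hx : o a <;> simpa [hx, mul_assoc] using h2
      · rw [c5 a ha h, ou _ ha, ou _ (hBB a ha)]
        exact hd a ha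

theorem good_exists [DecidableEq G] (T : Set G) (h1 : (1 : G) ∈ T) (hinv : ∀ t ∈ T, t⁻¹ ∈ T)
    (hT : Subgroup.closure T = ⊤) (A : Finset G) : ∃ B, A ⊆ B ∧ (1 : G) ∈ B ∧ Good T B := by
  have key : ∀ g : G, ∀ B : Finset G, (1 : G) ∈ B → Good T B →
      ∃ B', insert g B ⊆ B' ∧ Good T B' := by
    intro g
    have hg : g ∈ Subgroup.closure T := by rw [hT]; trivial
    induction hg using Subgroup.closure_induction_right with
    | one => exact fun B hB h => ⟨B, by simp [hB], h⟩
    | mul_right x hx y hy ih =>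
      intro B hB h
      obtain ⟨B', hs, h'⟩ := ih B hB h
      rw [Finset.insert_subset_iff] at hs
      exact ⟨_, Finset.insert_subset_insert _ hs.2, good_insert T hinv h' hs.1 hy⟩
    | mul_inv_cancel x hx y hy ih =>
      intro B hB h
      obtain ⟨B', hs, h'⟩ := ih B hB h
      rw [Finset.insert_subset_iff] at hs
      exact ⟨_, Finset.insert_subset_insert _ hs.2, good_insert T hinv h' hs.1 (hinv y hy)⟩
  induction A using Finset.induction_on with
  | empty => exact ⟨{1}, by simp, by simp, good_one T h1⟩
  | insert a A _ ih =>
    obtain ⟨B, hs, hB, h⟩ := ih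
    obtain ⟨B', hs', h'⟩ := key a B hB h
    exact ⟨B', (Finset.insert_subset_insert a hs).trans hs',
      hs' (Finset.mem_insert_of_mem hB), h'⟩

theorem approx (T : Set G) (h1 : (1 : G) ∈ T) (hinv : ∀ t ∈ T, t⁻¹ ∈ T)
    (hT : Subgroup.closure T = ⊤) (A : Finset G) : ∃ φ : Equiv.Perm G,
      (∀ a, a⁻¹ * φ a ∈ T ^ 3) ∧
      ∀ a ∈ A, ∀ n : ℕ, 0 < n → n < A.card → (φ ^ n) a ≠ a := by
  classical
  obtain ⟨B, hs, -, φ, o, hc, hf, hd⟩ := good_exists T h1 hinv hT A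
  refine ⟨φ, fun a => ?_, fun a ha n hn hnA h => ?_⟩
  · by_cases ha : a ∈ B
    · exact Set.pow_subset_pow_right h1 (by omega) (hd a ha)
    · rw [hf a ha]
      simpa using Set.one_mem_pow h1
  · have := Nat.le_of_dvd hn ((hc.pow_apply_eq (hs ha)).1 h)
    have := Finset.card_le_card hs
    omega

theorem finite_pow {T : Set G} (h : T.Finite) (n : ℕ) : (T ^ n).Finite := by
  induction n with
  | zero => simp
  | succ n ih => rw [pow_succ]; exact ih.mul h

theorem main_perm [Infinite G] (T : Set G) (hfin : T.Finite) (h1 : (1 : G) ∈ T)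
    (hinv : ∀ t ∈ T, t⁻¹ ∈ T) (hT : Subgroup.closure T = ⊤) : ∃ φ : Equiv.Perm G,
      (∀ a, a⁻¹ * φ a ∈ T ^ 3) ∧ ∀ a, ∀ n : ℕ, 0 < n → (φ ^ n) a ≠ a := by
  classical
  choose p hp1 hp2 using approx T h1 hinv hT
  let U : Ultrafilter (Finset G) := Ultrafilter.of Filter.atTop
  have hU : (U : Filter (Finset G)) ≤ Filter.atTop := Ultrafilter.of_le _
  have hT3 : (T ^ 3).Finite := GBP.finite_pow hfin 3
  have lim1 : ∀ g : G, ∃ x : G, g⁻¹ * x ∈ T ^ 3 ∧ ∀ᶠ A in (U : Filter (Finset G)), p A g = x := by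
    intro g
    have : ∀ᶠ A in (U : Filter (Finset G)), ∃ t ∈ T ^ 3, p A g = g * t :=
      Filter.Eventually.of_forall fun A => ⟨_, hp1 A g, by simp⟩
    obtain ⟨t, ht, h⟩ := (Ultrafilter.eventually_exists_mem_iff hT3).1 this
    exact ⟨g * t, by simpa using ht, h⟩
  have lim2 : ∀ g : G, ∃ x : G, ∀ᶠ A in (U : Filter (Finset G)), (p A).symm g = x := by
    intro g
    have : ∀ᶠ A in (U : Filter (Finset G)), ∃ t ∈ T ^ 3, (p A).symm g = g * t⁻¹ :=
      Filter.Eventually.of_forall fun A => ⟨_, hp1 A ((p A).symm g), by simp⟩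
    obtain ⟨t, ht, h⟩ := (Ultrafilter.eventually_exists_mem_iff hT3).1 this
    exact ⟨g * t⁻¹, h⟩
  choose f hf1 hf2 using lim1
  choose k hk using lim2
  let φ : Equiv.Perm G :=
    { toFun := f
      invFun := k
      left_inv := fun g => by
        obtain ⟨A, h1, h2⟩ := ((hf2 g).and (hk (f g))).exists
        rw [← h2, ← h1, Equiv.symm_apply_apply]
      right_inv := fun g => by
        obtain ⟨A, h1, h2⟩ := ((hk g).and (hf2 (k g))).exists
        rw [← h2, ← h1, Equiv.apply_symm_apply] }
  refine ⟨φ, hf1, fun a n hn h => ?_⟩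
  have hpow : ∀ m : ℕ, ∀ᶠ A in (U : Filter (Finset G)), (p A ^ m) a = (φ ^ m) a := by
    intro m
    induction m with
    | zero => simp
    | succ m ih =>
      filter_upwards [ih, hf2 ((φ ^ m) a)] with A h1 h2
      rw [pow_succ', pow_succ', Equiv.Perm.mul_apply, Equiv.Perm.mul_apply, h1, h2]
      rfl
  obtain ⟨C, hC⟩ := Infinite.exists_subset_card_eq G (n + 1)
  have hbig : ∀ᶠ A in (U : Filter (Finset G)), insert a C ⊆ A :=
    hU (Filter.eventually_ge_atTop (insert a C))
  obtain ⟨A, h2, h3⟩ := ((hpow n).and hbig).exists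
  have hcard := Finset.card_le_card ((Finset.subset_insert a C).trans h3)
  exact hp2 A a (h3 (Finset.mem_insert_self _ _)) n hn (by omega) (h2.trans h)

theorem disp_finite (φ : Equiv.Perm G) (K : Set G) (hK : K.Finite)
    (h : ∀ a, a⁻¹ * φ a ∈ K) (z : ℤ) :
    ∃ L : Set G, L.Finite ∧ ∀ a, a⁻¹ * (φ ^ z) a ∈ L := by
  induction z using Int.induction_on with
  | zero => exact ⟨{1}, Set.finite_singleton _, by simp⟩
  | succ n ih =>
    obtain ⟨L, hL, hl⟩ := ih
    refine ⟨L * K, hL.mul hK, fun a => ?_⟩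
    have := Set.mul_mem_mul (hl a) (h ((φ ^ (n : ℤ)) a))
    rw [add_comm, zpow_add, zpow_one, Equiv.Perm.mul_apply]
    convert this using 1
    group
  | pred n ih =>
    obtain ⟨L, hL, hl⟩ := ih
    refine ⟨L * K⁻¹, hL.mul hK.inv, fun a => ?_⟩
    have h2 := h (φ⁻¹ ((φ ^ (-(n : ℤ))) a))
    have h3 : ∀ y, φ (φ⁻¹ y) = y := fun y => φ.apply_symm_apply y
    rw [h3] at h2
    have := Set.mul_mem_mul (hl a) (Set.inv_mem_inv.2 h2)
    rw [sub_eq_neg_add, zpow_add, zpow_neg_one, Equiv.Perm.mul_apply]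
    convert this using 1
    group

end GBP

/-- **Geometric Burnside's Problem.** Every finitely generated infinite group admits a
translation-like action by `ℤ` (w.r.t. the word metric of any finite generating set). -/
theorem geometric_burnside_problem (G : Type*) [Group G] [Group.FG G] [Infinite G] :
    ∃ a : RightAction (Multiplicative ℤ) G,
      ∀ S : Set G, IsFinGenSet S → a.IsTranslationLike (wordMetric S) := by
  obtain ⟨S, hS⟩ := (Group.fg_iff (G := G)).1 inferInstance
  obtain ⟨hS, hfin⟩ := hS
  obtain ⟨φ, hd, hφ⟩ := GBP.main_perm (insert 1 (S ∪ S⁻¹)) ((hfin.union hfin.inv).insert 1)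
    (Set.mem_insert _ _)
    (by
      rintro t (rfl | h | h)
      · simp
      · right; right; simpa using h
      · right; left; simpa using h)
    (by
      rw [eq_top_iff, ← hS]
      exact Subgroup.closure_mono (fun x hx => Or.inr (Or.inl hx)))
  refine ⟨⟨fun x h => (φ ^ (Multiplicative.toAdd h)) x, fun x => by simp, fun x h k => ?_⟩,
    fun S' _ => ⟨fun x h hx => ?_, fun h => ?_⟩⟩
  · rw [toAdd_mul, add_comm, zpow_add, Equiv.Perm.mul_apply]
  · change (φ ^ (Multiplicative.toAdd h)) x = x at hx
    by_contra hne
    have hz : Multiplicative.toAdd h ≠ 0 := fun h0 => hne h0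
    generalize Multiplicative.toAdd h = z at hx hz
    obtain ⟨n, rfl | rfl⟩ := z.eq_nat_or_neg
    · exact hφ x n (by omega) (by simpa using hx)
    · refine hφ x n (by omega) ?_
      rw [zpow_neg, Equiv.Perm.inv_eq_iff_eq] at hx
      simpa using hx.symm
  · obtain ⟨L, hL, hl⟩ := GBP.disp_finite φ _
      (GBP.finite_pow ((hfin.union hfin.inv).insert 1) 3) hd (Multiplicative.toAdd h)
    obtain ⟨C, hC⟩ := (hL.image (fun g => ((sInf {n : ℕ | g ∈ (S' ∪ S'⁻¹) ^ n} : ℕ) : ℝ))).bddAbove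
    exact ⟨C, fun x => hC ⟨_, hl x, rfl⟩⟩
end

section
/- A finitely generated infinite group G has finitely many ends if and only if G admits a transitive translation-like action by ℤ. -/
open scoped Pointwise

/-- The (right) Cayley graph of a group w.r.t. a set `S`: `g` and `gs` are adjacent
for `s ∈ S ∪ S⁻¹`. -/
def cayleyGraph {G : Type*} [Group G] (S : Set G) : SimpleGraph G :=
  SimpleGraph.fromRel (fun g h => g⁻¹ * h ∈ S ∪ S⁻¹)

/-- The graph `Γ` has at most `m` ends: for every finite set `A` of edges, the graph
`Γ − A` has at most `m` infinite connected components. -/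
def graphEndsLE {V : Type*} (Γ : SimpleGraph V) (m : ℕ) : Prop :=
  ∀ A : Finset (Sym2 V),
    {c : (Γ.deleteEdges (A : Set (Sym2 V))).ConnectedComponent | c.supp.Infinite}.encard ≤ m


namespace EndsZ

variable {V : Type*}

/-- `b` is reachable from `a` by a walk inside `R`. -/
def Reach (Γ : SimpleGraph V) (R : Set V) (a b : V) : Prop :=
  ∃ p : Γ.Walk a b, ∀ x ∈ p.support, x ∈ R

/-- The set `R` is connected. -/
def Conn (Γ : SimpleGraph V) (R : Set V) : Prop :=
  ∀ a ∈ R, ∀ b ∈ R, Reach Γ R a b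

/-- The set `X` has finite edge boundary. -/
def FB (Γ : SimpleGraph V) (X : Set V) : Prop :=
  {p : V × V | Γ.Adj p.1 p.2 ∧ p.1 ∈ X ∧ p.2 ∉ X}.Finite

/-- Distance at most three. -/
def Near (Γ : SimpleGraph V) (a b : V) : Prop := ∃ p : Γ.Walk a b, p.length ≤ 3

theorem Near.symm {Γ : SimpleGraph V} {a b : V} (h : Near Γ a b) : Near Γ b a := by
  obtain ⟨p, hp⟩ := h
  exact ⟨p.reverse, by simpa using hp⟩

theorem Reach.refl {Γ : SimpleGraph V} {R : Set V} {a : V} (h : a ∈ R) : Reach Γ R a a :=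
  ⟨.nil, by simpa using h⟩

theorem Reach.symm {Γ : SimpleGraph V} {R : Set V} {a b : V} (h : Reach Γ R a b) :
    Reach Γ R b a := by
  obtain ⟨p, hp⟩ := h
  exact ⟨p.reverse, by simpa using hp⟩

theorem Reach.trans {Γ : SimpleGraph V} {R : Set V} {a b c : V} (h : Reach Γ R a b)
    (h' : Reach Γ R b c) : Reach Γ R a c := by
  obtain ⟨p, hp⟩ := h
  obtain ⟨q, hq⟩ := h'
  refine ⟨p.append q, fun x hx => ?_⟩
  rw [SimpleGraph.Walk.mem_support_append_iff] at hx
  exact hx.elim (hp x) (hq x)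

theorem Reach.right_mem {Γ : SimpleGraph V} {R : Set V} {a b : V} (h : Reach Γ R a b) :
    b ∈ R := by
  obtain ⟨p, hp⟩ := h
  exact hp _ p.end_mem_support

theorem Reach.of_adj {Γ : SimpleGraph V} {R : Set V} {a b : V} (ha : a ∈ R) (hb : b ∈ R)
    (h : Γ.Adj a b) : Reach Γ R a b :=
  ⟨.cons h .nil, by simp [ha, hb]⟩

/-- Crossing edge of a walk inside `R`. -/
theorem Reach.exists_cross {Γ : SimpleGraph V} {R : Set V} {a b : V} (h : Reach Γ R a b)
    (X : Set V) (ha : a ∈ X) (hb : b ∉ X) :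
    ∃ c d, Γ.Adj c d ∧ c ∈ R ∧ d ∈ R ∧ c ∈ X ∧ d ∉ X := by
  obtain ⟨p, hp⟩ := h
  obtain ⟨d, hd, h1, h2⟩ := p.exists_boundary_dart X ha hb
  exact ⟨d.fst, d.snd, d.adj, hp _ (p.dart_fst_mem_support_of_mem_darts hd),
    hp _ (p.dart_snd_mem_support_of_mem_darts hd), h1, h2⟩

/-- Component of `x` in `R`. -/
def comp (Γ : SimpleGraph V) (R : Set V) (x : V) : Set V := {y | Reach Γ R x y}

theorem comp_subset {Γ : SimpleGraph V} {R : Set V} {x : V} : comp Γ R x ⊆ R :=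
  fun _ h => Reach.right_mem h

theorem comp_closed {Γ : SimpleGraph V} {R : Set V} {x a b : V} (ha : a ∈ comp Γ R x)
    (hb : b ∈ R) (h : Γ.Adj a b) : b ∈ comp Γ R x :=
  Reach.trans ha (Reach.of_adj (comp_subset ha) hb h)

theorem comp_conn {Γ : SimpleGraph V} {R : Set V} {x : V} : Conn Γ (comp Γ R x) := by
  classical
  have key : ∀ y ∈ comp Γ R x, Reach Γ (comp Γ R x) x y := by
    rintro y ⟨p, hp⟩
    refine ⟨p, fun z hz => ⟨p.takeUntil z hz, fun w hw => hp w ?_⟩⟩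
    exact p.support_takeUntil_subset_support hz hw
  exact fun a ha b hb => (key a ha).symm.trans (key b hb)

theorem conn_diff_comp {Γ : SimpleGraph V} {R : Set V} {v x : V} (hR : Conn Γ R) (hv : v ∈ R) :
    Conn Γ (R \ comp Γ (R \ {v}) x) := by
  set B := comp Γ (R \ {v}) x with hB
  have hvB : v ∈ R \ B := ⟨hv, fun h => (comp_subset h).2 rfl⟩
  have key : ∀ y ∈ R \ B, Reach Γ (R \ B) y v := by
    intro y hy
    by_contra hcon
    obtain ⟨a, b, hab, haR, hbR, ha, hb⟩ := (hR y hy.1 v hv).exists_cross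
      {z | z ∈ R \ B ∧ ¬ Reach Γ (R \ B) z v} ⟨hy, hcon⟩ (fun h => h.2 (Reach.refl hvB))
    have hav : a ≠ v := by
      rintro rfl
      exact ha.2 (Reach.refl hvB)
    by_cases hbB : b ∈ B
    · exact ha.1.2 (comp_closed hbB ⟨haR, hav⟩ hab.symm)
    · have : Reach Γ (R \ B) b v := by
        by_contra h
        exact hb ⟨⟨hbR, hbB⟩, h⟩
      exact ha.2 ((Reach.of_adj ha.1 ⟨hbR, hbB⟩ hab).trans this)
  exact fun a ha b hb => (key a ha).trans (key b hb).symm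

theorem exists_adj_comp {Γ : SimpleGraph V} {R : Set V} {v x : V} (hR : Conn Γ R) (hv : v ∈ R)
    (hx : x ∈ R) (hxv : x ≠ v) : ∃ u ∈ comp Γ (R \ {v}) x, Γ.Adj v u := by
  obtain ⟨a, b, hab, haR, hbR, ha, hb⟩ := (hR x hx v hv).exists_cross
    (comp Γ (R \ {v}) x) (Reach.refl ⟨hx, hxv⟩) (fun h => (comp_subset h).2 rfl)
  by_cases hbv : b = v
  · subst hbv
    exact ⟨a, ha, hab.symm⟩
  · exact absurd (comp_closed ha ⟨hbR, hbv⟩ hab) hb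

theorem exists_list_finite (Γ : SimpleGraph V) (n : ℕ) : ∀ (A : Set V) (v : V), A.Finite →
    A.ncard ≤ n → Conn Γ A → v ∈ A → ∃ L : List V, L.Nodup ∧ (∀ x, x ∈ L ↔ x ∈ A) ∧
      L.head? = some v ∧ L.IsChain (Near Γ) ∧ ∃ w, L.getLast? = some w ∧ (w = v ∨ Γ.Adj w v) := by
  induction n with
  | zero =>
    intro A v hA hn _ hv
    have := (Set.ncard_pos hA).2 ⟨v, hv⟩
    omega
  | succ n ih =>
    intro A v hA hn hc hv
    by_cases hx : ∃ x ∈ A, x ≠ v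
    · obtain ⟨x, hx, hxv⟩ := hx
      obtain ⟨u, hu, hvu⟩ := exists_adj_comp hc hv hx hxv
      set B := comp Γ (A \ {v}) x with hB
      have hBA : B ⊆ A \ {v} := comp_subset
      have hvB : v ∉ B := fun h => (hBA h).2 rfl
      have hBf : B.Finite := hA.subset (hBA.trans Set.sdiff_subset)
      have hBc : B.ncard < A.ncard :=
        Set.ncard_lt_ncard ⟨hBA.trans Set.sdiff_subset, fun h => hvB (h hv)⟩ hA
      have hAc : (A \ B).ncard < A.ncard :=
        Set.ncard_lt_ncard ⟨Set.sdiff_subset, fun h => (h (hBA hu).1).2 hu⟩ hA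
      obtain ⟨L1, n1, m1, h1, c1, w1, l1, e1⟩ := ih (A \ B) v (hA.subset Set.sdiff_subset)
        (by omega) (conn_diff_comp hc hv) ⟨hv, hvB⟩
      obtain ⟨L2, n2, m2, h2, c2, w2, l2, e2⟩ := ih B u hBf (by omega) comp_conn hu
      refine ⟨L1 ++ L2.reverse, ?_, ?_, ?_, ?_, u, ?_, Or.inr hvu.symm⟩
      · rw [List.nodup_append]
        refine ⟨n1, by simpa using n2, ?_⟩
        rintro a ha b hb rfl
        exact ((m1 a).1 ha).2 ((m2 a).1 (by simpa using hb))
      · intro y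
        rw [List.mem_append, List.mem_reverse, m1, m2]
        constructor
        · rintro (h | h)
          · exact h.1
          · exact (hBA h).1
        · intro h
          by_cases hy : y ∈ B
          · exact Or.inr hy
          · exact Or.inl ⟨h, hy⟩
      · simp [List.head?_append, h1]
      · rw [List.isChain_append]
        refine ⟨c1, ?_, ?_⟩
        · rw [List.isChain_reverse]
          exact c2.imp fun a b h => Near.symm h
        · intro a ha b hb
          rw [l1] at ha
          rw [List.head?_reverse, l2] at hb
          simp only [Option.mem_def, Option.some.injEq] at ha hb
          subst ha hb
          rcases e1 with rfl | e1 <;> rcases e2 with rfl | e2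
          · exact ⟨.cons hvu .nil, by simp⟩
          · exact ⟨.cons hvu (.cons e2.symm .nil), by simp⟩
          · exact ⟨.cons e1 (.cons hvu .nil), by simp⟩
          · exact ⟨.cons e1 (.cons hvu (.cons e2.symm .nil)), by simp⟩
      · rw [List.getLast?_append, List.getLast?_reverse, h2]
        simp
    · push Not at hx
      refine ⟨[v], by simp, ?_, by simp, by simp, v, by simp, Or.inl rfl⟩
      intro y
      simp only [List.mem_singleton]
      exact ⟨fun h => h ▸ hv, fun h => hx y h⟩

theorem exists_step [Infinite V] {Γ : SimpleGraph V} (lf : ∀ v, (Γ.neighborSet v).Finite)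
    (oe : ∀ X, FB Γ X → X.Finite ∨ Xᶜ.Finite) {R : Set V} (hR : Conn Γ R) (hRf : Rᶜ.Finite)
    {v : V} (hv : v ∈ R) : ∃ x, (comp Γ (R \ {v}) x)ᶜ.Finite ∧
      ∃ u ∈ comp Γ (R \ {v}) x, Γ.Adj v u := by
  have hRv : (R \ {v}).Infinite := by
    apply Set.Infinite.sdiff _ (Set.finite_singleton v)
    intro h
    exact Set.infinite_univ (by simpa using h.union hRf)
  have hRvc : (R \ {v})ᶜ.Finite := by
    refine (hRf.union (Set.finite_singleton v)).subset ?_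
    intro y hy
    by_cases h : y ∈ R
    · right
      by_contra h'
      exact hy ⟨h, h'⟩
    · exact Or.inl h
  have : ∃ x ∈ Γ.neighborSet v, (comp Γ (R \ {v}) x).Infinite := by
    by_contra hcon
    push Not at hcon
    refine hRv (((lf v).biUnion hcon).subset ?_)
    intro y hy
    obtain ⟨u, hu, hvu⟩ := exists_adj_comp hR hv hy.1 hy.2
    exact Set.mem_biUnion hvu (Reach.symm hu)
  obtain ⟨x, hx, hinf⟩ := this
  refine ⟨x, ?_, x, ?_, hx⟩
  · refine (oe _ ?_).resolve_left hinf
    refine (hRvc.biUnion (t := fun b => (fun a => (a, b)) '' Γ.neighborSet b)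
      (fun b _ => (lf b).image _)).subset ?_
    rintro ⟨a, b⟩ ⟨hab, ha, hb⟩
    simp only at hab ha hb
    refine Set.mem_biUnion (x := b) ?_ ⟨a, hab.symm, rfl⟩
    intro h
    exact hb (comp_closed ha h hab)
  · obtain ⟨y, hy⟩ := hinf.nonempty
    obtain ⟨p, hp⟩ := hy
    exact Reach.refl (hp _ p.start_mem_support)

theorem exists_absorb [Infinite V] {Γ : SimpleGraph V} (lf : ∀ v, (Γ.neighborSet v).Finite)
    (oe : ∀ X, FB Γ X → X.Finite ∨ Xᶜ.Finite) {v t : V} (p : Γ.Walk v t) (hp : p.IsPath) :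
    ∀ R : Set V, Conn Γ R → Rᶜ.Finite → (∀ x ∈ p.support, x ∈ R) →
      ∃ (L : List V) (R' : Set V) (w u : V), L.Nodup ∧ L.head? = some v ∧ L.IsChain (Near Γ) ∧
        t ∈ L ∧ Conn Γ R' ∧ R'ᶜ.Finite ∧ (∀ x, x ∈ R' ↔ x ∈ R ∧ x ∉ L) ∧ (∀ x ∈ L, x ∈ R) ∧
        L.getLast? = some w ∧ u ∈ R' ∧ Near Γ w u := by
  have one : ∀ (v : V) (R : Set V), Conn Γ R → Rᶜ.Finite → v ∈ R →
      ∃ (x : V) (L : List V), (comp Γ (R \ {v}) x)ᶜ.Finite ∧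
       L.Nodup ∧ L.head? = some v ∧ L.IsChain (Near Γ) ∧
       (∀ y, y ∈ L ↔ y ∈ R \ comp Γ (R \ {v}) x) ∧ 
       (∃ u ∈ comp Γ (R \ {v}) x, Γ.Adj v u) ∧
       ∃ w, L.getLast? = some w ∧ ∀ u, Γ.Adj v u → Near Γ w u := by
    intro v R hR hRf hv
    obtain ⟨x, hx, hu⟩ := exists_step lf oe hR hRf hv
    obtain ⟨L, h1, h2, h3, h4, w, h5, h6⟩ := exists_list_finite Γ _ (R \ comp Γ (R \ {v}) x) v
      (hx.subset fun y hy => hy.2) le_rfl (conn_diff_comp hR hv)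
      ⟨hv, fun h => (comp_subset h).2 rfl⟩
    refine ⟨x, L, hx, h1, h3, h4, h2, hu, w, h5, fun u hu => ?_⟩
    rcases h6 with rfl | h6
    · exact ⟨.cons hu .nil, by simp⟩
    · exact ⟨.cons h6 (.cons hu .nil), by simp⟩
  have fin : ∀ (v t : V) (R : Set V) (x : V) (L : List V), (comp Γ (R \ {v}) x)ᶜ.Finite →
       L.Nodup → L.head? = some v → L.IsChain (Near Γ) →
       (∀ y, y ∈ L ↔ y ∈ R \ comp Γ (R \ {v}) x) → 
       (∃ u ∈ comp Γ (R \ {v}) x, Γ.Adj v u) →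
       (∃ w, L.getLast? = some w ∧ ∀ u, Γ.Adj v u → Near Γ w u) → t ∈ L →
      ∃ (L : List V) (R' : Set V) (w u : V), L.Nodup ∧ L.head? = some v ∧ L.IsChain (Near Γ) ∧
        t ∈ L ∧ Conn Γ R' ∧ R'ᶜ.Finite ∧ (∀ x, x ∈ R' ↔ x ∈ R ∧ x ∉ L) ∧ (∀ x ∈ L, x ∈ R) ∧
        L.getLast? = some w ∧ u ∈ R' ∧ Near Γ w u := by
    rintro v t R x L hx h1 h2 h3 h4 ⟨u, hu, hvu⟩ ⟨w, h5, h6⟩ ht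
    refine ⟨L, _, w, u, h1, h2, h3, ht, comp_conn, hx, ?_, fun y hy => ((h4 y).1 hy).1, h5, hu,
      h6 u hvu⟩
    intro y
    rw [h4]
    constructor
    · intro h
      exact ⟨(comp_subset h).1, fun h' => h'.2 h⟩
    · rintro ⟨h, h'⟩
      by_contra h''
      exact h' ⟨h, h''⟩
  induction p with
  | nil =>
    intro R hR hRf hs
    rename_i v
    have hv : v ∈ R := hs v (by simp)
    obtain ⟨x, L, hx, h1, h2, h3, h4, hu, h5⟩ := one v R hR hRf hv
    exact fin v v R x L hx h1 h2 h3 h4 hu h5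
      ((h4 v).2 ⟨hv, fun h => (comp_subset h).2 rfl⟩)
  | cons h q ih =>
    intro R hR hRf hs
    rename_i v u t
    rw [SimpleGraph.Walk.cons_isPath_iff] at hp
    have hv : v ∈ R := hs v (by simp)
    have hq : ∀ y ∈ q.support, y ∈ R \ {v} := by
      intro y hy
      refine ⟨hs y (by simp [hy]), ?_⟩
      rintro rfl
      exact hp.2 hy
    obtain ⟨x, L, hx, h1, h2, h3, h4, hu, w, h5, h6⟩ := one v R hR hRf hv
    by_cases huB : u ∈ comp Γ (R \ {v}) x
    · classical
      obtain ⟨L', R', w', u', g1, g2, g3, g4, g5, g6, g7, g8, g9, g10, g11⟩ :=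
        ih hp.1 (comp Γ (R \ {v}) x) comp_conn hx (by
          intro y hy
          refine Reach.trans huB ⟨q.takeUntil y hy, fun z hz => hq z ?_⟩
          exact q.support_takeUntil_subset_support hy hz)
      refine ⟨L ++ L', R', w', u', ?_, by simp [List.head?_append, h2], ?_, by simp [g4], g5, g6,
        ?_, ?_, by simp [List.getLast?_append, g9], g10, g11⟩
      · rw [List.nodup_append]
        refine ⟨h1, g1, ?_⟩
        rintro a ha b hb rfl
        exact ((h4 a).1 ha).2 (g8 a hb)
      · rw [List.isChain_append]
        refine ⟨h3, g3, ?_⟩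
        intro a ha b hb
        rw [h5] at ha
        rw [g2] at hb
        simp only [Option.mem_def, Option.some.injEq] at ha hb
        subst ha hb
        exact h6 _ h
      · intro y
        rw [g7, List.mem_append, h4]
        constructor
        · rintro ⟨ha, hb⟩
          exact ⟨(comp_subset ha).1, fun h => h.elim (fun h => h.2 ha) hb⟩
        · rintro ⟨ha, hb⟩
          push Not at hb
          refine ⟨?_, hb.2⟩
          by_contra h'
          exact hb.1 ⟨ha, h'⟩
      · intro y hy
        rcases List.mem_append.1 hy with hy | hy
        · exact ((h4 y).1 hy).1
        · exact (comp_subset (g8 y hy)).1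
    · refine fin v t R x L hx h1 h2 h3 h4 hu ⟨w, h5, h6⟩ ?_
      rw [h4]
      refine ⟨hs t (by simp), fun ht => huB ?_⟩
      exact Reach.trans ht (Reach.symm ⟨q, hq⟩)

theorem exists_seq [Countable V] [Infinite V] (N : V → V → Prop) (P : List V → Prop)
    (h0 : P []) (h1 : ∀ L, P L → L.Nodup ∧ L.IsChain N)
    (h2 : ∀ L t, P L → ∃ L', P L' ∧ L <+: L' ∧ t ∈ L') :
    ∃ f : ℕ → V, Function.Bijective f ∧ ∀ n, N (f n) (f (n + 1)) := by
  obtain ⟨e, he⟩ := exists_surjective_nat V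
  have h3 : ∀ (L : {L // P L}) (t : V), ∃ L' : {L // P L}, L.1 <+: L'.1 ∧ t ∈ L'.1 ∧
      L.1.length < L'.1.length := by
    rintro ⟨L, hL⟩ t
    obtain ⟨L1, p1, q1, r1⟩ := h2 L t hL
    obtain ⟨s, hs⟩ := (L1.finite_toSet).exists_notMem
    obtain ⟨L2, p2, q2, r2⟩ := h2 L1 s p1
    refine ⟨⟨L2, p2⟩, q1.trans q2, q2.subset r1, ?_⟩
    have a1 := q1.length_le
    have a2 := q2.length_le
    simp only
    by_contra hlt
    have : L1 = L2 := q2.eq_of_length (by omega)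
    subst this
    exact hs r2
  choose F F1 F2 F3 using h3
  let Ls : ℕ → {L // P L} := fun n => Nat.rec ⟨[], h0⟩ (fun n L => F L (e n)) n
  have hs : ∀ n, Ls (n + 1) = F (Ls n) (e n) := fun n => rfl
  have hmono : ∀ n k, n ≤ k → (Ls n).1 <+: (Ls k).1 := by
    intro n k hnk
    induction hnk with
    | refl => exact List.prefix_rfl
    | step _ ih => exact ih.trans (F1 _ _)
  have hlen : ∀ n, n ≤ (Ls n).1.length := by
    intro n
    induction n with
    | zero => simp
    | succ n ih =>
      have := F3 (Ls n) (e n)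
      rw [hs]
      omega
  have hl : ∀ n, n < (Ls (n + 1)).1.length := fun n => hlen (n + 1)
  let f : ℕ → V := fun n => (Ls (n + 1)).1[n]'(hl n)
  have hf : ∀ n k (h : n < (Ls k).1.length), (Ls k).1[n] = f n := by
    intro n k h
    rcases le_total k (n + 1) with hk | hk
    · exact (hmono _ _ hk).getElem h
    · exact ((hmono _ _ hk).getElem (hl n)).symm
  refine ⟨f, ⟨?_, ?_⟩, ?_⟩
  · intro a b hab
    have ha : a < (Ls (a + b + 1)).1.length := lt_of_lt_of_le (by omega) (hlen (a + b + 1))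
    have hb : b < (Ls (a + b + 1)).1.length := lt_of_lt_of_le (by omega) (hlen (a + b + 1))
    rw [← hf a (a + b + 1) ha, ← hf b (a + b + 1) hb] at hab
    exact ((h1 _ (Ls (a + b + 1)).2).1.getElem_inj_iff).1 hab
  · intro y
    obtain ⟨n, rfl⟩ := he y
    have := F2 (Ls n) (e n)
    rw [← hs] at this
    obtain ⟨i, hi, hi'⟩ := List.getElem_of_mem this
    exact ⟨i, by rw [← hf i (n + 1) hi, hi']⟩
  · intro n
    have ha : n < (Ls (n + 2)).1.length := lt_of_lt_of_le (by omega) (hlen (n + 2))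
    have hb : n + 1 < (Ls (n + 2)).1.length := lt_of_lt_of_le (by omega) (hlen (n + 2))
    rw [← hf n (n + 2) ha, ← hf (n + 1) (n + 2) hb]
    exact List.isChain_iff_getElem.1 (h1 _ (Ls (n + 2)).2).2 n hb

theorem exists_ray [Countable V] [Infinite V] {Γ : SimpleGraph V}
    (lf : ∀ v, (Γ.neighborSet v).Finite)
    (oe : ∀ X, FB Γ X → X.Finite ∨ Xᶜ.Finite) (hc : ∀ a b, Γ.Reachable a b) :
    ∃ f : ℕ → V, Function.Bijective f ∧ ∀ n, Near Γ (f n) (f (n + 1)) := by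
  classical
  apply exists_seq (Near Γ) (fun L => L.Nodup ∧ L.IsChain (Near Γ) ∧ Conn Γ {x | x ∉ L} ∧
    ∃ u, u ∉ L ∧ ∀ w ∈ L.getLast?, Near Γ w u)
  · refine ⟨by simp, by simp, ?_, Classical.arbitrary V, by simp, by simp⟩
    intro a _ b _
    obtain ⟨p⟩ := hc a b
    exact ⟨p, by simp⟩
  · exact fun L h => ⟨h.1, h.2.1⟩
  · rintro L t ⟨n1, c1, k1, u, hu, hw⟩
    by_cases ht : t ∈ L
    · exact ⟨L, ⟨n1, c1, k1, u, hu, hw⟩, List.prefix_rfl, ht⟩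
    obtain ⟨p, hp⟩ := k1 u hu t ht
    obtain ⟨L', R', w', u', g1, g2, g3, g4, g5, g6, g7, g8, g9, g10, g11⟩ :=
      exists_absorb lf oe p.bypass p.bypass_isPath {x | x ∉ L} k1
        (L.finite_toSet.subset fun x hx => by simpa using hx)
        (fun x hx => hp x (p.support_bypass_subset_support hx))
    have hR : R' = {x | x ∉ L ++ L'} := by
      ext x
      rw [g7]
      simp
    refine ⟨L ++ L', ⟨?_, ?_, hR ▸ g5, u', ?_, ?_⟩, List.prefix_append _ _, by simp [g4]⟩
    · rw [List.nodup_append]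
      refine ⟨n1, g1, ?_⟩
      rintro a ha b hb rfl
      exact g8 a hb ha
    · rw [List.isChain_append]
      refine ⟨c1, g3, ?_⟩
      intro a ha b hb
      rw [g2] at hb
      simp only [Option.mem_def, Option.some.injEq] at hb
      subst hb
      exact hw a ha
    · rw [hR] at g10
      exact g10
    · intro w hw
      rw [List.getLast?_append, g9] at hw
      simp only [Option.some_or, Option.mem_def, Option.some.injEq] at hw
      subst hw
      exact g11

/-- Adjacent, equal, or both in `K`. -/
def Link (Γ : SimpleGraph V) (K : Set V) (a b : V) : Prop :=
  a = b ∨ Γ.Adj a b ∨ (a ∈ K ∧ b ∈ K)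

theorem exists_ray_region [Countable V] {Γ : SimpleGraph V}
    (lf : ∀ v, (Γ.neighborSet v).Finite) (hc : ∀ a b, Γ.Reachable a b)
    {W : Set V} (hW : W.Infinite) (hFB : FB Γ W)
    (oe : ∀ Z ⊆ W, FB Γ Z → Z.Finite ∨ (W \ Z).Finite) :
    ∃ (f : ℕ → V) (K : Set V), K.Finite ∧ Function.Injective f ∧ Set.range f = W ∧
      ∀ n, ∃ b c, Link Γ K (f n) b ∧ Link Γ K b c ∧ Link Γ K c (f (n + 1)) := by
  obtain ⟨k0, hk0⟩ := hW.nonempty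
  have : Infinite W := hW.to_subtype
  let K : Set V := insert k0 (Prod.fst '' {p : V × V | Γ.Adj p.1 p.2 ∧ p.1 ∈ W ∧ p.2 ∉ W})
  have hK : K.Finite := (hFB.image _).insert _
  have hKb : ∀ a b, Γ.Adj a b → a ∈ W → b ∉ W → a ∈ K := fun a b h1 h2 h3 =>
    Set.mem_insert_of_mem _ ⟨(a, b), ⟨h1, h2, h3⟩, rfl⟩
  let Δ : SimpleGraph W :=
    { Adj := fun a b => a ≠ b ∧ (Γ.Adj a b ∨ (a.1 ∈ K ∧ b.1 ∈ K))
      symm := ⟨fun a b h => ⟨h.1.symm, h.2.imp (fun h => h.symm) (fun h => ⟨h.2, h.1⟩)⟩⟩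
      loopless := ⟨fun a h => h.1 rfl⟩ }
  have hΔ : ∀ a b : W, Δ.Adj a b ↔ a ≠ b ∧ (Γ.Adj a b ∨ (a.1 ∈ K ∧ b.1 ∈ K)) :=
    fun a b => Iff.rfl
  have lfΔ : ∀ v, (Δ.neighborSet v).Finite := by
    intro v
    refine Set.Finite.of_finite_image (f := Subtype.val) ?_ Subtype.val_injective.injOn
    refine ((lf v).union hK).subset ?_
    rintro _ ⟨u, hu, rfl⟩
    have hu := (hΔ _ _).1 hu
    exact hu.2.imp (fun h => h) (fun h => h.2)
  have hcΔ0 : ∀ a : W, Δ.Reachable ⟨k0, hk0⟩ a := by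
    intro w
    by_contra hw
    obtain ⟨p⟩ := hc w k0
    obtain ⟨d, -, ⟨h1, h2⟩, h3⟩ := p.exists_boundary_dart
      {x | ∃ h : x ∈ W, ¬ Δ.Reachable ⟨k0, hk0⟩ ⟨x, h⟩} ⟨w.2, hw⟩
      (fun ⟨_, h⟩ => h (SimpleGraph.Reachable.refl _))
    have hne : d.fst ≠ k0 := by
      intro h
      apply h2
      have : (⟨d.fst, h1⟩ : W) = ⟨k0, hk0⟩ := Subtype.ext h
      rw [this]
    by_cases hs : d.snd ∈ W
    · have hr : Δ.Reachable ⟨k0, hk0⟩ ⟨d.snd, hs⟩ := by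
        by_contra h
        exact h3 ⟨hs, h⟩
      refine h2 (hr.trans (SimpleGraph.Adj.reachable ((hΔ _ _).2 ⟨?_, Or.inl d.adj.symm⟩)))
      intro h
      exact d.adj.ne (congrArg Subtype.val h).symm
    · refine h2 (SimpleGraph.Adj.reachable ((hΔ _ _).2 ⟨?_, Or.inr ⟨Set.mem_insert _ _, ?_⟩⟩))
      · intro h
        exact hne (congrArg Subtype.val h).symm
      · exact hKb _ _ d.adj h1 hs
  have oeΔ : ∀ X, FB Δ X → X.Finite ∨ Xᶜ.Finite := by
    intro X hX
    have : FB Γ (Subtype.val '' X) := by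
      refine ((hX.image (Prod.map Subtype.val Subtype.val)).union hFB).subset ?_
      rintro ⟨a, b⟩ ⟨h1, ⟨a, ha, rfl⟩, h3⟩
      simp only at h1 h3
      by_cases hb : b ∈ W
      · refine Or.inl ⟨(a, ⟨b, hb⟩), ⟨(hΔ _ _).2 ⟨?_, Or.inl h1⟩, ha, fun h => h3 ⟨_, h, rfl⟩⟩, rfl⟩
        intro h
        exact h1.ne (congrArg Subtype.val h)
      · exact Or.inr ⟨h1, a.2, hb⟩
    refine (oe _ (by rintro _ ⟨a, _, rfl⟩; exact a.2) this).imp ?_ ?_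
    · exact fun h => Set.Finite.of_finite_image h Subtype.val_injective.injOn
    · intro h
      refine Set.Finite.of_finite_image (f := Subtype.val) (h.subset ?_)
        Subtype.val_injective.injOn
      rintro _ ⟨a, ha, rfl⟩
      refine ⟨a.2, ?_⟩
      rintro ⟨b, hb, hab⟩
      exact ha (Subtype.ext hab ▸ hb)
  obtain ⟨f, hf, hn⟩ := exists_ray lfΔ oeΔ (fun a b => (hcΔ0 a).symm.trans (hcΔ0 b))
  refine ⟨fun n => f n, K, hK, Subtype.val_injective.comp hf.1, ?_, ?_⟩
  · ext x
    constructor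
    · rintro ⟨n, rfl⟩
      exact (f n).2
    · intro hx
      obtain ⟨n, hn⟩ := hf.2 ⟨x, hx⟩
      exact ⟨n, by simp only [hn]⟩
  · have hl : ∀ a b : W, Δ.Adj a b → Link Γ K a b := fun a b h => Or.inr ((hΔ a b).1 h).2
    intro n
    obtain ⟨p, hp⟩ := hn n
    revert p
    change ∀ p : Δ.Walk (f n) (f (n + 1)), p.length ≤ 3 → ∃ b c, Link Γ K (f n).1 b ∧
      Link Γ K b c ∧ Link Γ K c (f (n + 1)).1
    generalize f n = x
    generalize f (n + 1) = y
    intro p hp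
    match p, hp with
    | .nil, _ => exact ⟨x, x, Or.inl rfl, Or.inl rfl, Or.inl rfl⟩
    | .cons h .nil, _ => exact ⟨y, y, hl _ _ h, Or.inl rfl, Or.inl rfl⟩
    | .cons h (.cons h' .nil), _ => exact ⟨_, y, hl _ _ h, hl _ _ h', Or.inl rfl⟩
    | .cons h (.cons h' (.cons h'' .nil)), _ => exact ⟨_, _, hl _ _ h, hl _ _ h', hl _ _ h''⟩
    | .cons _ (.cons _ (.cons _ (.cons _ q))), hp =>
      simp only [SimpleGraph.Walk.length_cons] at hp
      omega

section Group

variable {G : Type*} [Group G]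

theorem cay_adj (S : Set G) (a b : G) :
    (cayleyGraph S).Adj a b ↔ a ≠ b ∧ a⁻¹ * b ∈ S ∪ S⁻¹ := by
  unfold cayleyGraph
  rw [SimpleGraph.fromRel_adj]
  have : b⁻¹ * a ∈ S ∪ S⁻¹ ↔ a⁻¹ * b ∈ S ∪ S⁻¹ := by
    simp only [Set.mem_union, Set.mem_inv, mul_inv_rev, inv_inv]
    exact or_comm
  rw [this, or_self]

theorem cay_adj_mul (S : Set G) (g a b : G) :
    (cayleyGraph S).Adj (g * a) (g * b) ↔ (cayleyGraph S).Adj a b := by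
  simp [cay_adj, mul_assoc]

/-- Left translation as a graph homomorphism. -/
def cayHom (S : Set G) (g : G) : cayleyGraph S →g cayleyGraph S where
  toFun x := g * x
  map_rel' := fun h => (cay_adj_mul S g _ _).2 h

theorem cay_lf {S : Set G} (hS : S.Finite) (v : G) : ((cayleyGraph S).neighborSet v).Finite := by
  refine ((hS.union hS.inv).image (fun s => v * s)).subset ?_
  intro u hu
  have hu := (cay_adj S v u).1 hu
  exact ⟨v⁻¹ * u, hu.2, by simp⟩

theorem cay_conn {S : Set G} (hS : Subgroup.closure S = ⊤) (a b : G) :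
    (cayleyGraph S).Reachable a b := by
  have key : ∀ g ∈ Subgroup.closure S, ∀ x, (cayleyGraph S).Reachable x (x * g) := by
    intro g hg
    induction hg using Subgroup.closure_induction with
    | mem s hs =>
      intro x
      by_cases h : s = 1
      · subst h
        simp
      · refine SimpleGraph.Adj.reachable ((cay_adj S _ _).2 ⟨?_, Or.inl ?_⟩)
        · simpa using h
        · simpa using hs
    | one => simp
    | mul g h _ _ h1 h2 =>
      intro x
      rw [← mul_assoc]
      exact (h1 x).trans (h2 _)
    | inv g _ h =>
      intro x
      have := h (x * g⁻¹)
      rw [inv_mul_cancel_right] at this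
      exact this.symm
  have := key (a⁻¹ * b) (hS ▸ Subgroup.mem_top _) a
  rwa [mul_inv_cancel_left] at this

/-- Every generating set reaches every element in finitely many steps. -/
theorem exists_pow {S : Set G} (hS : Subgroup.closure S = ⊤) (a b : G) :
    ∃ n, a⁻¹ * b ∈ (S ∪ S⁻¹) ^ n := by
  obtain ⟨p⟩ := cay_conn hS a b
  induction p with
  | nil => exact ⟨0, by simp⟩
  | cons h q ih =>
    obtain ⟨n, hn⟩ := ih
    refine ⟨n + 1, ?_⟩
    rw [pow_succ']
    exact ⟨_, ((cay_adj S _ _).1 h).2, _, hn, by simp [mul_assoc]⟩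

theorem finite_pow {U : Set G} (hU : U.Finite) (n : ℕ) : (U ^ n).Finite := by
  induction n with
  | zero => simp
  | succ n ih =>
    rw [pow_succ]
    exact ih.mul hU

theorem countable_of_fin {S : Set G} (hS : S.Finite) (hc : Subgroup.closure S = ⊤) :
    Countable G := by
  rw [← Set.countable_univ_iff]
  refine (Set.countable_iUnion fun n : ℕ => (finite_pow (hS.union hS.inv) n).countable).mono ?_
  intro x _
  obtain ⟨n, hn⟩ := exists_pow hc 1 x
  exact Set.mem_iUnion.2 ⟨n, by simpa using hn⟩

theorem FB_translate {S : Set G} {X : Set G} (h : FB (cayleyGraph S) X) (g : G) :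
    FB (cayleyGraph S) (g • X) := by
  refine (h.image (Prod.map (g * ·) (g * ·))).subset ?_
  rintro ⟨a, b⟩ ⟨h1, h2, h3⟩
  simp only [Set.mem_smul_set_iff_inv_smul_mem, smul_eq_mul] at h1 h2 h3
  exact ⟨(g⁻¹ * a, g⁻¹ * b), ⟨(cay_adj_mul _ _ _ _).2 h1, h2, h3⟩, by simp⟩

theorem FB_compl {Γ : SimpleGraph V} {X : Set V} (h : FB Γ X) : FB Γ Xᶜ := by
  refine (h.image Prod.swap).subset ?_
  rintro ⟨a, b⟩ ⟨h1, h2, h3⟩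
  exact ⟨(b, a), ⟨h1.symm, by simpa using h3, h2⟩, rfl⟩

theorem FB_diff {Γ : SimpleGraph V} {X Y : Set V} (h : FB Γ X) (h' : FB Γ Y) : FB Γ (X \ Y) := by
  refine (h.union (FB_compl h')).subset ?_
  rintro ⟨a, b⟩ ⟨h1, h2, h3⟩
  by_cases hb : b ∈ X
  · right
    refine ⟨h1, h2.2, fun h => h3 ⟨hb, h⟩⟩
  · exact Or.inl ⟨h1, h2.1, hb⟩

/-- Families of pairwise disjoint infinite sets of finite boundary. -/
def Fam (Γ : SimpleGraph V) (F : Finset (Set V)) : Prop :=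
  (∀ X ∈ F, X.Infinite ∧ FB Γ X) ∧ (∀ X ∈ F, ∀ Y ∈ F, X ≠ Y → Disjoint X Y)

theorem card_le_of_ends {Γ : SimpleGraph V} [Nonempty V] (hc : ∀ a b, Γ.Reachable a b) {m : ℕ}
    (hm : graphEndsLE Γ m) {F : Finset (Set V)} (hF : Fam Γ F) : F.card ≤ m := by
  classical
  let D : Set (V × V) := ⋃ X ∈ F, {p : V × V | Γ.Adj p.1 p.2 ∧ p.1 ∈ X ∧ p.2 ∉ X}
  have hD : D.Finite := F.finite_toSet.biUnion fun X hX => (hF.1 X hX).2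
  let A : Finset (Sym2 V) := hD.toFinset.image fun p => s(p.1, p.2)
  let v0 : V := Classical.arbitrary V
  let E : Set V := insert v0 {x | ∃ e ∈ A, x ∈ e}
  have hE : E.Finite := by
    refine Set.Finite.insert _ ?_
    have : {x | ∃ e ∈ A, x ∈ e} = ⋃ e ∈ (A : Set (Sym2 V)), {x | x ∈ e} := by
      ext; simp
    rw [this]
    refine A.finite_toSet.biUnion fun e _ => ?_
    induction e using Sym2.ind with
    | _ a b =>
      refine (Set.toFinite {a, b}).subset ?_
      intro x hx
      simpa using hx
  let Γ' := Γ.deleteEdges (A : Set (Sym2 V))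
  have hmeet : ∀ v, ∃ e ∈ E, Γ'.Reachable e v := by
    intro v
    by_contra hcon
    push Not at hcon
    obtain ⟨p⟩ := hc v v0
    obtain ⟨d, -, h1, h2⟩ := p.exists_boundary_dart {x | Γ'.Reachable x v}
      (SimpleGraph.Reachable.refl _) (hcon _ (Set.mem_insert _ _))
    have hdA : s(d.fst, d.snd) ∉ A := by
      intro h
      exact hcon d.fst (Set.mem_insert_of_mem _ ⟨_, h, by simp⟩) h1
    have : Γ'.Adj d.snd d.fst := by
      rw [SimpleGraph.deleteEdges_adj]
      exact ⟨d.adj.symm, by rw [Sym2.eq_swap]; exact_mod_cast hdA⟩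
    exact h2 (this.reachable.trans h1)
  have hcl : ∀ X ∈ F, ∀ a b, a ∈ X → Γ'.Reachable a b → b ∈ X := by
    intro X hX a b ha ⟨p⟩
    by_contra hb
    obtain ⟨d, -, h1, h2⟩ := p.exists_boundary_dart X ha hb
    have := (SimpleGraph.deleteEdges_adj.1 d.adj)
    apply this.2
    have : (d.fst, d.snd) ∈ D := Set.mem_biUnion (x := X) hX ⟨this.1, h1, h2⟩
    exact Finset.mem_coe.2 (Finset.mem_image.2 ⟨_, hD.mem_toFinset.2 this, rfl⟩)
  have hex : ∀ X ∈ F, ∃ e ∈ X, (Γ'.connectedComponentMk e).supp.Infinite := by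
    intro X hX
    by_contra hcon
    push Not at hcon
    refine (hF.1 X hX).1 (((hE.inter_of_left X).biUnion
      (t := fun e => (Γ'.connectedComponentMk e).supp) fun e he => ?_).subset ?_)
    · exact hcon e he.2
    · intro x hx
      obtain ⟨e, he, hex⟩ := hmeet x
      refine Set.mem_biUnion (x := e) ⟨he, hcl X hX _ _ hx hex.symm⟩ ?_
      rw [SimpleGraph.ConnectedComponent.mem_supp_iff, SimpleGraph.ConnectedComponent.eq]
      exact hex.symm
  choose! r hr1 hr2 using hex
  have hinj : Set.InjOn (fun X => Γ'.connectedComponentMk (r X)) (F : Set (Set V)) := by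
    intro X hX Y hY hXY
    by_contra hne
    have h := SimpleGraph.ConnectedComponent.eq.1 hXY
    exact Set.disjoint_left.1 (hF.2 X hX Y hY hne) (hcl X hX _ _ (hr1 X hX) h) (hr1 Y hY)
  have h1 := hm A
  have h2 : (F : Set (Set V)).encard ≤
      {c : Γ'.ConnectedComponent | c.supp.Infinite}.encard := by
    rw [← hinj.encard_image]
    apply Set.encard_le_encard
    rintro _ ⟨X, hX, rfl⟩
    exact hr2 X hX
  have h3 := h2.trans h1
  rw [Set.encard_coe_eq_coe_finsetCard] at h3
  exact_mod_cast h3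

theorem exists_finite_conn {Γ : SimpleGraph V} (hc : ∀ a b, Γ.Reachable a b) (v : V) {E : Set V}
    (hE : E.Finite) : ∃ K : Set V, K.Finite ∧ Conn Γ K ∧ v ∈ K ∧ E ⊆ K := by
  classical
  have hw : ∀ x, ∃ _ : Γ.Walk v x, True := fun x => by
    obtain ⟨p⟩ := hc v x
    exact ⟨p, trivial⟩
  choose w _ using hw
  refine ⟨insert v (⋃ x ∈ E, {y | y ∈ (w x).support}), ?_, ?_, Set.mem_insert _ _, ?_⟩
  · exact (hE.biUnion fun x _ => (w x).support.finite_toSet).insert _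
  · set K := insert v (⋃ x ∈ E, {y | y ∈ (w x).support}) with hK
    have key : ∀ y ∈ K, Reach Γ K v y := by
      rintro y (rfl | hy)
      · exact Reach.refl (Set.mem_insert _ _)
      · obtain ⟨x, hx, hy⟩ := Set.mem_iUnion₂.1 hy
        refine ⟨(w x).takeUntil y hy, fun z hz => Set.mem_insert_of_mem _ ?_⟩
        exact Set.mem_biUnion hx ((w x).support_takeUntil_subset_support hy hz)
    exact fun a ha b hb => (key a ha).symm.trans (key b hb)
  · intro x hx
    exact Set.mem_insert_of_mem _ (Set.mem_biUnion hx (w x).end_mem_support)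

theorem doubling [Infinite G] {S : Set G} (hS : Subgroup.closure S = ⊤) {F : Finset (Set G)}
    (hF : Fam (cayleyGraph S) F) :
    ∃ F', Fam (cayleyGraph S) F' ∧ 2 * F.card ≤ F'.card + 2 := by
  classical
  have hc := cay_conn hS
  set Γ := cayleyGraph S with hΓ
  let D : Set (G × G) := ⋃ X ∈ F, {p : G × G | Γ.Adj p.1 p.2 ∧ p.1 ∈ X ∧ p.2 ∉ X}
  have hD : D.Finite := F.finite_toSet.biUnion fun X hX => (hF.1 X hX).2
  obtain ⟨K, hKf, hKc, h1K, hDK⟩ := exists_finite_conn hc 1 (hD.image Prod.fst)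
  have hb : ∀ X ∈ F, ∀ a b, Γ.Adj a b → a ∈ X → b ∉ X → a ∈ K := fun X hX a b h1 h2 h3 =>
    hDK ⟨(a, b), Set.mem_biUnion (x := X) hX ⟨h1, h2, h3⟩, rfl⟩
  obtain ⟨g, hg⟩ := (hKf.mul hKf.inv).exists_notMem
  have hg1 : ∀ k ∈ K, g * k ∉ K := by
    intro k hk hk'
    exact hg ⟨g * k, hk', k⁻¹, by simpa using hk, by simp⟩
  have hg2 : ∀ k ∈ K, g⁻¹ * k ∉ K := by
    intro k hk hk'
    exact hg1 _ hk' (by simpa using hk)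
  have uniq : ∀ h : G, (∀ k ∈ K, h * k ∉ K) →
      F.card ≤ (F.filter fun X => ∀ k ∈ K, h * k ∉ X).card + 1 := by
    intro h hh
    have hsub : ∀ X ∈ F, ∀ k ∈ K, h * k ∈ X → ∀ l ∈ K, h * l ∈ X := by
      intro X hX k hk hkX l hl
      by_contra hlX
      obtain ⟨c, d, hcd, hcK, hdK, hcX, hdX⟩ := (hKc k hk l hl).exists_cross
        {z | h * z ∈ X} hkX hlX
      exact hh c hcK (hb X hX _ _ ((cay_adj_mul S h c d).2 hcd) hcX hdX)
    rw [← Finset.card_filter_add_card_filter_not (s := F) (fun X => ∀ k ∈ K, h * k ∉ X)]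
    gcongr
    rw [Finset.card_le_one]
    intro X hX Y hY
    rw [Finset.mem_filter] at hX hY
    obtain ⟨hX, hX'⟩ := hX
    obtain ⟨hY, hY'⟩ := hY
    push Not at hX' hY'
    obtain ⟨k, hk, hkX⟩ := hX'
    obtain ⟨l, hl, hlY⟩ := hY'
    by_contra hne
    exact Set.disjoint_left.1 (hF.2 X hX Y hY hne) (hsub X hX k hk hkX 1 h1K)
      (hsub Y hY l hl hlY 1 h1K)
  set F1 := F.filter fun X => ∀ k ∈ K, g * k ∉ X with hF1
  set F0 := F.filter fun X => ∀ k ∈ K, g⁻¹ * k ∉ X with hF0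
  set F2 := F0.image fun X => g • X with hF2
  have c1 := uniq g hg1
  have c2 := uniq g⁻¹ hg2
  have c3 : F2.card = F0.card :=
    Finset.card_image_of_injective _ (MulAction.injective g)
  have cross : ∀ X ∈ F1, ∀ Y ∈ F2, Disjoint X Y := by
    intro X hX Y hY
    obtain ⟨Z, hZ, rfl⟩ := Finset.mem_image.1 hY
    rw [hF1, Finset.mem_filter] at hX
    rw [hF0, Finset.mem_filter] at hZ
    rw [Set.disjoint_left]
    intro x hxX hxZ
    simp only [Set.mem_smul_set_iff_inv_smul_mem, smul_eq_mul] at hxZ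
    obtain ⟨p⟩ := hc x 1
    obtain ⟨d, -, ⟨h1, h2⟩, h3⟩ := p.exists_boundary_dart {y | y ∈ X ∧ g⁻¹ * y ∈ Z} ⟨hxX, hxZ⟩
      (fun h => hZ.2 1 h1K h.2)
    by_cases hs : d.snd ∈ X
    · have hs' : g⁻¹ * d.snd ∉ Z := fun h => h3 ⟨hs, h⟩
      have := hb Z hZ.1 _ _ ((cay_adj_mul S g⁻¹ _ _).2 d.adj) h2 hs'
      exact hX.2 _ this (by simpa using h1)
    · have := hb X hX.1 _ _ d.adj h1 hs
      exact hZ.2 _ this h2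
  have inf1 : ∀ X ∈ F1, X.Infinite ∧ FB Γ X := fun X hX => hF.1 X (Finset.mem_filter.1 hX).1
  have inf2 : ∀ X ∈ F2, X.Infinite ∧ FB Γ X := by
    intro Y hY
    obtain ⟨Z, hZ, rfl⟩ := Finset.mem_image.1 hY
    have := hF.1 Z (Finset.mem_filter.1 hZ).1
    exact ⟨this.1.smul_set, FB_translate this.2 g⟩
  refine ⟨F1 ∪ F2, ⟨?_, ?_⟩, ?_⟩
  · intro X hX
    rcases Finset.mem_union.1 hX with hX | hX
    · exact inf1 X hX
    · exact inf2 X hX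
  · intro X hX Y hY hne
    rcases Finset.mem_union.1 hX with hX | hX <;> rcases Finset.mem_union.1 hY with hY | hY
    · exact hF.2 X (Finset.mem_filter.1 hX).1 Y (Finset.mem_filter.1 hY).1 hne
    · exact cross X hX Y hY
    · exact (cross Y hY X hX).symm
    · obtain ⟨Z, hZ, rfl⟩ := Finset.mem_image.1 hX
      obtain ⟨Z', hZ', rfl⟩ := Finset.mem_image.1 hY
      rw [Set.disjoint_left]
      intro x hx hx'
      simp only [Set.mem_smul_set_iff_inv_smul_mem] at hx hx'
      refine Set.disjoint_left.1 (hF.2 Z (Finset.mem_filter.1 hZ).1 Z' (Finset.mem_filter.1 hZ').1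
        ?_) hx hx'
      rintro rfl
      exact hne rfl
  · rw [Finset.card_union_of_disjoint]
    · rw [← hF1] at c1
      rw [← hF0] at c2
      omega
    · rw [Finset.disjoint_left]
      intro X hX hX'
      have := cross X hX X hX'
      rw [disjoint_self] at this
      obtain ⟨x, hx⟩ := (inf1 X hX).1.nonempty
      rw [this] at hx
      exact hx

theorem exists_max_fam {Γ : SimpleGraph V} {m : ℕ} (hm : ∀ F, Fam Γ F → F.card ≤ m) :
    ∃ F, Fam Γ F ∧ ∀ F', Fam Γ F' → F'.card ≤ F.card := by
  have hne : {k | ∃ F, Fam Γ F ∧ F.card = k}.Nonempty := ⟨0, ∅, by simp [Fam], by simp⟩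
  have hbd : BddAbove {k | ∃ F, Fam Γ F ∧ F.card = k} := by
    refine ⟨m, ?_⟩
    rintro _ ⟨F, hF, rfl⟩
    exact hm F hF
  obtain ⟨F, hF, hk⟩ := Nat.sSup_mem hne hbd
  refine ⟨F, hF, fun F' hF' => ?_⟩
  rw [hk]
  exact le_csSup hbd ⟨F', hF', rfl⟩

theorem ray_group {S : Set G} (hf : S.Finite) (hS : Subgroup.closure S = ⊤)
    {W : Set G} (hW : W.Infinite) (hFB : FB (cayleyGraph S) W)
    (oe : ∀ Z ⊆ W, FB (cayleyGraph S) Z → Z.Finite ∨ (W \ Z).Finite) :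
    ∃ (f : ℕ → G) (T : Set G), T.Finite ∧ Function.Injective f ∧ Set.range f = W ∧
      ∀ n, (f n)⁻¹ * f (n + 1) ∈ T := by
  have := countable_of_fin hf hS
  obtain ⟨f, K, hK, h1, h2, h3⟩ := exists_ray_region (cay_lf hf) (cay_conn hS) hW hFB oe
  let T : Set G := insert 1 (S ∪ S⁻¹) ∪ K⁻¹ * K
  have hT : T.Finite := ((hf.union hf.inv).insert _).union (hK.inv.mul hK)
  refine ⟨f, T * T * T, (hT.mul hT).mul hT, h1, h2, fun n => ?_⟩
  have hl : ∀ a b, Link (cayleyGraph S) K a b → a⁻¹ * b ∈ T := by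
    rintro a b (rfl | h | ⟨ha, hb⟩)
    · left
      simp
    · exact Or.inl (Or.inr ((cay_adj S a b).1 h).2)
    · exact Or.inr ⟨a⁻¹, by simpa using ha, b, hb, rfl⟩
  obtain ⟨b, c, hb, hbc, hc⟩ := h3 n
  exact ⟨_, ⟨_, hl _ _ hb, _, hl _ _ hbc, rfl⟩, _, hl _ _ hc, by simp [mul_assoc]⟩

theorem exists_line [Infinite G] {S : Set G} (hf : S.Finite) (hS : Subgroup.closure S = ⊤) {m : ℕ}
    (hm : graphEndsLE (cayleyGraph S) m) :
    ∃ (f : ℤ → G) (T : Set G), T.Finite ∧ Function.Bijective f ∧ ∀ n, (f n)⁻¹ * f (n + 1) ∈ T := by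
  classical
  obtain ⟨F, hF, hmax⟩ := exists_max_fam fun F hF => card_le_of_ends (cay_conn hS) hm hF
  obtain ⟨F', hF', hcard⟩ := doubling hS hF
  have hF2 : F.card ≤ 2 := by
    have := hmax F' hF'
    omega
  by_cases hX : ∃ X : Set G, X.Infinite ∧ Xᶜ.Infinite ∧ FB (cayleyGraph S) X
  · have key : ∀ X : Set G, X.Infinite → Xᶜ.Infinite → FB (cayleyGraph S) X →
        ∀ Z ⊆ X, FB (cayleyGraph S) Z → Z.Finite ∨ (X \ Z).Finite := by
      intro X h1 h2 h3 Z hZ hZF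
      by_contra hcon
      push Not at hcon
      obtain ⟨hi1, hi2⟩ := hcon
      have d1 : Disjoint Z (X \ Z) := Set.disjoint_sdiff_right
      have d2 : Disjoint Z Xᶜ := Set.disjoint_compl_right_iff_subset.2 hZ
      have d3 : Disjoint (X \ Z) Xᶜ := Set.disjoint_compl_right_iff_subset.2 Set.sdiff_subset
      have hne : ∀ A B : Set G, A.Infinite → Disjoint A B → A ≠ B := by
        rintro A _ hA hd rfl
        rw [disjoint_self] at hd
        obtain ⟨x, hx⟩ := hA.nonempty
        rw [hd] at hx
        exact hx
      have hfam : Fam (cayleyGraph S) {Z, X \ Z, Xᶜ} := by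
        refine ⟨?_, ?_⟩
        · intro A hA
          simp only [Finset.mem_insert, Finset.mem_singleton] at hA
          rcases hA with rfl | rfl | rfl
          · exact ⟨hi1, hZF⟩
          · exact ⟨hi2, FB_diff h3 hZF⟩
          · exact ⟨h2, FB_compl h3⟩
        · intro A hA B hB hAB
          simp only [Finset.mem_insert, Finset.mem_singleton] at hA hB
          rcases hA with rfl | rfl | rfl <;> rcases hB with rfl | rfl | rfl <;>
            first
            | exact absurd rfl hAB
            | assumption
            | (apply Disjoint.symm; assumption)
      have := hmax _ hfam
      rw [Finset.card_eq_three.2 ⟨_, _, _, hne _ _ hi1 d1, hne _ _ hi1 d2, hne _ _ hi2 d3, rfl⟩]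
        at this
      omega
    obtain ⟨X, h1, h2, h3⟩ := hX
    obtain ⟨f1, T1, hT1, i1, r1, s1⟩ := ray_group hf hS h1 h3 (key X h1 h2 h3)
    obtain ⟨f2, T2, hT2, i2, r2, s2⟩ := ray_group hf hS h2 (FB_compl h3)
      (key Xᶜ h2 (by simpa using h1) (FB_compl h3))
    have m1 : ∀ n, f1 n ∈ X := fun n => r1 ▸ Set.mem_range_self n
    have m2 : ∀ n, f2 n ∈ Xᶜ := fun n => r2 ▸ Set.mem_range_self n
    let f : ℤ → G := fun n => match n with
      | Int.ofNat n => f1 n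
      | Int.negSucc n => f2 n
    refine ⟨f, insert ((f2 0)⁻¹ * f1 0) (T1 ∪ T2⁻¹), (hT1.union hT2.inv).insert _, ⟨?_, ?_⟩, ?_⟩
    · rintro (a | a) (b | b) hab
      · exact congrArg Int.ofNat (i1 hab)
      · exact absurd (m1 a) (by
          have : f1 a = f2 b := hab
          rw [this]
          exact m2 b)
      · exact absurd (m1 b) (by
          have : f2 a = f1 b := hab
          rw [← this]
          exact m2 a)
      · exact congrArg Int.negSucc (i2 hab)
    · intro y
      by_cases hy : y ∈ X
      · rw [← r1] at hy
        obtain ⟨n, rfl⟩ := hy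
        exact ⟨Int.ofNat n, rfl⟩
      · have hy : y ∈ Xᶜ := hy
        rw [← r2] at hy
        obtain ⟨n, rfl⟩ := hy
        exact ⟨Int.negSucc n, rfl⟩
    · rintro (n | n)
      · exact Or.inr (Or.inl (s1 n))
      · cases n with
        | zero => exact Or.inl rfl
        | succ n =>
          refine Or.inr (Or.inr ?_)
          have : Int.negSucc (n + 1) + 1 = Int.negSucc n := by
            rw [Int.negSucc_eq, Int.negSucc_eq]
            push_cast
            ring
          rw [this, Set.mem_inv, mul_inv_rev, inv_inv]
          exact s2 n
  · push Not at hX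
    obtain ⟨f, T, hT, i, r, s⟩ := ray_group hf hS (W := Set.univ) Set.infinite_univ
      (by simp [FB]) (fun Z _ hZ => by
        by_contra hcon
        push Not at hcon
        exact hX Z hcon.1 (by simpa [Set.compl_eq_univ_sdiff] using hcon.2) hZ)
    have s' : ∀ n, (f n)⁻¹ * f (n + 2) ∈ T * T := fun n =>
      ⟨_, s n, _, s (n + 1), by simp [mul_assoc]⟩
    refine ⟨fun n => f (Equiv.intEquivNat n), T⁻¹ ∪ (T * T ∪ (T * T)⁻¹),
      hT.inv.union ((hT.mul hT).union (hT.mul hT).inv), ?_, ?_⟩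
    · exact Function.Bijective.comp ⟨i, Set.range_eq_univ.1 r⟩ (Equiv.bijective _)
    · have e1 : ∀ n : ℕ, Equiv.intEquivNat (Int.ofNat n) = 2 * n := fun n => rfl
      have e2 : ∀ n : ℕ, Equiv.intEquivNat (Int.negSucc n) = 2 * n + 1 := fun n => rfl
      rintro (n | n)
      · have : Int.ofNat n + 1 = Int.ofNat (n + 1) := rfl
        simp only [this, e1]
        exact Or.inr (Or.inl (s' (2 * n)))
      · cases n with
        | zero =>
          refine Or.inl ?_
          have : Int.negSucc 0 + 1 = Int.ofNat 0 := rfl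
          simp only [this, e1, e2]
          rw [Set.mem_inv, mul_inv_rev, inv_inv]
          exact s 0
        | succ n =>
          refine Or.inr (Or.inr ?_)
          have : Int.negSucc (n + 1) + 1 = Int.negSucc n := by
            rw [Int.negSucc_eq, Int.negSucc_eq]
            push_cast
            ring
          simp only [this, e2]
          rw [Set.mem_inv, mul_inv_rev, inv_inv]
          exact s' (2 * n + 1)

theorem forward [Infinite G] {S : Set G} (hf : S.Finite) (hS : Subgroup.closure S = ⊤) {m : ℕ}
    (hm : graphEndsLE (cayleyGraph S) m) :
    ∃ a : RightAction (Multiplicative ℤ) G, a.IsTransitive ∧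
      ∀ S : Set G, IsFinGenSet S → a.IsTranslationLike (wordMetric S) := by
  obtain ⟨f, T, hT, hbij, hs⟩ := exists_line hf hS hm
  let e : ℤ ≃ G := Equiv.ofBijective f hbij
  have he : ∀ n, (e n)⁻¹ * e (n + 1) ∈ T := hs
  have hfin : ∀ n : ℤ, ∃ F : Set G, F.Finite ∧ ∀ k, (e k)⁻¹ * e (k + n) ∈ F := by
    intro n
    induction n using Int.induction_on with
    | zero => exact ⟨{1}, Set.finite_singleton _, by simp⟩
    | succ n ih =>
      obtain ⟨F, hF, h⟩ := ih
      refine ⟨F * T, hF.mul hT, fun k => ⟨_, h k, _, he (k + n), ?_⟩⟩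
      simp [mul_assoc, add_assoc]
    | pred n ih =>
      obtain ⟨F, hF, h⟩ := ih
      refine ⟨F * T⁻¹, hF.mul hT.inv, fun k => ⟨_, h k, ((e (k + (-n - 1)))⁻¹ * e (k + -n))⁻¹,
        ?_, ?_⟩⟩
      · rw [Set.inv_mem_inv]
        have := he (k + (-n - 1))
        rwa [show k + (-(n : ℤ) - 1) + 1 = k + -n by ring] at this
      · simp [mul_assoc]
  refine ⟨⟨fun x n => e (e.symm x + n.toAdd), by simp, by simp [add_assoc]⟩, ?_, ?_⟩
  · intro x y
    exact ⟨Multiplicative.ofAdd (e.symm y - e.symm x), by simp⟩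
  · intro S' hS'
    refine ⟨?_, ?_⟩
    · intro x h hx
      have h2 : e.symm x + h.toAdd = e.symm x := by
        rw [Equiv.eq_symm_apply]
        exact hx
      have h3 : h.toAdd = 0 := by simpa using h2
      exact h3
    · intro h
      obtain ⟨F, hF, hk⟩ := hfin h.toAdd
      obtain ⟨C, hC⟩ := (hF.image (fun t => (sInf {n : ℕ | t ∈ (S' ∪ S'⁻¹) ^ n} : ℕ))).bddAbove
      refine ⟨C, fun x => ?_⟩
      unfold wordMetric wordDist
      have := hk (e.symm x)
      rw [Equiv.apply_symm_apply] at this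
      exact_mod_cast hC ⟨_, this, rfl⟩

theorem backward {S : Set G} (hf : S.Finite) (hS : Subgroup.closure S = ⊤)
    (a : RightAction (Multiplicative ℤ) G) (ht : a.IsTransitive)
    (ha : a.IsTranslationLike (wordMetric S)) : graphEndsLE (cayleyGraph S) 2 := by
  classical
  intro A
  set Γ := cayleyGraph S with hΓ
  let f : ℤ → G := fun n => a.act 1 (Multiplicative.ofAdd n)
  have hstep : ∀ n, f (n + 1) = a.act (f n) (Multiplicative.ofAdd 1) := by
    intro n
    simp only [f]
    rw [a.act_mul, ← ofAdd_add]
  have hinj : Function.Injective f := by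
    intro n k hnk
    have : a.act (f k) (Multiplicative.ofAdd (n - k)) = f k := by
      rw [← hnk]
      simp only [f] at hnk ⊢
      rw [hnk, a.act_mul, ← ofAdd_add]
      simpa using hnk
    have := ha.1 _ _ this
    have h0 : n - k = 0 := this
    omega
  have hsurj : Function.Surjective f := by
    intro y
    obtain ⟨h, hh⟩ := ht 1 y
    exact ⟨h.toAdd, hh⟩
  obtain ⟨C, hC⟩ := ha.2 (Multiplicative.ofAdd 1)
  let T : Set G := ⋃ n ∈ Set.Iic ⌊C⌋₊, (S ∪ S⁻¹) ^ n
  have hT : T.Finite := (Set.finite_Iic _).biUnion fun n _ => finite_pow (hf.union hf.inv) n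
  have hfT : ∀ n, (f n)⁻¹ * f (n + 1) ∈ T := by
    intro n
    have h1 := hC (f n)
    rw [← hstep] at h1
    have h2 := Nat.sInf_mem (s := {k : ℕ | (f n)⁻¹ * f (n + 1) ∈ (S ∪ S⁻¹) ^ k}) (exists_pow hS _ _)
    exact Set.mem_biUnion (x := wordDist S (f n) (f (n + 1))) (Nat.le_floor h1) h2
  have hw : ∀ x, ∃ _ : Γ.Walk 1 x, True := fun x => by
    obtain ⟨p⟩ := cay_conn hS 1 x
    exact ⟨p, trivial⟩
  choose w _ using hw
  let E : Set G := {x | ∃ e ∈ A, x ∈ e}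
  have hE : E.Finite := by
    have : E = ⋃ e ∈ (A : Set (Sym2 G)), {x | x ∈ e} := by
      ext; simp [E]
    rw [this]
    refine A.finite_toSet.biUnion fun e _ => ?_
    induction e using Sym2.ind with
    | _ a b =>
      refine (Set.toFinite {a, b}).subset ?_
      intro x hx
      simpa using hx
  let Q : Set G := ⋃ t ∈ T, {y | y ∈ (w t).support}
  have hQ : Q.Finite := hT.biUnion fun t _ => (w t).support.finite_toSet
  have hbad : (f ⁻¹' (E * Q⁻¹)).Finite := (hE.mul hQ.inv).preimage hinj.injOn
  obtain ⟨N, hN⟩ : ∃ N : ℕ, ∀ n ∈ f ⁻¹' (E * Q⁻¹), n.natAbs < N := by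
    obtain ⟨N, hN⟩ := (hbad.image Int.natAbs).bddAbove
    exact ⟨N + 1, fun n hn => Nat.lt_succ_of_le (hN ⟨n, hn, rfl⟩)⟩
  set Γ' := Γ.deleteEdges (A : Set (Sym2 G)) with hΓ'
  have hadj : ∀ n : ℤ, N ≤ n.natAbs → Γ'.Reachable (f n) (f (n + 1)) := by
    intro n hn
    have hnot : f n ∉ E * Q⁻¹ := fun h => absurd (hN n h) (by omega)
    have hgen : ∀ t ∈ T, Γ'.Reachable (f n) (f n * t) := by
      intro t ht
      by_contra hcon
      obtain ⟨d, hd, h1, h2⟩ := (w t).exists_boundary_dart {y | Γ'.Reachable (f n) (f n * y)}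
        (by simp) hcon
      apply h2
      refine SimpleGraph.Reachable.trans h1 (SimpleGraph.Adj.reachable ?_)
      rw [SimpleGraph.deleteEdges_adj]
      refine ⟨(cay_adj_mul S _ _ _).2 d.adj, fun hA => hnot ?_⟩
      refine ⟨f n * d.fst, ⟨_, hA, by simp⟩, d.fst⁻¹, ?_, by simp⟩
      rw [Set.inv_mem_inv]
      exact Set.mem_biUnion ht ((w t).dart_fst_mem_support_of_mem_darts hd)
    have := hgen _ (hfT n)
    rwa [mul_inv_cancel_left] at this
  have hpos : ∀ k : ℕ, Γ'.Reachable (f N) (f (N + k)) := by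
    intro k
    induction k with
    | zero => simp
    | succ k ih =>
      refine ih.trans ?_
      have := hadj (N + k) (by omega)
      rwa [add_assoc] at this
  have hneg : ∀ k : ℕ, Γ'.Reachable (f (-N)) (f (-N - k)) := by
    intro k
    induction k with
    | zero => simp
    | succ k ih =>
      refine ih.trans ?_
      have := hadj (-N - (k + 1 : ℕ)) (by omega)
      rw [show -(N : ℤ) - (k + 1 : ℕ) + 1 = -N - k by push_cast; ring] at this
      exact this.symm
  refine le_trans (Set.encard_le_encard (t := {Γ'.connectedComponentMk (f N),
    Γ'.connectedComponentMk (f (-N))}) ?_) ((Set.encard_insert_le _ _).trans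
    (by rw [Set.encard_singleton]; norm_num))
  intro c hc
  have hc : c.supp.Infinite := hc
  obtain ⟨x, hx, hxN⟩ : ∃ x ∈ c.supp, x ∉ f '' (Set.Icc (-(N : ℤ)) N) :=
    hc.exists_notMem_finite ((Set.finite_Icc _ _).image _)
  obtain ⟨n, rfl⟩ := hsurj x
  have hn : ¬ (-(N : ℤ) ≤ n ∧ n ≤ N) := fun h => hxN ⟨n, h, rfl⟩
  rw [SimpleGraph.ConnectedComponent.mem_supp_iff] at hx
  rw [← hx]
  by_cases h : 0 ≤ n
  · left
    rw [SimpleGraph.ConnectedComponent.eq]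
    have := hpos (n - N).toNat
    rw [show (N : ℤ) + (n - N).toNat = n by omega] at this
    exact this.symm
  · right
    rw [Set.mem_singleton_iff, SimpleGraph.ConnectedComponent.eq]
    have := hneg (-N - n).toNat
    rw [show -(N : ℤ) - (-N - n).toNat = n by omega] at this
    exact this.symm

end Group

end EndsZ

/-- A finitely generated infinite group has finitely many ends if and only if it admits a
transitive translation-like action by `ℤ`. -/
theorem finitely_many_ends_iff_transitive_translation_like_Z
    (G : Type*) [Group G] [Group.FG G] [Infinite G] :
    (∃ m : ℕ, ∀ S : Set G, IsFinGenSet S → graphEndsLE (cayleyGraph S) m) ↔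
    (∃ a : RightAction (Multiplicative ℤ) G, a.IsTransitive ∧
      ∀ S : Set G, IsFinGenSet S → a.IsTranslationLike (wordMetric S)) := by
  constructor
  · rintro ⟨m, hm⟩
    obtain ⟨S, hS⟩ := Group.fg_def.1 (inferInstance : Group.FG G)
    exact EndsZ.forward S.finite_toSet hS (hm S ⟨S.finite_toSet, hS⟩)
  · rintro ⟨a, ht, ha⟩
    exact ⟨2, fun S hS => EndsZ.backward hS.1 hS.2 a ht (ha S hS)⟩
end

section
/- A finitely generated group G has finitely many ends if and only if G has a Cayley graph (with respect to some finite generating set) admitting a Hamiltonian path, i.e. a path that visits every vertex exactly once (a bi-infinite such path when G is infinite, a finite one when G is finite). -/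
open scoped Pointwise

/-- A Hamiltonian path in a graph: a path indexed by a subinterval of `ℤ` (consecutive
entries adjacent) visiting every vertex exactly once. -/
def HasHamiltonianPath {V : Type*} (Γ : SimpleGraph V) : Prop :=
  ∃ (I : Set ℤ) (P : I → V), I.OrdConnected ∧ Function.Bijective P ∧
    ∀ (k : ℤ) (h₁ : k ∈ I) (h₂ : k + 1 ∈ I), Γ.Adj (P ⟨k, h₁⟩) (P ⟨k + 1, h₂⟩)

namespace CH

variable {V : Type*} (X : SimpleGraph V)

def Near (k : ℕ) (a b : V) : Prop := ∃ p : X.Walk a b, p.length ≤ k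

variable {X}

theorem Near.mono {k l : ℕ} {a b : V} (h : Near X k a b) (hkl : k ≤ l) : Near X l a b := by
  obtain ⟨p, hp⟩ := h
  exact ⟨p, hp.trans hkl⟩

theorem Near.cons {k : ℕ} {a b c : V} (h : X.Adj a b) (h' : Near X k b c) :
    Near X (k + 1) a c := by
  obtain ⟨p, hp⟩ := h'
  exact ⟨.cons h p, by simpa using hp⟩

theorem Near.snoc {k : ℕ} {a b c : V} (h' : Near X k a b) (h : X.Adj b c) :
    Near X (k + 1) a c := by
  obtain ⟨p, hp⟩ := h'
  exact ⟨p.concat h, by simpa using hp⟩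

theorem Near.of_adj {a b : V} (h : X.Adj a b) : Near X 1 a b := ⟨.cons h .nil, by simp⟩

variable (X)

/-- permitted gap between coloured consecutive vertices -/
def Gap (a b : V × Bool) : Prop := Near X (1 + a.2.toNat + (!b.2).toNat) a.1 b.1

/-- no cut of `Q` is free of edges -/
def Conn (Q : Set V) : Prop :=
  ∀ A : Set V, (∃ x ∈ Q, x ∈ A) → (∃ y ∈ Q, y ∉ A) → ∃ x ∈ Q, ∃ y ∈ Q, x ∈ A ∧ y ∉ A ∧ X.Adj x y

variable {X}

theorem gap_insert_after {y x : V} (h : X.Adj y x) (z : V × Bool) (hz : Gap X (y, false) z) :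
    Gap X (y, false) (x, true) ∧ Gap X (x, true) z := by
  refine ⟨(Near.of_adj h).mono (by simp), ?_⟩
  exact (Near.cons h.symm hz).mono (by simp)

theorem gap_insert_before {y x : V} (h : X.Adj y x) (z : V × Bool) (hz : Gap X z (y, true)) :
    Gap X (x, false) (y, true) ∧ Gap X z (x, false) := by
  refine ⟨(Near.of_adj h.symm).mono (by simp), ?_⟩
  exact (Near.snoc hz h).mono (by simp)

theorem exists_path {Q : Set V} (hQ : Conn X Q) {u v : V} (hu : u ∈ Q) (hv : v ∈ Q) :
    ∃ l : List V, (l ++ [v]).Nodup ∧ (∀ x ∈ l ++ [v], x ∈ Q) ∧ (l ++ [v]).IsChain X.Adj ∧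
      (l ++ [v]).head? = some u := by
  by_contra hcon
  obtain ⟨x, hx, y, hy, ⟨l, h1, h2, h3, h4⟩, hyA, hxy⟩ := hQ {v | ∃ l : List V, (l ++ [v]).Nodup ∧
    (∀ x ∈ l ++ [v], x ∈ Q) ∧ (l ++ [v]).IsChain X.Adj ∧ (l ++ [v]).head? = some u}
    ⟨u, hu, [], by simp [hu]⟩ ⟨v, hv, hcon⟩
  apply hyA
  by_cases hyl : y ∈ l ++ [x]
  · obtain ⟨l1, l2, hl⟩ := List.append_of_mem hyl
    rw [hl] at h1 h2 h3 h4
    rw [List.append_cons] at h1 h2 h3 h4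
    refine ⟨l1, (List.nodup_append.1 h1).1, fun z hz => h2 z (by simp at hz ⊢; tauto),
      (List.isChain_append.1 h3).1, ?_⟩
    cases l1 <;> simp_all
  · refine ⟨l ++ [x], ?_, ?_, ?_, ?_⟩
    · rw [List.nodup_append]
      refine ⟨h1, by simp, ?_⟩
      grind
    · grind
    · rw [List.isChain_append]
      refine ⟨h3, by simp, by simp [hxy]⟩
    · cases l <;> simp_all

/-- Sekanina-type insertion: extend a path through a finite set. -/
theorem exists_list {Q : Set V} (hfin : Q.Finite) (hQ : Conn X Q) {u v u' : V} (hu : u ∈ Q)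
    (hv : v ∈ Q) (hvu : X.Adj v u') :
    ∃ l : List V, (u :: l).Nodup ∧ (∀ x, x ∈ u :: l ↔ x ∈ Q) ∧
      (u :: l ++ [u']).IsChain (Near X 3) := by
  classical
  have key : ∀ n : ℕ, ∃ l : List (V × Bool), (((u, false) :: l).map Prod.fst).Nodup ∧
      (∀ x ∈ ((u, false) :: l).map Prod.fst, x ∈ Q) ∧
      ((u, false) :: l ++ [(u', false)]).IsChain (Gap X) ∧
      (n ≤ l.length ∨ ∀ x ∈ Q, x ∈ ((u, false) :: l).map Prod.fst) := by
    intro n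
    induction n with
    | zero =>
      obtain ⟨l, h1, h2, h3, h4⟩ := exists_path hQ hu hv
      obtain ⟨l', hl'⟩ : ∃ l', l ++ [v] = u :: l' := by
        cases l <;> simp_all
      have h5 : (l ++ [v] ++ [u']).IsChain X.Adj := by
        rw [List.isChain_append]
        exact ⟨h3, by simp, by simp [hvu]⟩
      rw [hl'] at h1 h2 h5
      refine ⟨l'.map (fun x => (x, false)), ?_, ?_, ?_, Or.inl (by simp)⟩
      · simpa [Function.comp_def] using h1
      · simpa [Function.comp_def] using h2
      · have : ((u, false) :: l'.map (fun x => (x, false)) ++ [(u', false)])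
          = (u :: l' ++ [u']).map (fun x => (x, false)) := by simp
        rw [this, List.isChain_map]
        exact h5.imp fun a b hab => (Near.of_adj hab).mono (by simp)
    | succ n ih =>
      obtain ⟨l, h1, h2, h3, h4⟩ := ih
      by_cases hall : ∀ x ∈ Q, x ∈ ((u, false) :: l).map Prod.fst
      · exact ⟨l, h1, h2, h3, Or.inr hall⟩
      have hn : n ≤ l.length := h4.resolve_right hall
      push Not at hall
      obtain ⟨y, hy, x, hx, hyl, hxl, hyx⟩ := hQ {z | z ∈ ((u, false) :: l).map Prod.fst}
        ⟨u, hu, by simp⟩ hall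
      simp only [Set.mem_ofPred_eq] at hyl hxl
      obtain ⟨⟨y', c⟩, hyc, rfl⟩ := List.mem_map.1 hyl
      simp only at hyx hy
      obtain ⟨l1, l2, hl⟩ := List.append_of_mem hyc
      clear hyl hyc
      cases c with
      | false =>
        obtain ⟨l', hl'⟩ : ∃ l', l1 ++ (y', false) :: (x, true) :: l2 = (u, false) :: l' := by
          rcases l1 with _ | ⟨a, l1⟩
          · rw [List.nil_append, List.cons.injEq] at hl
            exact ⟨_, by rw [List.nil_append, ← hl.1]⟩
          · rw [List.cons_append, List.cons.injEq] at hl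
            exact ⟨_, by rw [List.cons_append, ← hl.1]⟩
        have hlen : l'.length = l.length + 1 := by
          have a := congrArg List.length hl
          have b := congrArg List.length hl'
          simp at a b
          omega
        refine ⟨l', ?_, ?_, ?_, Or.inl (by omega)⟩
        · rw [← hl']
          rw [hl] at h1 hxl
          clear * - h1 hxl
          simp [List.nodup_append] at h1 hxl ⊢
          grind
        · rw [← hl']
          rw [hl] at h2
          clear * - h2 hx
          simp at h2 ⊢
          grind
        · rw [← hl']
          rw [hl] at h3
          obtain ⟨z, l3, hz⟩ : ∃ z l3, l2 ++ [(u', false)] = z :: l3 := by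
            cases l2 <;> simp
          have e1 : l1 ++ (y', false) :: l2 ++ [(u', false)] = l1 ++ (y', false) :: z :: l3 := by
            simp [hz]
          have e2 : l1 ++ (y', false) :: (x, true) :: l2 ++ [(u', false)]
            = l1 ++ (y', false) :: (x, true) :: z :: l3 := by
            simp [hz]
          rw [e1] at h3
          rw [e2]
          simp only [List.isChain_append, List.isChain_cons_cons] at h3 ⊢
          have := gap_insert_after hyx z h3.2.1.1
          exact ⟨h3.1, ⟨this.1, this.2, h3.2.1.2⟩, h3.2.2⟩
      | true =>
        obtain ⟨l', hl'⟩ : ∃ l', l1 ++ (x, false) :: (y', true) :: l2 = (u, false) :: l' := by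
          rcases l1 with _ | ⟨a, l1⟩
          · simp at hl
          · rw [List.cons_append, List.cons.injEq] at hl
            exact ⟨_, by rw [List.cons_append, ← hl.1]⟩
        have hlen : l'.length = l.length + 1 := by
          have a := congrArg List.length hl
          have b := congrArg List.length hl'
          simp at a b
          omega
        refine ⟨l', ?_, ?_, ?_, Or.inl (by omega)⟩
        · rw [← hl']
          rw [hl] at h1 hxl
          clear * - h1 hxl
          simp [List.nodup_append] at h1 hxl ⊢
          grind
        · rw [← hl']
          rw [hl] at h2
          clear * - h2 hx
          simp at h2 ⊢
          grind
        · rw [← hl']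
          rw [hl] at h3
          obtain ⟨l3, z, hz⟩ : ∃ l3 z, l1 = l3 ++ [z] := by
            rcases List.eq_nil_or_concat l1 with h | h
            · rw [h] at hl
              simp at hl
            · simpa using h
          subst hz
          simp only [List.append_assoc, List.cons_append, List.nil_append, 
            List.isChain_append, List.isChain_cons_cons] at h3 ⊢
          have := gap_insert_before hyx z h3.2.1.1
          exact ⟨h3.1, ⟨this.2, this.1, h3.2.1.2⟩, h3.2.2⟩
  obtain ⟨l, h1, h2, h3, h4⟩ := key hfin.toFinset.card
  have h5 : ∀ x ∈ Q, x ∈ ((u, false) :: l).map Prod.fst := by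
    refine h4.resolve_left fun h => ?_
    have a := List.toFinset_card_of_nodup h1
    have b : (((u, false) :: l).map Prod.fst).toFinset ⊆ hfin.toFinset := by
      intro x hx
      rw [List.mem_toFinset] at hx
      simpa using h2 x hx
    have := Finset.card_le_card b
    simp at a
    simp [a] at this
    omega
  refine ⟨l.map Prod.fst, by simpa using h1, fun x => ⟨fun h => h2 x (by simpa using h), 
    fun h => by simpa using h5 x h⟩, ?_⟩
  have : (u :: l.map Prod.fst ++ [u']) = ((u, false) :: l ++ [(u', false)]).map Prod.fst := by simp
  rw [this, List.isChain_map]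
  exact h3.imp fun a b hab => Near.mono hab (by 
    have := Bool.toNat_le a.2
    have := Bool.toNat_le (!b.2)
    omega)


/-- vertices reachable from `b` inside `W` -/
def Reach (X : SimpleGraph V) (W : Set V) (b : V) : Set V :=
  {y | Relation.ReflTransGen (fun a c => X.Adj a c ∧ c ∈ W) b y}

theorem mem_reach_self (W : Set V) (b : V) : b ∈ Reach X W b := Relation.ReflTransGen.refl

theorem reach_step {W : Set V} {b x y : V} (hx : x ∈ Reach X W b) (h : X.Adj x y) (hy : y ∈ W) :
    y ∈ Reach X W b := Relation.ReflTransGen.tail hx ⟨h, hy⟩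

theorem reach_subset {W : Set V} {b : V} (hb : b ∈ W) : Reach X W b ⊆ W := by
  intro y hy
  induction hy with
  | refl => exact hb
  | tail _ h _ => exact h.2

theorem reach_cross {W A : Set V} {b y : V} (hy : y ∈ Reach X W b) (hb : b ∈ A) (hyA : y ∉ A) :
    ∃ x ∈ Reach X W b, ∃ z ∈ Reach X W b, x ∈ A ∧ z ∉ A ∧ X.Adj x z := by
  induction hy with
  | refl => exact absurd hb hyA
  | @tail c d hc hcd ih =>
    by_cases h : c ∈ A
    · exact ⟨c, hc, d, reach_step hc hcd.1 hcd.2, h, hyA, hcd.1⟩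
    · exact ih h

theorem reach_conn (W : Set V) (b : V) : Conn X (Reach X W b) := by
  rintro A ⟨x, hx, hxA⟩ ⟨y, hy, hyA⟩
  by_cases hb : b ∈ A
  · exact reach_cross hy hb hyA
  · obtain ⟨x, hx, z, hz, h1, h2, h3⟩ := reach_cross (A := Aᶜ) hx hb (by simpa using hxA)
    exact ⟨z, hz, x, hx, by simpa using h2, h1, h3.symm⟩

theorem conn_insert {p : Set V} (hp : Conn X p) {x y : V} (hx : x ∈ p) (h : X.Adj x y) :
    Conn X (insert y p) := by
  rintro A ⟨a, ha, haA⟩ ⟨b, hb, hbA⟩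
  by_cases h1 : (∃ x ∈ p, x ∈ A) ∧ ∃ y ∈ p, y ∉ A
  · obtain ⟨x, hx, z, hz, h⟩ := hp A h1.1 h1.2
    exact ⟨x, Or.inr hx, z, Or.inr hz, h⟩
  · have hs := h.symm
    by_cases hxA : x ∈ A
    · have : y ∉ A := by grind
      exact ⟨x, Or.inr hx, y, Or.inl rfl, hxA, this, h⟩
    · have : y ∈ A := by grind
      exact ⟨y, Or.inl rfl, x, Or.inr hx, this, hxA, hs⟩

theorem exists_finite_conn {U : Set V} (hU : Conn X U) {u w : V} (hu : u ∈ U) (hw : w ∈ U) :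
    ∃ p ⊆ U, p.Finite ∧ Conn X p ∧ u ∈ p ∧ w ∈ p := by
  by_contra hcon
  obtain ⟨x, hx, y, hy, ⟨p, h1, h2, h3, h4, h5⟩, hyA, hxy⟩ :=
    hU {w | ∃ p ⊆ U, p.Finite ∧ Conn X p ∧ u ∈ p ∧ w ∈ p}
    ⟨u, hu, {u}, by simpa using hu, by simp, by
      rintro A ⟨a, ha, haA⟩ ⟨b, hb, hbA⟩
      simp only [Set.mem_singleton_iff] at ha hb
      subst ha hb
      exact absurd haA hbA, by simp⟩ ⟨w, hw, hcon⟩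
  exact hyA ⟨insert y p, Set.insert_subset hy h1, h2.insert y, conn_insert h3 h5 hxy, Or.inr h4, 
    Or.inl rfl⟩

/-- Construction of a connected finite piece with connected infinite complement. -/
theorem exists_piece {C : Set V} (hlf : ∀ x, {y | X.Adj x y}.Finite)
    (hbd : {x ∈ C | ∃ y, y ∉ C ∧ X.Adj x y}.Finite) (hinf : C.Infinite)
    (hone : ∀ E ⊆ C, {x ∈ E | ∃ y, y ∉ E ∧ X.Adj x y}.Finite → E.Finite ∨ (C \ E).Finite)
    {U : Set V} (hUC : U ⊆ C) (hCU : (C \ U).Finite) (hU : Conn X U) {u w : V} (hu : u ∈ U)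
    (hw : w ∈ U) :
    ∃ Q D : Set V, Q ∪ D = U ∧ Disjoint Q D ∧ Q.Finite ∧ Conn X Q ∧ Conn X D ∧ u ∈ Q ∧ w ∈ Q ∧
      ∃ v ∈ Q, ∃ u' ∈ D, X.Adj v u' := by
  obtain ⟨p, hpU, hpf, hpc, hup, hwp⟩ := exists_finite_conn hU hu hw
  set W := U \ p with hW
  have hUinf : U.Infinite := by
    intro h
    exact hinf ((h.union hCU).subset (fun x hx => by
      by_cases hxU : x ∈ U
      · exact Or.inl hxU
      · exact Or.inr ⟨hx, hxU⟩))
  have hWinf : W.Infinite := hUinf.diff hpf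
  have hN : (⋃ x ∈ p, {y | X.Adj x y}).Finite := hpf.biUnion fun x _ => hlf x
  have hcov : W ⊆ ⋃ b ∈ (⋃ x ∈ p, {y | X.Adj x y}) ∩ W, Reach X W b := by
    intro y hy
    obtain ⟨x, hx, z, hz, hxR, hzR, hxz⟩ := hU (Reach X W y) ⟨y, hy.1, mem_reach_self _ _⟩
      ⟨u, hu, fun h => (reach_subset hy h).2 hup⟩
    have hxW := reach_subset hy hxR
    have hzp : z ∈ p := by
      by_contra hzp
      exact hzR (reach_step hxR hxz ⟨hz, hzp⟩)
    simp only [Set.mem_iUnion]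
    refine ⟨x, ⟨?_, hxW⟩, ?_⟩
    · simp only [Set.mem_iUnion]
      exact ⟨z, hzp, hxz.symm⟩
    · have key : ∀ q, q ∈ Reach X W y → y ∈ Reach X W q := by
        intro q hq
        induction hq with
        | refl => exact mem_reach_self _ _
        | @tail c d hc hcd ih =>
          exact Relation.ReflTransGen.head ⟨hcd.1.symm, reach_subset hy hc⟩ ih
      exact key x hxR
  obtain ⟨b, hb, hbinf⟩ : ∃ b ∈ (⋃ x ∈ p, {y | X.Adj x y}) ∩ W, (Reach X W b).Infinite := by
    by_contra! hcon
    refine hWinf (Set.Finite.subset ((hN.inter_of_left W).biUnion fun b hb => ?_) hcov)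
    simpa [Set.not_infinite] using hcon b hb
  set D := Reach X W b with hD
  have hDW : D ⊆ W := reach_subset hb.2
  have hDU : D ⊆ U := fun x hx => (hDW hx).1
  have hCD : (C \ D).Finite := by
    refine (hone D (hDU.trans hUC) ?_).resolve_left hbinf
    refine ((hN.union hbd).union (hCU.biUnion fun x _ => hlf x)).subset ?_
    rintro x ⟨hx, y, hy, hxy⟩
    have hyW : y ∉ W := fun h => hy (reach_step hx hxy h)
    by_cases hyC : y ∈ C
    · by_cases hyU : y ∈ U
      · left; left
        simp only [Set.mem_iUnion]
        exact ⟨y, by by_contra h; exact hyW ⟨hyU, h⟩, hxy.symm⟩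
      · right
        simp only [Set.mem_iUnion]
        exact ⟨y, ⟨hyC, hyU⟩, hxy.symm⟩
    · left; right
      exact ⟨hUC (hDU hx), y, hyC, hxy⟩
  have hpD : ∀ x ∈ p, x ∉ D := fun x hx h => (hDW h).2 hx
  have hB : ∀ B ⊆ U \ D, B.Nonempty → (∀ x ∈ p, x ∉ B) →
      ∃ x ∈ B, ∃ y ∈ U \ D, y ∉ B ∧ X.Adj x y := by
    rintro B hBQ ⟨z, hz⟩ hBp
    obtain ⟨x, hx, y, hy, hxB, hyB, hxy⟩ := hU B ⟨z, (hBQ hz).1, hz⟩ ⟨u, hu, hBp u hup⟩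
    refine ⟨x, hxB, y, ⟨hy, fun hyD => ?_⟩, hyB, hxy⟩
    exact (hBQ hxB).2 (reach_step hyD hxy.symm ⟨hx, fun h => hBp x h hxB⟩)
  refine ⟨U \ D, D, Set.diff_union_of_subset hDU, Set.disjoint_sdiff_left, 
    hCD.subset (Set.diff_subset_diff_left hUC), ?_, reach_conn _ _, ⟨hu, hpD u hup⟩, 
    ⟨hw, hpD w hwp⟩, ?_⟩
  · rintro A ⟨a, ha, haA⟩ ⟨c, hc, hcA⟩
    by_cases h1 : (∃ x ∈ p, x ∈ A) ∧ ∃ y ∈ p, y ∉ A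
    · obtain ⟨x, hx, z, hz, h⟩ := hpc A h1.1 h1.2
      exact ⟨x, ⟨hpU hx, hpD x hx⟩, z, ⟨hpU hz, hpD z hz⟩, h⟩
    · by_cases huA : u ∈ A
      · obtain ⟨x, hx, y, hy, h⟩ := hB ((U \ D) \ A) Set.diff_subset ⟨c, hc, hcA⟩
          (fun x hx hxB => h1 ⟨⟨u, hup, huA⟩, x, hx, hxB.2⟩)
        refine ⟨y, hy, x, hx.1, ?_, hx.2, h.2.symm⟩
        by_contra hyA
        exact h.1 ⟨hy, hyA⟩
      · obtain ⟨x, hx, y, hy, h⟩ := hB ((U \ D) ∩ A) Set.inter_subset_left ⟨a, ha, haA⟩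
          (fun x hx hxB => h1 ⟨⟨x, hx, hxB.2⟩, u, hup, huA⟩)
        exact ⟨x, hx.1, y, hy, hx.2, fun hyA => h.1 ⟨hy, hyA⟩, h.2⟩
  · obtain ⟨x, hx, y, hy, hxD, hyD, hxy⟩ := hU D ⟨b, hb.2.1, mem_reach_self _ _⟩
      ⟨u, hu, hpD u hup⟩
    exact ⟨y, ⟨hy, hyD⟩, x, hxD, hxy.symm⟩

/-- invariant of the greedy construction -/
def Inv (X : SimpleGraph V) (C : Set V) (s : List V × V) : Prop :=
  s.1.Nodup ∧ (∀ x ∈ s.1, x ∈ C) ∧ s.2 ∈ C ∧ s.2 ∉ s.1 ∧ (s.1 ++ [s.2]).IsChain (Near X 3) ∧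
    Conn X {x ∈ C | x ∉ s.1}

theorem exists_stage {C : Set V} (hlf : ∀ x, {y | X.Adj x y}.Finite)
    (hbd : {x ∈ C | ∃ y, y ∉ C ∧ X.Adj x y}.Finite) (hinf : C.Infinite)
    (hone : ∀ E ⊆ C, {x ∈ E | ∃ y, y ∉ E ∧ X.Adj x y}.Finite → E.Finite ∨ (C \ E).Finite)
    (s : List V × V) (hs : Inv X C s) (w : V) (hw : w ∈ C) :
    ∃ s' : List V × V, Inv X C s' ∧ s.1 <+: s'.1 ∧ s.1.length < s'.1.length ∧ w ∈ s'.1 := by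
  obtain ⟨L, u⟩ := s
  obtain ⟨h1, h2, h3, h4, h5, h6⟩ := hs
  simp only at h1 h2 h3 h4 h5 h6
  obtain ⟨w', hw', hww'⟩ : ∃ w' ∈ {x ∈ C | x ∉ L}, w ∈ L ∨ w = w' := by
    by_cases h : w ∈ L
    · exact ⟨u, ⟨h3, h4⟩, Or.inl h⟩
    · exact ⟨w, ⟨hw, h⟩, Or.inr rfl⟩
  obtain ⟨Q, D, hQD, hdis, hQf, hQc, hDc, huQ, hwQ, v, hv, u', hu', hvu⟩ :=
    exists_piece hlf hbd hinf hone (U := {x ∈ C | x ∉ L}) (fun x hx => hx.1)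
      ((L.finite_toSet).subset (by intro x hx; by_contra h; exact hx.2 ⟨hx.1, h⟩)) h6 
      (u := u) ⟨h3, h4⟩ hw'
  obtain ⟨l, hl1, hl2, hl3⟩ := exists_list hQf hQc huQ hv hvu
  have hQ : ∀ x ∈ Q, x ∈ C ∧ x ∉ L := fun x hx => by
    have : x ∈ Q ∪ D := Or.inl hx
    rwa [hQD] at this
  have hD : ∀ x ∈ D, x ∈ C ∧ x ∉ L := fun x hx => by
    have : x ∈ Q ∪ D := Or.inr hx
    rwa [hQD] at this
  have hdis' : ∀ x ∈ Q, x ∉ D := fun x hx hxD => Set.disjoint_left.1 hdis hx hxD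
  refine ⟨(L ++ u :: l, u'), ⟨?_, ?_, ?_, ?_, ?_, ?_⟩, by simp, by simp, ?_⟩
  · rw [List.nodup_append]
    refine ⟨h1, hl1, ?_⟩
    rintro a ha b hb rfl
    exact (hQ a ((hl2 a).1 hb)).2 ha
  · intro x hx
    rcases List.mem_append.1 hx with hx | hx
    · exact h2 x hx
    · exact (hQ x ((hl2 x).1 hx)).1
  · exact (hD u' hu').1
  · intro hx
    rcases List.mem_append.1 hx with hx | hx
    · exact (hD u' hu').2 hx
    · exact hdis' u' ((hl2 u').1 hx) hu'
  · have : L ++ u :: l ++ [u'] = L ++ u :: (l ++ [u']) := by simp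
    simp only [this]
    rw [List.isChain_split]
    exact ⟨h5, by simpa using hl3⟩
  · convert hDc using 1
    ext x
    constructor
    · rintro ⟨hxC, hx⟩
      simp only [List.mem_append, not_or] at hx
      have : x ∈ Q ∪ D := by rw [hQD]; exact ⟨hxC, hx.1⟩
      refine this.resolve_left fun h => hx.2 ((hl2 x).2 h)
    · intro hx
      refine ⟨(hD x hx).1, ?_⟩
      simp only [List.mem_append, not_or]
      exact ⟨(hD x hx).2, fun h => hdis' x ((hl2 x).1 h) hx⟩
  · simp only [List.mem_append]
    rcases hww' with h | rfl
    · exact Or.inl h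
    · exact Or.inr ((hl2 _).2 hwQ)

theorem exists_ray {C : Set V} (hlf : ∀ x, {y | X.Adj x y}.Finite)
    (hbd : {x ∈ C | ∃ y, y ∉ C ∧ X.Adj x y}.Finite) (hinf : C.Infinite)
    (hone : ∀ E ⊆ C, {x ∈ E | ∃ y, y ∉ E ∧ X.Adj x y}.Finite → E.Finite ∨ (C \ E).Finite)
    (hconn : Conn X C) (hcount : C.Countable) :
    ∃ f : ℕ → V, Function.Injective f ∧ Set.range f = C ∧ ∀ n, Near X 3 (f n) (f (n + 1)) := by
  obtain ⟨e, he⟩ := hcount.exists_eq_range hinf.nonempty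
  have heC : ∀ n, e n ∈ C := fun n => by rw [he]; exact ⟨n, rfl⟩
  have stage := fun (s : {s // Inv X C s}) n =>
    exists_stage hlf hbd hinf hone s.1 s.2 (e n) (heC n)
  choose nxt hn1 hn2 hn3 hn4 using stage
  let st : ℕ → {s // Inv X C s} := fun n => Nat.rec
    ⟨([], e 0), by simp, by simp, heC 0, by simp, by simp, by simpa using hconn⟩
    (fun n s => ⟨nxt s n, hn1 s n⟩) n
  let L : ℕ → List V := fun n => (st n).1.1
  have hpre1 : ∀ n, L n <+: L (n + 1) := fun n => hn2 (st n) n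
  have hpre : ∀ n m, n ≤ m → L n <+: L m := by
    intro n m h
    induction h with
    | refl => exact List.prefix_rfl
    | step _ ih => exact ih.trans (hpre1 _)
  have hlen1 : ∀ n, (L n).length < (L (n + 1)).length := fun n => hn3 (st n) n
  have hlen : ∀ n, n ≤ (L n).length := by
    intro n
    induction n with
    | zero => simp
    | succ n ih => have := hlen1 n; omega
  have hmem : ∀ n, e n ∈ L (n + 1) := fun n => hn4 (st n) n
  have hinv : ∀ n, Inv X C (st n).1 := fun n => (st n).2
  let f : ℕ → V := fun k => (L (k + 1))[k]'(hlen (k + 1))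
  have hf : ∀ k m (h : k < (L m).length), f k = (L m)[k] := by
    intro k m h
    rcases le_total (k + 1) m with h' | h'
    · exact (hpre _ _ h').getElem _
    · exact ((hpre _ _ h').getElem h).symm
  refine ⟨f, ?_, ?_, ?_⟩
  · intro a b hab
    have ha : a < (L (max a b + 1)).length := by have := hlen (max a b + 1); omega
    have hb : b < (L (max a b + 1)).length := by have := hlen (max a b + 1); omega
    rw [hf a (max a b + 1) ha, hf b (max a b + 1) hb] at hab
    exact ((hinv (max a b + 1)).1.getElem_inj_iff).1 hab
  · apply Set.Subset.antisymm
    · rintro _ ⟨k, rfl⟩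
      exact (hinv (k + 1)).2.1 _ (List.getElem_mem _)
    · intro x hx
      rw [he] at hx
      obtain ⟨n, rfl⟩ := hx
      obtain ⟨k, hk, hke⟩ := List.getElem_of_mem (hmem n)
      exact ⟨k, by rw [hf k (n + 1) hk, hke]⟩
  · intro k
    have hk : k + 1 < (L (k + 2)).length := hlen (k + 2)
    rw [hf k (k + 2) (by omega), hf (k + 1) (k + 2) hk]
    have h5 := (hinv (k + 2)).2.2.2.2.1
    have h6 := (List.isChain_append.1 h5).1
    exact List.isChain_iff_getElem.1 h6 k hk

section group

variable {G : Type*} [Group G]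

/-- `c` is an almost invariant colouring -/
def AI {κ : Type*} (c : G → κ) : Prop := ∀ t : G, {x | c (x * t) ≠ c x}.Finite

theorem finite_preimage_mul_right {B : Set G} (hB : B.Finite) (s : G) : {x | x * s ∈ B}.Finite :=
  hB.preimage (f := fun x => x * s) (fun _ _ _ _ h => mul_right_cancel h)

theorem ai_of_gen {κ : Type*} {c : G → κ} {S : Set G} (hS : Subgroup.closure S = ⊤)
    (h : ∀ s ∈ S, {x | c (x * s) ≠ c x}.Finite) : AI c := by
  intro t
  have ht : t ∈ Subgroup.closure S := by rw [hS]; trivial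
  induction ht using Subgroup.closure_induction with
  | mem x hx => exact h x hx
  | one => simp
  | mul s t _ _ hs ht =>
    refine (hs.union (finite_preimage_mul_right ht s)).subset ?_
    intro x hx
    by_contra hcon
    simp only [Set.mem_union, Set.mem_ofPred_eq, not_or, not_not] at hcon hx
    exact hx (by rw [← mul_assoc, hcon.2, hcon.1])
  | inv s _ hs =>
    refine (finite_preimage_mul_right hs s⁻¹).subset ?_
    intro x hx
    simp only [Set.mem_ofPred_eq, inv_mul_cancel_right] at hx ⊢
    exact hx.symm

theorem AI.map₂ {κ κ' κ'' : Type*} {c : G → κ} {d : G → κ'} (hc : AI c) (hd : AI d)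
    (F : κ → κ' → κ'') : AI (fun x => F (c x) (d x)) := by
  intro t
  refine ((hc t).union (hd t)).subset ?_
  intro x hx
  by_contra hcon
  simp only [Set.mem_union, Set.mem_ofPred_eq, not_or, not_not] at hcon hx
  exact hx (by rw [hcon.1, hcon.2])

theorem AI.left {κ : Type*} {c : G → κ} (hc : AI c) (g : G) : AI (fun x => c (g * x)) := by
  intro t
  refine ((hc t).preimage (f := fun x => g * x) (fun _ _ _ _ h => mul_left_cancel h)).subset ?_
  intro x hx
  simpa [mul_assoc] using hx

theorem closed_univ {S : Set G} (hS : Subgroup.closure S = ⊤) {B : Set G}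
    (h : ∀ x ∈ B, ∀ s ∈ S, x * s ∈ B ∧ x * s⁻¹ ∈ B) (hne : B.Nonempty) (y : G) : y ∈ B := by
  have key : ∀ t : G, ∀ x, x ∈ B ↔ x * t ∈ B := by
    intro t
    have ht : t ∈ Subgroup.closure S := by rw [hS]; trivial
    induction ht using Subgroup.closure_induction with
    | mem s hs =>
      intro x
      exact ⟨fun hx => (h x hx s hs).1, fun hx => by simpa using (h _ hx s hs).2⟩
    | one => simp
    | mul s t _ _ hs ht => intro x; rw [hs x, ht (x * s), mul_assoc]
    | inv s _ hs => intro x; rw [hs (x * s⁻¹)]; simp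
  obtain ⟨x, hx⟩ := hne
  simpa using (key (x⁻¹ * y) x).1 hx

variable (G) in
/-- there is an almost invariant colouring with `n` infinite colour classes -/
def Pn (n : ℕ) : Prop := ∃ c : G → Fin n, AI c ∧ ∀ i, {x | c x = i}.Infinite

theorem pn_succ [Infinite G] {S : Set G} (hSf : S.Finite) (hS : Subgroup.closure S = ⊤) {n : ℕ}
    (hn : 3 ≤ n) (h : Pn G n) : Pn G (n + 1) := by
  classical
  obtain ⟨c, hc, hinf⟩ := h
  set K : Set G := ⋃ s ∈ S, {x | c (x * s) ≠ c x} ∪ {x | c (x * s⁻¹) ≠ c x} with hK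
  have hKf : K.Finite := hSf.biUnion fun s _ => (hc s).union (hc s⁻¹)
  have hKs : ∀ x, x ∉ K → ∀ s ∈ S, c (x * s) = c x ∧ c (x * s⁻¹) = c x := by
    intro x hx s hs
    simp only [hK, Set.mem_iUnion, not_exists, Set.mem_union, not_or, Set.mem_ofPred_eq,
      not_not] at hx
    exact hx s hs
  have hb1 : (⋃ k ∈ K, {g | c (g * k) ≠ c g}).Finite := hKf.biUnion fun k _ => hc k
  have hb2 : ((⋃ k ∈ K, {g | c (g * k) ≠ c g})⁻¹).Finite := hb1.inv
  obtain ⟨g, hg⟩ := (hb1.union hb2).infinite_compl.nonempty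
  simp only [Set.mem_compl_iff, Set.mem_union, not_or, Set.mem_inv, Set.mem_iUnion, not_exists,
    Set.mem_ofPred_eq, not_not] at hg
  obtain ⟨hg1, hg2⟩ := hg
  set i0 := c g with hi0
  set j0 := c g⁻¹ with hj0
  have claim : ∀ x, c (g⁻¹ * x) ≠ j0 → c x = i0 := by
    by_contra! hcon
    obtain ⟨y, hy⟩ := (hinf i0).nonempty
    have := closed_univ hS (B := {x | c (g⁻¹ * x) ≠ j0 ∧ c x ≠ i0}) ?_ hcon y
    · exact this.2 hy
    · rintro x ⟨hx1, hx2⟩ s hs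
      have hxK : x ∉ K := fun h => hx1 (hg2 x h)
      have hgK : g⁻¹ * x ∉ K := fun h => hx2 (by simpa using hg1 _ h)
      have a := hKs _ hxK s hs
      have b := hKs _ hgK s hs
      simp only [Set.mem_ofPred_eq, ← mul_assoc]
      rw [a.1, a.2, b.1, b.2]
      exact ⟨⟨hx1, hx2⟩, hx1, hx2⟩
  obtain ⟨j1, hj1⟩ : ∃ j1, j1 ≠ j0 := by
    have : Nontrivial (Fin n) := Fin.nontrivial_iff_two_le.2 (by omega)
    exact exists_ne j0
  obtain ⟨j2, hj2⟩ : ∃ j2, j2 ∉ ({j0, j1} : Finset (Fin n)) := by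
    by_contra! hcon
    have h1 : Finset.univ ⊆ ({j0, j1} : Finset (Fin n)) := fun x _ => hcon x
    have h2 := Finset.card_le_card h1
    have h3 := Finset.card_le_two (a := j0) (b := j1)
    simp at h2
    omega
  simp only [Finset.mem_insert, Finset.mem_singleton, not_or] at hj2
  have hinf' : ∀ j, {x | c (g⁻¹ * x) = j}.Infinite := by
    intro j h
    apply hinf j
    refine (h.preimage (f := fun x => g * x) (fun _ _ _ _ h => mul_left_cancel h)).subset ?_
    intro x hx
    simpa using hx
  refine ⟨fun x => if c (g⁻¹ * x) = j1 then Fin.last n else (c x).castSucc,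
    AI.map₂ (hc.left g⁻¹) hc (fun a b => if a = j1 then Fin.last n else b.castSucc), ?_⟩
  intro i
  induction i using Fin.lastCases with
  | last =>
    refine (hinf' j1).mono ?_
    intro x hx
    simp only [Set.mem_ofPred_eq] at hx ⊢
    simp [hx]
  | cast i =>
    by_cases hi : i = i0
    · refine (hinf' j2).mono ?_
      intro x hx
      simp only [Set.mem_ofPred_eq] at hx ⊢
      have := claim x (by rw [hx]; exact hj2.1)
      simp [hx, hj2.2, this, hi]
    · refine (hinf i).mono ?_
      intro x hx
      simp only [Set.mem_ofPred_eq] at hx ⊢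
      have : c (g⁻¹ * x) ≠ j1 := by
        intro h
        exact hi (by rw [← hx]; exact claim x (by rw [h]; exact hj1))
      simp [this, hx]

theorem cayley_adj {S : Set G} {g h : G} (hne : g ≠ h) (hm : g⁻¹ * h ∈ S) :
    (cayleyGraph S).Adj g h := by
  simp [cayleyGraph, SimpleGraph.fromRel_adj, hne, hm]

theorem cayley_adj_iff {S : Set G} {g h : G} :
    (cayleyGraph S).Adj g h ↔ g ≠ h ∧ g⁻¹ * h ∈ S ∪ S⁻¹ := by
  simp only [cayleyGraph, SimpleGraph.fromRel_adj]
  have : h⁻¹ * g ∈ S ∪ S⁻¹ ↔ g⁻¹ * h ∈ S ∪ S⁻¹ := by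
    simp [or_comm]
  rw [this, or_self]

theorem pn_le {S : Set G} (hS : IsFinGenSet S) {m n : ℕ} (hm : graphEndsLE (cayleyGraph S) m)
    (h : Pn G n) : n ≤ m := by
  classical
  obtain ⟨c, hc, hinf⟩ := h
  have hAf : (⋃ s ∈ S, (fun x => s(x, x * s)) '' {x | c (x * s) ≠ c x}).Finite :=
    hS.1.biUnion fun s _ => (hc s).image _
  have hbad : (⋃ s ∈ S, ({x | c (x * s) ≠ c x} ∪ {x | c (x * s⁻¹) ≠ c x})).Finite :=
    hS.1.biUnion fun s _ => (hc s).union (hc s⁻¹)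
  set A := hAf.toFinset with hA
  set Γ := (cayleyGraph S).deleteEdges (A : Set (Sym2 G)) with hΓ
  have hmono1 : ∀ x y, Γ.Adj x y → c x = c y := by
    intro x y hxy
    rw [hΓ, SimpleGraph.deleteEdges_adj, cayley_adj_iff] at hxy
    obtain ⟨⟨hne, hmem⟩, hnA⟩ := hxy
    simp only [hA, Set.Finite.coe_toFinset, Set.mem_iUnion, not_exists] at hnA
    by_contra hcc
    rcases hmem with hs | hs
    · exact hnA _ hs ⟨x, by simpa using Ne.symm hcc, by simp⟩
    · have hs' : y⁻¹ * x ∈ S := by simpa using hs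
      exact hnA _ hs' ⟨y, by simpa using hcc, by simp [Sym2.eq_swap]⟩
  have hmono : ∀ x y, Γ.Reachable x y → c x = c y := by
    rintro x y ⟨p⟩
    induction p with
    | nil => rfl
    | cons h _ ih => exact (hmono1 _ _ h).trans ih
  have hAdj : ∀ x y, (cayleyGraph S).Adj x y → c x = c y → Γ.Adj x y := by
    intro x y h hxy
    rw [hΓ, SimpleGraph.deleteEdges_adj]
    refine ⟨h, ?_⟩
    simp only [hA, Set.Finite.coe_toFinset, Set.mem_iUnion, not_exists]
    rintro s hs ⟨z, hz, hzz⟩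
    simp only [Set.mem_ofPred_eq] at hz
    rcases Sym2.eq_iff.1 hzz with ⟨rfl, rfl⟩ | ⟨rfl, rfl⟩
    · exact hz hxy.symm
    · exact hz hxy
  set W : Set G := insert 1 (⋃ s ∈ S, ({x | c (x * s) ≠ c x} ∪ {x | c (x * s⁻¹) ≠ c x})) with hW
  have hWf : W.Finite := hbad.insert 1
  have hcov : ∀ x, x ∈ {x | ∃ w ∈ W, Γ.Reachable w x} := by
    intro x
    refine closed_univ hS.2 (B := {x | ∃ w ∈ W, Γ.Reachable w x}) ?_
      ⟨1, 1, Or.inl rfl, SimpleGraph.Reachable.refl _⟩ x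
    rintro x ⟨w, hw, hwx⟩ s hs
    have step : ∀ t : G, (t ∈ S ∪ S⁻¹) → (c (x * t) ≠ c x → x * t ∈ W) →
        ∃ w ∈ W, Γ.Reachable w (x * t) := by
      intro t ht hb
      by_cases hcx : c (x * t) = c x
      · by_cases hne : x = x * t
        · exact ⟨w, hw, hne ▸ hwx⟩
        · exact ⟨w, hw, hwx.trans
            (hAdj _ _ (cayley_adj_iff.2 ⟨hne, by simpa using ht⟩) hcx.symm).reachable⟩
      · exact ⟨x * t, hb hcx, SimpleGraph.Reachable.refl _⟩
    constructor
    · refine step s (Or.inl hs) fun h => Or.inr ?_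
      simp only [Set.mem_iUnion]
      exact ⟨s, hs, Or.inr (by simpa using h.symm)⟩
    · refine step s⁻¹ (Or.inr (by simpa using hs)) fun h => Or.inr ?_
      simp only [Set.mem_iUnion]
      exact ⟨s, hs, Or.inl (by simpa using h.symm)⟩
  have hcomp : ∀ i, ∃ w, c w = i ∧ (Γ.connectedComponentMk w).supp.Infinite := by
    intro i
    by_contra! hcon
    apply hinf i
    refine ((hWf.subset (Set.inter_subset_left (t := {w | c w = i}))).biUnion
      (t := fun w => (Γ.connectedComponentMk w).supp) fun w hw => ?_).subset ?_
    · simpa [Set.not_infinite] using hcon w hw.2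
    · intro x hx
      obtain ⟨w, hw, hwx⟩ := hcov x
      simp only [Set.mem_iUnion]
      refine ⟨w, ⟨hw, (hmono _ _ hwx).trans hx⟩, ?_⟩
      rw [SimpleGraph.ConnectedComponent.mem_supp_iff]
      exact SimpleGraph.ConnectedComponent.sound hwx.symm
  choose w hw1 hw2 using hcomp
  have hinj : Function.Injective fun i => Γ.connectedComponentMk (w i) := by
    intro i j hij
    have := hmono _ _ (SimpleGraph.ConnectedComponent.exact hij)
    rwa [hw1, hw1] at this
  have h1 := hm A
  have h2 : Set.range (fun i => Γ.connectedComponentMk (w i)) ⊆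
      {c : Γ.ConnectedComponent | c.supp.Infinite} := by
    rintro _ ⟨i, rfl⟩
    exact hw2 i
  have h3 := (Set.encard_le_encard h2).trans h1
  rw [← Set.image_univ, hinj.encard_image, Set.encard_univ] at h3
  simpa using h3

theorem near_mem {T : Set G} {k : ℕ} {a b : G} (h : Near (cayleyGraph T) k a b) :
    a⁻¹ * b ∈ (insert 1 (T ∪ T⁻¹)) ^ k := by
  obtain ⟨p, hp⟩ := h
  induction p generalizing k with
  | nil => 
    rw [inv_mul_cancel]
    exact Set.one_mem_pow (Set.mem_insert _ _)
  | @cons u v w h p ih =>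
    cases k with
    | zero => simp at hp
    | succ k =>
      rw [pow_succ']
      refine ⟨u⁻¹ * v, Or.inr (cayley_adj_iff.1 h).2, v⁻¹ * w, ih (by simpa using hp), ?_⟩
      simp [mul_assoc]

theorem group_ray {S : Set G} (hSf : S.Finite) (hS : Subgroup.closure S = ⊤) {C : Set G}
    (hC : AI (fun x => x ∈ C)) (hinf : C.Infinite)
    (hone : ∀ E ⊆ C, AI (fun x => x ∈ E) → E.Finite ∨ (C \ E).Finite) :
    ∃ (T : Set G) (f : ℕ → G), T.Finite ∧ Function.Injective f ∧ Set.range f = C ∧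
      ∀ n, (f n)⁻¹ * f (n + 1) ∈ T := by
  classical
  set K : Set G := {x ∈ C | ∃ s ∈ S, x * s ∉ C ∨ x * s⁻¹ ∉ C} with hK
  have hKf : K.Finite := by
    refine (hSf.biUnion fun s _ => (hC s).union (hC s⁻¹)).subset ?_
    rintro x ⟨hx, s, hs, h⟩
    simp only [Set.mem_iUnion]
    exact ⟨s, hs, h.imp (fun h => by simp [h, hx]) (fun h => by simp [h, hx])⟩
  set T : Set G := S ∪ K⁻¹ * K with hT
  have hTf : T.Finite := hSf.union (hKf.inv.mul hKf)
  have hTf' : (T ∪ T⁻¹).Finite := hTf.union hTf.inv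
  have hlf : ∀ x, {y | (cayleyGraph T).Adj x y}.Finite := by
    intro x
    refine (hTf'.preimage (f := fun y => x⁻¹ * y) (fun _ _ _ _ h => mul_left_cancel h)).subset ?_
    intro y hy
    exact (cayley_adj_iff.1 hy).2
  have hbd : {x ∈ C | ∃ y, y ∉ C ∧ (cayleyGraph T).Adj x y}.Finite := by
    refine (hTf'.biUnion fun t _ => hC t).subset ?_
    rintro x ⟨hx, y, hy, hxy⟩
    simp only [Set.mem_iUnion]
    exact ⟨x⁻¹ * y, (cayley_adj_iff.1 hxy).2, by simp [hx, hy]⟩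
  have hconn : Conn (cayleyGraph T) C := by
    rintro A ⟨x, hx, hxA⟩ ⟨y, hy, hyA⟩
    by_contra hcon
    have hadjS : ∀ z, ∀ s ∈ S, z ≠ z * s → (cayleyGraph T).Adj z (z * s) := fun z s hs hne =>
      cayley_adj hne (Or.inl (by simpa using hs))
    have hadjS' : ∀ z, ∀ s ∈ S, z ≠ z * s⁻¹ → (cayleyGraph T).Adj z (z * s⁻¹) := fun z s hs hne =>
      cayley_adj_iff.2 ⟨hne, Or.inr (Or.inl (by simpa using hs))⟩
    have hclosed : ∀ B ⊆ C, (∀ k ∈ K, k ∉ B) →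
        (∀ z ∈ B, ∀ z' ∈ C, z' ∉ B → ¬ (cayleyGraph T).Adj z z') → B.Nonempty → ∀ z, z ∈ B := by
      intro B hBC hKB hno hne z
      refine closed_univ hS ?_ hne z
      intro z hz s hs
      have hzK : z ∉ K := fun h => hKB z h hz
      have h1 : z * s ∈ C := by
        by_contra h
        exact hzK ⟨hBC hz, s, hs, Or.inl h⟩
      have h2 : z * s⁻¹ ∈ C := by
        by_contra h
        exact hzK ⟨hBC hz, s, hs, Or.inr h⟩
      constructor
      · by_contra h
        exact hno z hz _ h1 h (hadjS z s hs (fun e => h (e ▸ hz)))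
      · by_contra h
        exact hno z hz _ h2 h (hadjS' z s hs (fun e => h (e ▸ hz)))
    by_cases h1 : ∀ k ∈ K, k ∉ C ∩ A
    · refine hyA (hclosed (C ∩ A) Set.inter_subset_left h1 ?_ ⟨x, hx, hxA⟩ y).2
      intro z hz z' hz' hz'A hadj
      exact hcon ⟨z, hz.1, z', hz', hz.2, fun h => hz'A ⟨hz', h⟩, hadj⟩
    · by_cases h2 : ∀ k ∈ K, k ∉ C \ A
      · refine (hclosed (C \ A) Set.diff_subset h2 ?_ ⟨y, hy, hyA⟩ x).2 hxA
        intro z hz z' hz' hz'A hadj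
        refine hcon ⟨z', hz', z, hz.1, ?_, hz.2, hadj.symm⟩
        by_contra h
        exact hz'A ⟨hz', h⟩
      · push Not at h1 h2
        obtain ⟨k, hk, hkA⟩ := h1
        obtain ⟨l, hl, hlA⟩ := h2
        refine hcon ⟨k, hkA.1, l, hlA.1, hkA.2, hlA.2, cayley_adj ?_ (Or.inr ?_)⟩
        · rintro rfl
          exact hlA.2 hkA.2
        · exact ⟨k⁻¹, by simpa using hk, l, hl, rfl⟩
  have hcount : C.Countable := by
    have hUf : (S ∪ S⁻¹).Finite := hSf.union hSf.inv
    have hpow : ∀ n : ℕ, ((S ∪ S⁻¹) ^ n : Set G).Finite := by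
      intro n
      induction n with
      | zero => rw [pow_zero]; exact Set.finite_one
      | succ n ih => rw [pow_succ]; exact ih.mul hUf
    have hB : (⋃ n : ℕ, ((S ∪ S⁻¹) ^ n : Set G)).Countable :=
      Set.countable_iUnion fun n => (hpow n).countable
    refine hB.mono fun y _ => ?_
    refine closed_univ hS ?_ ⟨1, Set.mem_iUnion.2 ⟨0, by simp⟩⟩ y
    intro x hx s hs
    obtain ⟨n, hn⟩ := Set.mem_iUnion.1 hx
    refine ⟨Set.mem_iUnion.2 ⟨n + 1, ?_⟩, Set.mem_iUnion.2 ⟨n + 1, ?_⟩⟩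
    · rw [pow_succ]; exact Set.mul_mem_mul hn (Or.inl hs)
    · rw [pow_succ]; exact Set.mul_mem_mul hn (Or.inr (by simpa using hs))
  have hone' : ∀ E ⊆ C, {x ∈ E | ∃ y, y ∉ E ∧ (cayleyGraph T).Adj x y}.Finite →
      E.Finite ∨ (C \ E).Finite := by
    intro E hE hEf
    apply hone E hE
    refine ai_of_gen hS fun s hs => ?_
    refine (hEf.union (finite_preimage_mul_right hEf s)).subset ?_
    intro x hx
    simp only [Set.mem_ofPred_eq, ne_eq, eq_iff_iff] at hx
    by_cases hxE : x ∈ E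
    · have hxs : x * s ∉ E := by tauto
      exact Or.inl ⟨hxE, x * s, hxs, cayley_adj (fun e => hxs (e ▸ hxE))
        (Or.inl (by simpa using hs))⟩
    · have hxs : x * s ∈ E := by tauto
      have hadj : (cayleyGraph T).Adj x (x * s) :=
        cayley_adj (fun e => hxE (by rw [e]; exact hxs)) (Or.inl (by simpa using hs))
      exact Or.inr ⟨hxs, x, hxE, hadj.symm⟩
  obtain ⟨f, h1, h2, h3⟩ := exists_ray hlf hbd hinf hone' hconn hcount
  have hfin : ((insert 1 (T ∪ T⁻¹)) ^ 3 : Set G).Finite := by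
    rw [pow_succ, pow_two]
    exact ((hTf'.insert 1).mul (hTf'.insert 1)).mul (hTf'.insert 1)
  exact ⟨_, f, hfin, h1, h2, fun n => near_mem (h3 n)⟩

theorem pn_three {C D : Set G} (hDC : D ⊆ C) (hC : AI (fun x => x ∈ C)) (hD : AI (fun x => x ∈ D))
    (h1 : D.Infinite) (h2 : (C \ D).Infinite) (h3 : Cᶜ.Infinite) : Pn G 3 := by
  classical
  refine ⟨fun x => if x ∈ D then 0 else if x ∈ C then 1 else 2,
    AI.map₂ hD hC (fun a b => if a then 0 else if b then 1 else 2), ?_⟩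
  intro i
  fin_cases i
  · exact h1.mono fun x hx => by simp [hx]
  · exact h2.mono fun x hx => by simp [hx.1, hx.2]
  · refine h3.mono fun x hx => ?_
    have : x ∉ D := fun h => hx (hDC h)
    have hx' : x ∉ C := hx
    simp [hx', this]

theorem ham_finite [Finite G] : ∃ S : Set G, IsFinGenSet S ∧ HasHamiltonianPath (cayleyGraph S) := by
  refine ⟨Set.univ, ⟨Set.finite_univ, Subgroup.closure_univ⟩, ?_⟩
  obtain ⟨n, ⟨e⟩⟩ := Finite.exists_equiv_fin G
  refine ⟨Set.Ico 0 (n : ℤ), fun k => e.symm ⟨k.1.toNat, by have := k.2; simp only [Set.mem_Ico] at this; omega⟩,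
    Set.ordConnected_Ico, ⟨?_, ?_⟩, ?_⟩
  · intro a b hab
    have := congrArg Fin.val (e.symm.injective hab)
    have ha := a.2
    have hb := b.2
    simp only [Set.mem_Ico] at this ha hb
    ext
    omega
  · intro x
    refine ⟨⟨(e x : ℕ), by simp⟩, ?_⟩
    simp
  · intro k h1 h2
    refine cayley_adj ?_ trivial
    intro h
    have := congrArg Fin.val (e.symm.injective h)
    simp at this h1 h2
    omega

theorem ham_infinite [Infinite G] {S : Set G} (hS : IsFinGenSet S) (h3 : ¬ Pn G 3) :
    ∃ S : Set G, IsFinGenSet S ∧ HasHamiltonianPath (cayleyGraph S) := by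
  classical
  have gen : ∀ T : Set G, T.Finite → IsFinGenSet (S ∪ T) := fun T hT =>
    ⟨hS.1.union hT, top_unique (by rw [← hS.2]; exact Subgroup.closure_mono Set.subset_union_left)⟩
  by_cases hE : ∃ E : Set G, AI (fun x => x ∈ E) ∧ E.Infinite ∧ Eᶜ.Infinite
  · obtain ⟨E, hE, hEi, hEci⟩ := hE
    have hEc : AI (fun x => x ∈ Eᶜ) := AI.map₂ hE hE (fun a _ => ¬ a)
    obtain ⟨T1, f1, hT1, hi1, hr1, hs1⟩ := group_ray hS.1 hS.2 hE hEi (by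
      intro D hD hDai
      by_contra! hcon
      exact h3 (pn_three hD hE hDai hcon.1 hcon.2 hEci))
    obtain ⟨T2, f2, hT2, hi2, hr2, hs2⟩ := group_ray hS.1 hS.2 hEc hEci (by
      intro D hD hDai
      by_contra! hcon
      exact h3 (pn_three hD hEc hDai hcon.1 hcon.2 (by simpa using hEi)))
    have m1 : ∀ n, f1 n ∈ E := fun n => by rw [← hr1]; exact ⟨n, rfl⟩
    have m2 : ∀ n, f2 n ∉ E := fun n => by
      have : f2 n ∈ Eᶜ := by rw [← hr2]; exact ⟨n, rfl⟩
      exact this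
    refine ⟨_, gen (insert ((f2 0)⁻¹ * f1 0) (T1 ∪ T2)) ((hT1.union hT2).insert _), Set.univ,
      fun k => match k.1 with
        | Int.ofNat n => f1 n
        | Int.negSucc n => f2 n, Set.ordConnected_univ, ⟨?_, ?_⟩, ?_⟩
    · rintro ⟨a, _⟩ ⟨b, _⟩ hab
      rcases a with a | a <;> rcases b with b | b <;> simp only at hab
      · rw [hi1 hab]
      · exact absurd (m1 a) (hab ▸ m2 b)
      · exact absurd (m1 b) (hab ▸ m2 a)
      · rw [hi2 hab]
    · intro x
      by_cases hx : x ∈ E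
      · rw [← hr1] at hx
        obtain ⟨n, rfl⟩ := hx
        exact ⟨⟨Int.ofNat n, trivial⟩, rfl⟩
      · have hx : x ∈ Eᶜ := hx
        rw [← hr2] at hx
        obtain ⟨n, rfl⟩ := hx
        exact ⟨⟨Int.negSucc n, trivial⟩, rfl⟩
    · intro k _ _
      rcases k with n | n
      · refine cayley_adj (hi1.ne (by omega : n ≠ n + 1)) (Or.inr (Or.inr (Or.inl (hs1 n))))
      · rcases n with _ | n
        · refine cayley_adj (fun h => ?_) (Or.inr (Or.inl rfl))
          have h' : f2 0 = f1 0 := h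
          exact m2 0 (h' ▸ m1 0)
        · exact (cayley_adj (hi2.ne (by omega : n ≠ n + 1))
            (Or.inr (Or.inr (Or.inr (hs2 n))))).symm
  · push Not at hE
    obtain ⟨T1, f1, hT1, hi1, hr1, hs1⟩ := group_ray hS.1 hS.2 (C := Set.univ) (by intro t; simp)
      Set.infinite_univ (by
      intro D hD hDai
      by_contra! hcon
      exact hcon.2 (by simpa [Set.compl_eq_univ_diff] using hE D hDai hcon.1))
    refine ⟨_, gen T1 hT1, Set.Ici 0, fun k => f1 k.1.toNat, Set.ordConnected_Ici, ⟨?_, ?_⟩, ?_⟩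
    · rintro ⟨a, ha⟩ ⟨b, hb⟩ hab
      have := hi1 hab
      simp at this ha hb
      ext
      simp only
      omega
    · intro x
      have hx : x ∈ Set.range f1 := by rw [hr1]; trivial
      obtain ⟨n, rfl⟩ := hx
      exact ⟨⟨n, by simp⟩, by simp⟩
    · intro k h1 h2
      have e : (k + 1).toNat = k.toNat + 1 := by simp at h1; omega
      simp only [e]
      exact cayley_adj (hi1.ne (by omega)) (Or.inr (hs1 _))

theorem ends_of_ham {S : Set G} (hS : IsFinGenSet S) (hH : HasHamiltonianPath (cayleyGraph S))
    {S' : Set G} (hS' : IsFinGenSet S') : graphEndsLE (cayleyGraph S') 2 := by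
  classical
  intro A
  set Γ := (cayleyGraph S').deleteEdges (A : Set (Sym2 G)) with hΓ
  obtain ⟨I, P, hI, hP, hadj⟩ := hH
  have hAv : (⋃ e ∈ A, {x | x ∈ e}).Finite := by
    refine A.finite_toSet.biUnion fun e _ => ?_
    refine (e.toFinset.finite_toSet).subset fun x hx => by simpa using hx
  have hc : AI (fun x => Γ.connectedComponentMk x) := by
    refine ai_of_gen hS'.2 fun s hs => hAv.subset fun x hx => ?_
    simp only [Set.mem_iUnion]
    by_contra hcon
    apply hx
    by_cases hne : x = x * s
    · rw [← hne]
    · refine (SimpleGraph.ConnectedComponent.sound (SimpleGraph.Adj.reachable ?_)).symm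
      rw [hΓ, SimpleGraph.deleteEdges_adj]
      refine ⟨cayley_adj hne (by simpa using hs), fun h => hcon ⟨s(x, x * s), h, by simp⟩⟩
  set c : G → Γ.ConnectedComponent := fun x => Γ.connectedComponentMk x with hcdef
  have hbad : (⋃ s ∈ S ∪ S⁻¹, {x | c (x * s) ≠ c x}).Finite :=
    (hS.1.union hS.1.inv).biUnion fun s _ => hc s
  have hbadI : (Subtype.val '' (P ⁻¹' (⋃ s ∈ S ∪ S⁻¹, {x | c (x * s) ≠ c x}))).Finite :=
    (hbad.preimage hP.1.injOn).image _
  obtain ⟨N, hN⟩ : ∃ N : ℤ, ∀ k (h1 : k ∈ I) (h2 : k + 1 ∈ I), (N ≤ k ∨ k + 1 ≤ -N) →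
      c (P ⟨k, h1⟩) = c (P ⟨k + 1, h2⟩) := by
    obtain ⟨N1, hN1⟩ := hbadI.bddAbove
    obtain ⟨N2, hN2⟩ := hbadI.bddBelow
    refine ⟨max (N1 + 1) (-N2 + 1), fun k h1 h2 hk => ?_⟩
    by_contra hne
    have hmem : k ∈ Subtype.val '' (P ⁻¹' (⋃ s ∈ S ∪ S⁻¹, {x | c (x * s) ≠ c x})) := by
      refine ⟨⟨k, h1⟩, ?_, rfl⟩
      simp only [Set.mem_preimage, Set.mem_iUnion]
      exact ⟨_, (cayley_adj_iff.1 (hadj k h1 h2)).2, by simpa using Ne.symm hne⟩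
    have a := hN1 hmem
    have b := hN2 hmem
    omega
  have hstep : ∀ (n : ℕ) (k : ℤ) (h1 : k ∈ I) (h2 : k + n ∈ I), (N ≤ k ∨ k + n ≤ -N) →
      c (P ⟨k, h1⟩) = c (P ⟨k + n, h2⟩) := by
    intro n
    induction n with
    | zero => intro k h1 h2 _; simp
    | succ n ih =>
      intro k h1 h2 hk
      have h3 : k + n ∈ I := hI.out h1 h2 ⟨by omega, by push_cast; omega⟩
      rw [ih k h1 h3 (by push_cast at hk; omega)]
      have e : k + ((n + 1 : ℕ) : ℤ) = k + n + 1 := by push_cast; ring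
      have h4 : k + n + 1 ∈ I := e ▸ h2
      rw [hN (k + n) h3 h4 (by push_cast at hk; omega)]
      simp only [e]
  have hsame : ∀ k l (h1 : k ∈ I) (h2 : l ∈ I), ((N ≤ k ∧ N ≤ l) ∨ (k ≤ -N ∧ l ≤ -N)) →
      c (P ⟨k, h1⟩) = c (P ⟨l, h2⟩) := by
    have hle : ∀ k l (h1 : k ∈ I) (h2 : l ∈ I), k ≤ l →
        ((N ≤ k ∧ N ≤ l) ∨ (k ≤ -N ∧ l ≤ -N)) → c (P ⟨k, h1⟩) = c (P ⟨l, h2⟩) := by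
      intro k l h1 h2 hkl h
      obtain ⟨n, rfl⟩ := Int.le.dest hkl
      exact hstep n k h1 h2 (by omega)
    intro k l h1 h2 h
    rcases le_total k l with hkl | hkl
    · exact hle k l h1 h2 hkl h
    · exact (hle l k h2 h1 hkl (by tauto)).symm
  obtain ⟨a, ha⟩ : ∃ a, ∀ k (h : k ∈ I), N ≤ k → c (P ⟨k, h⟩) = a := by
    by_cases h : ∃ k, k ∈ I ∧ N ≤ k
    · obtain ⟨k, h1, h2⟩ := h
      exact ⟨_, fun l hl hNl => hsame l k hl h1 (Or.inl ⟨hNl, h2⟩)⟩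
    · exact ⟨c 1, fun k hk hNk => absurd ⟨k, hk, hNk⟩ h⟩
  obtain ⟨b, hb⟩ : ∃ b, ∀ k (h : k ∈ I), k ≤ -N → c (P ⟨k, h⟩) = b := by
    by_cases h : ∃ k, k ∈ I ∧ k ≤ -N
    · obtain ⟨k, h1, h2⟩ := h
      exact ⟨_, fun l hl hNl => hsame l k hl h1 (Or.inr ⟨hNl, h2⟩)⟩
    · exact ⟨c 1, fun k hk hNk => absurd ⟨k, hk, hNk⟩ h⟩
  have hsub : {d : Γ.ConnectedComponent | d.supp.Infinite} ⊆ {a, b} := by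
    intro d hd
    by_contra hcon
    simp only [Set.mem_insert_iff, Set.mem_singleton_iff, not_or] at hcon
    apply hd
    have hfin : (P '' (Subtype.val ⁻¹' Set.Icc (-N) N)).Finite :=
      ((Set.finite_Icc (-N) N).preimage Subtype.val_injective.injOn).image _
    refine hfin.subset fun x hx => ?_
    obtain ⟨⟨k, hk⟩, rfl⟩ := hP.2 x
    have hkd : c (P ⟨k, hk⟩) = d := hx
    refine ⟨⟨k, hk⟩, ⟨?_, ?_⟩, rfl⟩
    · by_contra h
      exact hcon.2 (by rw [← hkd]; exact hb k hk (by simp only at h; omega))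
    · by_contra h
      exact hcon.1 (by rw [← hkd]; exact ha k hk (by simp only at h; omega))
  exact (Set.encard_le_encard hsub).trans (Set.encard_insert_le {b} a |>.trans (by rw [Set.encard_singleton]; norm_num))

end group

end CH

/-- A finitely generated group has finitely many ends if and only if it has a Cayley graph
(w.r.t. some finite generating set) admitting a Hamiltonian path. -/
theorem finitely_many_ends_iff_cayley_hamiltonian_path
    (G : Type*) [Group G] [Group.FG G] :
    (∃ m : ℕ, ∀ S : Set G, IsFinGenSet S → graphEndsLE (cayleyGraph S) m) ↔
    (∃ S : Set G, IsFinGenSet S ∧ HasHamiltonianPath (cayleyGraph S)) := by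
  constructor
  · rintro ⟨m, hm⟩
    rcases finite_or_infinite G with hG | hG
    · exact CH.ham_finite
    · obtain ⟨S, hS⟩ := (Group.fg_def (G := G)).1 inferInstance
      have hS' : IsFinGenSet (S : Set G) := ⟨S.finite_toSet, hS⟩
      refine CH.ham_infinite hS' fun h3 => ?_
      have : ∀ n, 3 ≤ n → CH.Pn G n := by
        intro n hn
        induction n, hn using Nat.le_induction with
        | base => exact h3
        | succ n hn ih => exact CH.pn_succ hS'.1 hS'.2 hn ih
      have := CH.pn_le hS' (hm _ hS') (this (m + 3) (by omega))
      omega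
  · rintro ⟨S, hS, hH⟩
    exact ⟨2, fun S' hS' => CH.ends_of_ham hS hH hS'⟩
end

section
/- A connected graph Γ admits a transitive translation-like action by ℤ if and only if Γ is bilipschitz equivalent to a graph admitting a bi-infinite Hamiltonian path. -/
open scoped Pointwise

universe u

/-- The path-length distance on the vertices of a graph, as a real-valued function. -/
noncomputable def graphDist {V : Type*} (Γ : SimpleGraph V) : V → V → ℝ :=
  fun u v => (Γ.dist u v : ℝ)

/-- A bi-infinite Hamiltonian path in a graph: a bijection `P : ℤ → V` with `P k`
adjacent to `P (k+1)` for all `k`. -/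
def BiInfHamPath {V : Type*} (Γ : SimpleGraph V) : Prop :=
  ∃ P : ℤ → V, Function.Bijective P ∧ ∀ k : ℤ, Γ.Adj (P k) (P (k + 1))

/-- Two distance functions are bilipschitz equivalent if there is a bijection `f` and a
constant `c > 0` with `(1/c) d(x₁,x₂) ≤ ρ(f x₁, f x₂) ≤ c · d(x₁,x₂)`. -/
def BilipEquiv {X Y : Type*} (d : X → X → ℝ) (ρ : Y → Y → ℝ) : Prop :=
  ∃ (f : X → Y) (c : ℝ), Function.Bijective f ∧ 0 < c ∧
    ∀ x₁ x₂ : X, (1 / c) * d x₁ x₂ ≤ ρ (f x₁) (f x₂) ∧ ρ (f x₁) (f x₂) ≤ c * d x₁ x₂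

/-- If every edge of `G'` has `G`-length at most `N`, then `G`-distance is at most `N` times the
length of any walk of `G'`. -/
lemma dist_le_mul_walk_length {V : Type*} {G G' : SimpleGraph V} (hG : G.Connected) (N : ℕ)
    (h : ∀ u v, G'.Adj u v → G.dist u v ≤ N) {u v : V} (w : G'.Walk u v) :
    G.dist u v ≤ N * w.length := by
  induction w with
  | nil => simp
  | @cons a b c hab p ih =>
    have h1 := hG.dist_triangle (u := a) (v := b) (w := c)
    have h2 := h a b hab
    rw [SimpleGraph.Walk.length_cons]
    nlinarith

/-- Distance along a Hamiltonian path. -/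
lemma dist_ham_nat {W : Type*} {G : SimpleGraph W} (hG : G.Connected) (P : ℤ → W)
    (hP : ∀ k : ℤ, G.Adj (P k) (P (k + 1))) (k : ℤ) (n : ℕ) :
    G.dist (P k) (P (k + n)) ≤ n := by
  induction n with
  | zero => simp
  | succ n ih =>
    have h1 := hG.dist_triangle (u := P k) (v := P (k + n)) (w := P (k + n + 1))
    have h2 := SimpleGraph.dist_eq_one_iff_adj.mpr (hP (k + n))
    have h3 : (k + (n + 1 : ℕ) : ℤ) = k + n + 1 := by push_cast; ring
    rw [h3]
    omega

lemma dist_ham {W : Type*} {G : SimpleGraph W} (hG : G.Connected) (P : ℤ → W)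
    (hP : ∀ k : ℤ, G.Adj (P k) (P (k + 1))) (k n : ℤ) :
    G.dist (P k) (P (k + n)) ≤ n.natAbs := by
  rcases Int.natAbs_eq n with h | h
  · have := dist_ham_nat hG P hP k n.natAbs
    rwa [← h] at this
  · have := dist_ham_nat hG P hP (k + n) n.natAbs
    rw [show k + n + (n.natAbs : ℤ) = k by omega, SimpleGraph.dist_comm] at this
    exact this

/-- A connected graph admits a transitive translation-like action by `ℤ` if and only if it
is bilipschitz equivalent to a graph admitting a bi-infinite Hamiltonian path. -/
theorem transitive_Z_action_iff_bilip_to_ham {V : Type u} (Γ : SimpleGraph V)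
    (hΓ : Γ.Connected) :
    (∃ a : RightAction (Multiplicative ℤ) V, a.IsTransitive ∧
       a.IsTranslationLike (graphDist Γ)) ↔
    (∃ (W : Type u) (Γ' : SimpleGraph W), Γ'.Connected ∧
       BilipEquiv (graphDist Γ) (graphDist Γ') ∧ BiInfHamPath Γ') := by
  constructor
  · rintro ⟨a, htr, hfree, hbd⟩
    obtain ⟨x0⟩ := hΓ.nonempty
    obtain ⟨C, hC⟩ := hbd (Multiplicative.ofAdd 1)
    obtain ⟨N, hN⟩ := exists_nat_ge (max C 1)
    have hN1 : 1 ≤ N := by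
      have := (le_max_right C 1).trans hN
      exact_mod_cast this
    let P : ℤ → V := fun k => a.act x0 (Multiplicative.ofAdd k)
    have hstep : ∀ k, P (k + 1) = a.act (P k) (Multiplicative.ofAdd 1) := by
      intro k
      simp only [P, a.act_mul, ofAdd_add]
    have hinj : Function.Injective P := by
      intro i j hij
      have h1 : a.act (P i) (Multiplicative.ofAdd (j - i)) = P i := by
        rw [hij]
        simp only [P] at hij ⊢
        rw [← hij, a.act_mul, ← ofAdd_add, add_sub_cancel, hij]
      have h2 := hfree _ _ h1
      have h3 : j - i = 0 := h2
      omega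
    have hsurj : Function.Surjective P := by
      intro y
      obtain ⟨h, hh⟩ := htr x0 y
      exact ⟨Multiplicative.toAdd h, by simpa [P] using hh⟩
    let G' : SimpleGraph V := Γ ⊔ SimpleGraph.fromRel (fun u v => ∃ k, u = P k ∧ v = P (k + 1))
    have hle : Γ ≤ G' := le_sup_left
    have hG' : G'.Connected := hΓ.mono hle
    have hPd : ∀ k, Γ.dist (P k) (P (k + 1)) ≤ N := by
      intro k
      have h1 := hC (P k)
      rw [← hstep] at h1
      have h2 : (Γ.dist (P k) (P (k + 1)) : ℝ) ≤ N := h1.trans ((le_max_left C 1).trans hN)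
      exact_mod_cast h2
    have hedge : ∀ u v, G'.Adj u v → Γ.dist u v ≤ N := by
      intro u v huv
      rcases huv with h | ⟨-, ⟨k, rfl, rfl⟩ | ⟨k, rfl, rfl⟩⟩
      · rw [SimpleGraph.dist_eq_one_iff_adj.mpr h]; exact hN1
      · exact hPd k
      · rw [SimpleGraph.dist_comm]; exact hPd k
    refine ⟨V, G', hG', ⟨id, N, Function.bijective_id, by positivity, ?_⟩, P, ⟨hinj, hsurj⟩, ?_⟩
    · intro x y
      have hNpos : (0 : ℝ) < N := by positivity
      have h1 : Γ.dist x y ≤ N * G'.dist x y := by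
        obtain ⟨w, hw⟩ := hG'.exists_walk_length_eq_dist x y
        rw [← hw]
        exact dist_le_mul_walk_length hΓ N hedge w
      have h2 : G'.dist x y ≤ Γ.dist x y := by
        obtain ⟨w, hw⟩ := hΓ.exists_walk_length_eq_dist x y
        rw [← hw, ← SimpleGraph.Walk.length_mapLe hle w]
        exact SimpleGraph.dist_le _
      have h1' : (Γ.dist x y : ℝ) ≤ N * G'.dist x y := by exact_mod_cast h1
      have h2' : G'.dist x y ≤ N * Γ.dist x y := by nlinarith
      simp only [graphDist, id]
      constructor
      · rw [one_div, inv_mul_le_iff₀ hNpos]; exact h1'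
      · exact_mod_cast h2'
    · intro k
      refine Or.inr ⟨fun h => ?_, Or.inl ⟨k, rfl, rfl⟩⟩
      have := hinj h
      omega
  · rintro ⟨W, G', hG', ⟨f, c, hf, hc, hfc⟩, P, hP, hadj⟩
    let F : V ≃ W := Equiv.ofBijective f hf
    let Q : ℤ ≃ W := Equiv.ofBijective P hP
    let e : ℤ ≃ V := Q.trans F.symm
    have hfe : ∀ k, f (e k) = P k := fun k => F.apply_symm_apply (Q k)
    refine ⟨⟨fun x h => e (e.symm x + Multiplicative.toAdd h), ?_, ?_⟩, ?_, ?_, ?_⟩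
    · intro x; simp
    · intro x h k; simp [add_assoc]
    · intro x y
      exact ⟨Multiplicative.ofAdd (e.symm y - e.symm x), by simp⟩
    · intro x h hx
      have h1 : e (e.symm x + Multiplicative.toAdd h) = x := hx
      rw [← Equiv.eq_symm_apply] at h1
      have h2 : Multiplicative.toAdd h = 0 := by omega
      exact h2
    · intro h
      refine ⟨c * (Multiplicative.toAdd h).natAbs, fun x => ?_⟩
      obtain ⟨k, rfl⟩ := e.surjective x
      have h1 := (hfc (e k) (e (k + Multiplicative.toAdd h))).1
      rw [hfe, hfe, one_div, inv_mul_le_iff₀ hc] at h1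
      have h2 : (G'.dist (P k) (P (k + Multiplicative.toAdd h)) : ℝ) ≤
          (Multiplicative.toAdd h).natAbs := by
        exact_mod_cast dist_ham hG' P hadj k _
      simp only [Equiv.symm_apply_apply]
      exact h1.trans (mul_le_mul_of_nonneg_left h2 hc.le)
end

section
/- A finitely generated group G admits a transitive translation-like action by ℤ if and only if G has a Cayley graph (with respect to some finite generating set) admitting a bi-infinite Hamiltonian path. -/
open scoped Pointwise

/-- Every element of the group is a word in the generators. -/
theorem exists_mem_pow_of_closure {G : Type*} [Group G] {S : Set G}
    (hS : Subgroup.closure S = ⊤) (g : G) : ∃ n : ℕ, g ∈ (S ∪ S⁻¹) ^ n := by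
  have hg : g ∈ Subgroup.closure S := by rw [hS]; trivial
  rw [← Subgroup.mem_toSubmonoid, Subgroup.closure_toSubmonoid] at hg
  induction hg using Submonoid.closure_induction with
  | mem x hx => exact ⟨1, by simpa using hx⟩
  | one => exact ⟨0, by simp⟩
  | mul x y _ _ hx hy =>
    obtain ⟨n, hn⟩ := hx
    obtain ⟨m, hm⟩ := hy
    exact ⟨n + m, by rw [pow_add]; exact Set.mul_mem_mul hn hm⟩

theorem mem_pow_wordDist {G : Type*} [Group G] {S : Set G}
    (hS : Subgroup.closure S = ⊤) (g h : G) : g⁻¹ * h ∈ (S ∪ S⁻¹) ^ (wordDist S g h) :=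
  Nat.sInf_mem (s := {n : ℕ | g⁻¹ * h ∈ (S ∪ S⁻¹) ^ n}) (exists_mem_pow_of_closure hS _)

theorem finite_steps_nat {G : Type*} [Group G] (P : ℤ → G)
    (h1 : (Set.range fun k : ℤ => (P k)⁻¹ * P (k + 1)).Finite) (n : ℕ) :
    (Set.range fun k : ℤ => (P k)⁻¹ * P (k + n)).Finite := by
  induction n with
  | zero =>
    refine (Set.finite_singleton (1 : G)).subset ?_
    rintro _ ⟨k, rfl⟩
    simp
  | succ n ih =>
    refine (ih.mul h1).subset ?_
    rintro _ ⟨k, rfl⟩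
    refine Set.mem_mul.2 ⟨_, ⟨k, rfl⟩, _, ⟨k + n, rfl⟩, ?_⟩
    simp [mul_assoc, add_assoc]

theorem finite_steps {G : Type*} [Group G] (P : ℤ → G)
    (h1 : (Set.range fun k : ℤ => (P k)⁻¹ * P (k + 1)).Finite) (z : ℤ) :
    (Set.range fun k : ℤ => (P k)⁻¹ * P (k + z)).Finite := by
  obtain ⟨n, rfl | rfl⟩ := z.eq_nat_or_neg
  · exact finite_steps_nat P h1 n
  · refine (finite_steps_nat P h1 n).inv.subset ?_
    rintro _ ⟨k, rfl⟩
    refine Set.mem_inv.2 ⟨k + -n, ?_⟩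
    simp

/-- A finitely generated group admits a transitive translation-like action by `ℤ` if and
only if it has a Cayley graph admitting a bi-infinite Hamiltonian path. -/
theorem transitive_Z_action_iff_cayley_biinf_ham
    (G : Type*) [Group G] [Group.FG G] :
    (∃ a : RightAction (Multiplicative ℤ) G, a.IsTransitive ∧
       ∀ S : Set G, IsFinGenSet S → a.IsTranslationLike (wordMetric S)) ↔
    (∃ S : Set G, IsFinGenSet S ∧ BiInfHamPath (cayleyGraph S)) := by
  constructor
  · rintro ⟨a, htr, htl⟩
    obtain ⟨S, hSc, hSf⟩ := (Group.fg_iff (G := G)).1 inferInstance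
    obtain ⟨hfree, hbd⟩ := htl S ⟨hSf, hSc⟩
    obtain ⟨C, hC⟩ := hbd (Multiplicative.ofAdd 1)
    have hT : (Set.range fun x : G => x⁻¹ * a.act x (Multiplicative.ofAdd 1)).Finite := by
      have hpow : ∀ n : ℕ, ((S ∪ S⁻¹) ^ n).Finite := by
        intro n
        induction n with
        | zero => simp
        | succ n ih => rw [pow_succ]; exact ih.mul (hSf.union hSf.inv)
      refine (((Set.finite_Iic ⌊C⌋₊).biUnion fun n _ => hpow n)).subset ?_
      rintro _ ⟨x, rfl⟩
      refine Set.mem_biUnion (x := wordDist S x (a.act x (Multiplicative.ofAdd 1))) ?_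
        (mem_pow_wordDist hSc _ _)
      exact Nat.le_floor (hC x)
    refine ⟨S ∪ Set.range fun x : G => x⁻¹ * a.act x (Multiplicative.ofAdd 1),
      ⟨hSf.union hT, ?_⟩, fun k => a.act 1 (Multiplicative.ofAdd k), ⟨?_, ?_⟩, ?_⟩
    · exact top_le_iff.1 (hSc ▸ Subgroup.closure_mono Set.subset_union_left)
    · intro j k hjk
      have h : a.act (a.act 1 (Multiplicative.ofAdd j)) (Multiplicative.ofAdd (k - j))
          = a.act 1 (Multiplicative.ofAdd j) := by
        rw [a.act_mul, ← ofAdd_add]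
        simpa using hjk.symm
      have h2 := hfree _ _ h
      have h3 : k - j = 0 := congrArg Multiplicative.toAdd h2
      omega
    · intro y
      obtain ⟨h, hh⟩ := htr 1 y
      exact ⟨Multiplicative.toAdd h, by simpa using hh⟩
    · intro k
      have e : a.act 1 (Multiplicative.ofAdd (k + 1))
          = a.act (a.act 1 (Multiplicative.ofAdd k)) (Multiplicative.ofAdd 1) := by
        rw [a.act_mul, ← ofAdd_add]
      simp only [cayleyGraph, SimpleGraph.fromRel_adj]
      rw [e]
      refine ⟨fun h => ?_, Or.inl (Or.inl (Or.inr ⟨_, rfl⟩))⟩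
      have h2 := hfree _ _ h.symm
      have h3 : (1 : ℤ) = 0 := by simpa using congrArg Multiplicative.toAdd h2
      omega
  · rintro ⟨S₀, ⟨hf, -⟩, P, hP, hadj⟩
    have h1 : (Set.range fun k : ℤ => (P k)⁻¹ * P (k + 1)).Finite := by
      refine (hf.union hf.inv).subset ?_
      rintro _ ⟨k, rfl⟩
      have h := hadj k
      simp only [cayleyGraph, SimpleGraph.fromRel_adj] at h
      rcases h.2 with h | h
      · exact h
      · rcases h with h | h
        · right; simpa using h
        · left; simpa using h
    let e := Equiv.ofBijective P hP
    have he : ∀ k, e k = P k := fun _ => rfl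
    refine ⟨⟨fun x h => e (e.symm x + Multiplicative.toAdd h), ?_, ?_⟩, ?_, ?_⟩
    · intro x; simp
    · intro x h k; simp [add_assoc]
    · intro x y
      exact ⟨Multiplicative.ofAdd (e.symm y - e.symm x), by simp⟩
    · intro S _
      refine ⟨?_, ?_⟩
      · intro x h hx
        have h2 : e.symm x + Multiplicative.toAdd h = e.symm x := by
          apply e.injective
          simpa using hx
        have h3 : Multiplicative.toAdd h = 0 := by omega
        exact Multiplicative.toAdd.injective h3
      · intro h
        have hfin := (finite_steps P h1 (Multiplicative.toAdd h)).image
          (fun g => ((sInf {n : ℕ | g ∈ (S ∪ S⁻¹) ^ n} : ℕ) : ℝ))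
        obtain ⟨C, hC⟩ := hfin.bddAbove
        refine ⟨C, fun x => hC ⟨_, ⟨e.symm x, rfl⟩, ?_⟩⟩
        have hx : P (e.symm x) = x := e.apply_symm_apply x
        simp only [hx]
        rfl
end

section
/- Let Γ be a connected infinite graph whose vertices have uniformly bounded degree. Then Γ is bilipschitz equivalent to a graph admitting a bi-infinite Hamiltonian path if and only if Γ has at most two ends. -/
open scoped Pointwise

universe u

namespace HP
variable {V : Type u} {G : SimpleGraph V}

def R (G : SimpleGraph V) (S : Set V) (a b : V) : Prop :=
  Relation.ReflTransGen (fun x y => G.Adj x y ∧ x ∈ S ∧ y ∈ S) a b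

def Cn (G : SimpleGraph V) (S : Set V) : Prop := ∀ a ∈ S, ∀ b ∈ S, R G S a b

def OneEnd (G : SimpleGraph V) (C : Set V) : Prop :=
  C.Infinite ∧ Cn G C ∧ ∀ F : Set V, F.Finite → ∀ x ∈ C \ F, ∀ y ∈ C \ F,
    {z | R G (C \ F) x z}.Infinite → {z | R G (C \ F) y z}.Infinite → R G (C \ F) x y

lemma R.symm {S : Set V} {a b : V} (h : R G S a b) : R G S b a := by
  induction h with
  | refl => exact Relation.ReflTransGen.refl
  | tail _ h ih => exact Relation.ReflTransGen.head ⟨h.1.symm, h.2.2, h.2.1⟩ ih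

lemma R.trans {S : Set V} {a b c : V} (h : R G S a b) (h' : R G S b c) : R G S a c :=
  Relation.ReflTransGen.trans h h'

lemma R.refl {S : Set V} (a : V) : R G S a a := Relation.ReflTransGen.refl

lemma R.mono {S T : Set V} (hST : S ⊆ T) {a b : V} (h : R G S a b) : R G T a b := by
  induction h with
  | refl => exact Relation.ReflTransGen.refl
  | tail _ h ih => exact Relation.ReflTransGen.tail ih ⟨h.1, hST h.2.1, hST h.2.2⟩

lemma R.mem {S : Set V} {a b : V} (h : R G S a b) (ha : a ∈ S) : b ∈ S := by
  induction h with
  | refl => exact ha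
  | tail _ h ih => exact h.2.2

lemma R.one {S : Set V} {a b : V} (h : G.Adj a b) (ha : a ∈ S) (hb : b ∈ S) : R G S a b :=
  Relation.ReflTransGen.single ⟨h, ha, hb⟩

lemma R.cls {S : Set V} {a b : V} (h : R G S a b) : R G {z | R G S a z} a b := by
  induction h with
  | refl => exact R.refl _
  | tail h1 h ih =>
    exact ih.trans (R.one h.1 h1 (R.trans h1 (R.one h.1 h.2.1 h.2.2)))

lemma cn_cls (S : Set V) (a : V) : Cn G {z | R G S a z} := fun _ hx _ hy =>
  (R.cls hx).symm.trans (R.cls hy)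

lemma cn_of_center {S : Set V} (a : V) (h : ∀ b ∈ S, R G S a b) : Cn G S :=
  fun x hx y hy => (h x hx).symm.trans (h y hy)

/-- crossing out of a set -/
lemma R.cross {D L : Set V} {a b : V} (h : R G D a b) (ha : a ∈ L) (hb : b ∉ L) :
    ∃ n m, R G (D ∩ L) a n ∧ n ∈ L ∧ n ∈ D ∧ m ∉ L ∧ m ∈ D ∧ G.Adj n m := by
  induction h using Relation.ReflTransGen.head_induction_on with
  | refl => exact absurd ha hb
  | head h h1 ih =>
    rename_i x y
    by_cases hy : y ∈ L
    · obtain ⟨n, m, h2, h3⟩ := ih hy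
      exact ⟨n, m, (R.one (S := D ∩ L) h.1 ⟨h.2.1, ha⟩ ⟨h.2.2, hy⟩).trans h2, h3⟩
    · exact ⟨x, y, R.refl _, ha, h.2.1, hy, h.2.2, h.1⟩

/-- Sekanina/Karaganis in sets -/
lemma ham_aux (hc : G.Connected) (n : ℕ) : ∀ S : Set V, S.Finite → S.ncard ≤ n → Cn G S →
    (∀ u ∈ S, ∀ w ∈ S, u ≠ w → ∃ l : List V, l.Nodup ∧ (∀ z, z ∈ l ↔ z ∈ S) ∧
      l.IsChain (fun x y => G.dist x y ≤ 3) ∧ l.head? = some u ∧ l.getLast? = some w) ∧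
    (∀ u ∈ S, ∀ w ∈ S, ∃ w', G.dist w' w ≤ 1 ∧ ∃ l : List V, l.Nodup ∧ (∀ z, z ∈ l ↔ z ∈ S) ∧
      l.IsChain (fun x y => G.dist x y ≤ 3) ∧ l.head? = some u ∧ l.getLast? = some w') := by
  induction n with
  | zero =>
    intro S hS hn _
    have : S = ∅ := by
      rw [← Set.ncard_eq_zero hS]; omega
    subst this
    simp
  | succ n ih =>
    intro S hS hn hCn
    have key : (∀ u ∈ S, ∀ w ∈ S, u ≠ w → ∃ l : List V, l.Nodup ∧ (∀ z, z ∈ l ↔ z ∈ S) ∧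
      l.IsChain (fun x y => G.dist x y ≤ 3) ∧ l.head? = some u ∧ l.getLast? = some w) := by
      intro u hu w hw huw
      set U : Set V := {z | R G (S \ {w}) u z} with hU
      have hUS : U ⊆ S \ {w} := fun z hz => R.mem hz ⟨hu, huw⟩
      have huU : u ∈ U := R.refl _
      have hwU : w ∉ U := fun h => (hUS h).2 rfl
      have hUfin : U.Finite := hS.subset (fun z hz => (hUS hz).1)
      have hWfin : (S \ U).Finite := hS.subset Set.sdiff_subset
      have hsum : (S \ U).ncard + U.ncard = S.ncard :=
        Set.ncard_sdiff_add_ncard_of_subset (fun z hz => (hUS hz).1) hS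
      have hUpos : 0 < U.ncard := (Set.ncard_pos hUfin).2 ⟨u, huU⟩
      have hWpos : 0 < (S \ U).ncard := (Set.ncard_pos hWfin).2 ⟨w, hw, hwU⟩
      have hWcn : Cn G (S \ U) := by
        apply cn_of_center w
        rintro b ⟨hbS, hbU⟩
        by_cases hbw : b = w
        · subst hbw; exact R.refl _
        obtain ⟨p, q, h1, h2, h3, h4, h5, h6⟩ := (hCn b hbS w hw).cross (L := {w}ᶜ) hbw (by simp)
        have hq : q = w := by simpa using h4
        subst hq
        have h1' : R G (S \ U) b p := by
          have := h1.cls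
          refine this.mono ?_
          intro z hz
          have hz' : R G (S \ {q}) b z := hz
          refine ⟨(hz'.mem ⟨hbS, hbw⟩).1, fun hzU => hbU ?_⟩
          exact R.trans hzU hz'.symm
        exact (h1'.trans (R.one h6 (h1'.mem ⟨hbS, hbU⟩) ⟨hw, hwU⟩)).symm
      obtain ⟨a, q, h1, h2, h3, h4, h5, h6⟩ := (hCn u hu w hw).cross (L := {w}ᶜ) huw (by simp)
      have hq : q = w := by simpa using h4
      subst hq
      have haU : a ∈ U := h1
      obtain ⟨a', ha', l1, n1, m1, c1, s1, e1⟩ :=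
        (ih U hUfin (by omega) (cn_cls _ _)).2 u huU a haU
      obtain ⟨b', hb', l2, n2, m2, c2, s2, e2⟩ :=
        (ih (S \ U) hWfin (by omega) hWcn).2 q ⟨hw, hwU⟩ q ⟨hw, hwU⟩
      refine ⟨l1 ++ l2.reverse, ?_, ?_, ?_, ?_, ?_⟩
      · rw [List.nodup_append]
        refine ⟨n1, List.nodup_reverse.2 n2, ?_⟩
        intro x hx y hy hxy
        subst hxy
        exact ((m2 x).1 (List.mem_reverse.1 hy)).2 ((m1 x).1 hx)
      · intro z
        rw [List.mem_append, List.mem_reverse, m1, m2]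
        constructor
        · rintro (h | h)
          · exact (hUS h).1
          · exact h.1
        · intro h
          by_cases hz : z ∈ U
          · exact Or.inl hz
          · exact Or.inr ⟨h, hz⟩
      · rw [List.isChain_append]
        refine ⟨c1, ?_, ?_⟩
        · rw [List.isChain_reverse]
          refine c2.imp ?_
          intro x y h
          rw [SimpleGraph.dist_comm]; exact h
        · intro x hx y hy
          rw [e1] at hx
          rw [List.head?_reverse, e2] at hy
          simp only [Option.mem_def, Option.some.injEq] at hx hy
          subst hx; subst hy
          have t1 := hc.dist_triangle (u := a') (v := a) (w := b')
          have t2 := hc.dist_triangle (u := a) (v := q) (w := b')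
          have t3 : G.dist a q = 1 := SimpleGraph.dist_eq_one_iff_adj.2 h6
          have t4 : G.dist q b' ≤ 1 := by rw [SimpleGraph.dist_comm]; exact hb'
          omega
      · rw [List.head?_append, s1]; rfl
      · rw [List.getLast?_append, List.getLast?_reverse, s2]; rfl
    refine ⟨key, ?_⟩
    intro u hu w hw
    by_cases huw : u = w
    · subst huw
      by_cases hex : ∃ v ∈ S, v ≠ u
      · obtain ⟨v, hv, hvu⟩ := hex
        obtain ⟨p, q, h1, h2, h3, h4, h5, h6⟩ :=
          (hCn u hu v hv).cross (L := {u}) rfl (by simpa using hvu)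
        have hp : p = u := h2
        subst hp
        obtain ⟨l, hl⟩ := key p hu q h5 (fun h => h4 h.symm)
        exact ⟨q, by rw [SimpleGraph.dist_comm, SimpleGraph.dist_eq_one_iff_adj.2 h6], l, hl⟩
      · push Not at hex
        refine ⟨u, by simp, [u], by simp, ?_, by simp, by simp, by simp⟩
        intro z
        simp only [List.mem_singleton]
        exact ⟨fun h => h ▸ hu, hex z⟩
    · obtain ⟨l, hl⟩ := key u hu w hw huw
      exact ⟨w, by simp, l, hl⟩

lemma R.fin {D : Set V} {a b : V} (h : R G D a b) (ha : a ∈ D) :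
    ∃ S : Set V, S.Finite ∧ S ⊆ D ∧ a ∈ S ∧ b ∈ S ∧ Cn G S := by
  induction h with
  | refl => exact ⟨{a}, by simp, by simpa using ha, rfl, rfl, by
      rintro x rfl y rfl; exact R.refl _⟩
  | tail h1 h ih =>
    rename_i x y
    obtain ⟨S, hS, hSD, haS, hxS, hcn⟩ := ih
    refine ⟨insert y S, hS.insert y, Set.insert_subset h.2.2 hSD, Or.inr haS, Or.inl rfl, ?_⟩
    apply cn_of_center x
    rintro b (rfl | hb)
    · exact R.one h.1 (Or.inr hxS) (Or.inl rfl)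
    · exact (hcn x hxS b hb).mono (Set.subset_insert _ _)

lemma fin_hull {D : Set V} (hD : Cn G D) {x : V} (hx : x ∈ D) {T : Set V} (hT : T.Finite) :
    T ⊆ D → ∃ S : Set V, S.Finite ∧ S ⊆ D ∧ x ∈ S ∧ T ⊆ S ∧ Cn G S := by
  induction T, hT using Set.Finite.induction_on with
  | empty => 
    intro _
    obtain ⟨S, h1, h2, h3, h4, h5⟩ := (R.refl (G := G) (S := D) x).fin hx
    exact ⟨S, h1, h2, h3, by simp, h5⟩
  | insert _ _ ih =>
    rename_i t T _ _
    intro hTD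
    obtain ⟨S, h1, h2, h3, h4, h5⟩ := ih (fun z hz => hTD (Or.inr hz))
    obtain ⟨S', h1', h2', h3', h4', h5'⟩ := (hD x hx t (hTD (Or.inl rfl))).fin hx
    refine ⟨S ∪ S', h1.union h1', Set.union_subset h2 h2', Or.inl h3, ?_, ?_⟩
    · rintro z (rfl | hz)
      · exact Or.inr h4'
      · exact Or.inl (h4 hz)
    · apply cn_of_center x
      rintro b (hb | hb)
      · exact (h5 x h3 b hb).mono Set.subset_union_left
      · exact (h5' x h3' b hb).mono Set.subset_union_right

lemma step (hc : G.Connected) (hlf : ∀ v, (G.neighborSet v).Finite) {D : Set V}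
    (hD : OneEnd G D) {x : V} (hx : x ∈ D) {T : Set V} (hT : T.Finite) :
    ∃ (l : List V) (x' : V), l.Nodup ∧ (∀ z ∈ l, z ∈ D) ∧ (∀ z ∈ D, z ∈ T → z ∈ l) ∧
      l.IsChain (fun x y => G.dist x y ≤ 3) ∧ l.head? = some x ∧
      (∀ y ∈ l.getLast?, G.dist y x' ≤ 3) ∧ x' ∈ D \ {z | z ∈ l} ∧ OneEnd G (D \ {z | z ∈ l}) := by
  obtain ⟨hinf, hcn, hone⟩ := hD
  obtain ⟨S, hSf, hSD, hxS, hTS, hScn⟩ := fin_hull hcn hx (T := T ∩ D)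
    (hT.subset Set.inter_subset_left) Set.inter_subset_right
  -- boundary
  set N : Set V := (⋃ s ∈ S, G.neighborSet s) ∩ (D \ S) with hN
  have hNf : N.Finite := (hSf.biUnion (fun s _ => hlf s)).subset Set.inter_subset_left
  have toN : ∀ v ∈ D \ S, ∃ n ∈ N, R G (D \ S) v n ∧ ∃ m ∈ S, G.Adj n m := by
    intro v hv
    obtain ⟨n, m, h1, h2, h3, h4, h5, h6⟩ := (hcn v hv.1 x hx).cross (L := Sᶜ) hv.2 (by simpa using hxS)
    have hm : m ∈ S := by simpa using h4
    refine ⟨n, ⟨?_, h3, h2⟩, h1, m, hm, h6⟩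
    simp only [Set.mem_iUnion]
    exact ⟨m, hm, h6.symm⟩
  have hex : ∃ n0 ∈ N, {z | R G (D \ S) n0 z}.Infinite := by
    by_contra hcon
    push Not at hcon
    apply hinf.sdiff hSf
    refine (hNf.biUnion (t := fun n => {z | R G (D \ S) n z}) (fun n hn => hcon n hn)).subset ?_
    intro v hv
    obtain ⟨n, hn, h, _⟩ := toN v hv
    simp only [Set.mem_iUnion]
    exact ⟨n, hn, h.symm⟩
  obtain ⟨n0, hn0, hUinf⟩ := hex
  set U : Set V := {z | R G (D \ S) n0 z} with hU
  have hUD : U ⊆ D \ S := fun z hz => R.mem hz hn0.2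
  set L : Set V := D \ U with hL
  have hSL : S ⊆ L := fun s hs => ⟨hSD hs, fun h => (hUD h).2 hs⟩
  have hDL : D \ L = U := by
    ext z; constructor
    · rintro ⟨h1, h2⟩; by_contra h; exact h2 ⟨h1, h⟩
    · intro h; exact ⟨(hUD h).1, fun h' => h'.2 h⟩
  have hLf : L.Finite := by
    have h1 : (⋃ n ∈ {n ∈ N | {z | R G (D \ S) n z}.Finite}, {z | R G (D \ S) n z}).Finite :=
      (hNf.subset (Set.sep_subset _ _)).biUnion (fun n hn => hn.2)
    refine (hSf.union h1).subset ?_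
    rintro v ⟨hvD, hvU⟩
    by_cases hvS : v ∈ S
    · exact Or.inl hvS
    right
    obtain ⟨n, hn, h, _⟩ := toN v ⟨hvD, hvS⟩
    simp only [Set.mem_iUnion]
    refine ⟨n, ⟨hn, ?_⟩, h.symm⟩
    by_contra hni
    exact hvU ((hone S hSf n0 hn0.2 n hn.2 hUinf hni).trans h.symm)
  have hLcn : Cn G L := by
    apply cn_of_center x
    rintro b ⟨hbD, hbU⟩
    by_cases hbS : b ∈ S
    · exact (hScn x hxS b hbS).mono hSL
    obtain ⟨n, hn, h, m, hm, hnm⟩ := toN b ⟨hbD, hbS⟩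
    have h' : R G L b n := by
      refine h.cls.mono ?_
      intro z hz
      have hz' : R G (D \ S) b z := hz
      exact ⟨(hz'.mem ⟨hbD, hbS⟩).1, fun hzU => hbU (R.trans hzU hz'.symm)⟩
    exact (h'.trans ((R.one hnm (h'.mem ⟨hbD, hbU⟩) (hSL hm)).trans
      ((hScn m hm x hxS).mono hSL))).symm
  obtain ⟨y, x', h1, h2, h3, h4, h5, h6⟩ :=
    (hcn x hx n0 hn0.2.1).cross (L := L) (hSL hxS) (fun h => h.2 (R.refl _))
  obtain ⟨y', hy', l, ln, lm, lc, ls, le⟩ :=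
    (ham_aux hc _ L hLf le_rfl hLcn).2 x (hSL hxS) y h2
  have hlL : {z | z ∈ l} = L := by ext z; exact lm z
  refine ⟨l, x', ln, fun z hz => ((lm z).1 hz).1, fun z hz hzT => (lm z).2 (hSL (hTS ⟨hzT, hz⟩)),
    lc, ls, ?_, ?_, ?_⟩
  · intro w hw
    rw [le] at hw
    simp only [Option.mem_def, Option.some.injEq] at hw
    subst hw
    have t1 := hc.dist_triangle (u := y') (v := y) (w := x')
    have t3 : G.dist y x' = 1 := SimpleGraph.dist_eq_one_iff_adj.2 h6
    omega
  · rw [hlL]; exact ⟨h5, h4⟩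
  · rw [hlL]
    refine ⟨by rw [hDL]; exact hUinf, by rw [hDL]; exact cn_cls _ _, ?_⟩
    intro F hF
    rw [Set.sdiff_sdiff]
    exact hone (L ∪ F) (hLf.union hF)

lemma ball_finite (hc : G.Connected) (hlf : ∀ v, (G.neighborSet v).Finite) (a : V) (n : ℕ) :
    {v | G.dist a v ≤ n}.Finite := by
  induction n with
  | zero =>
    refine (Set.finite_singleton a).subset ?_
    intro v hv
    have : G.dist a v = 0 := by simpa using hv
    exact ((hc.dist_eq_zero_iff).1 this).symm
  | succ n ih =>
    refine (ih.union (ih.biUnion (fun s _ => hlf s))).subset ?_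
    intro v hv
    have hv' : G.dist a v ≤ n + 1 := hv
    by_cases h : G.dist a v ≤ n
    · exact Or.inl h
    right
    obtain ⟨p, hp⟩ := hc.exists_walk_length_eq_dist v a
    rw [SimpleGraph.dist_comm] at hp
    cases p with
    | nil => simp at h
    | cons h1 q =>
      rename_i w
      simp only [Set.mem_iUnion]
      refine ⟨w, ?_, h1.symm⟩
      have := SimpleGraph.dist_le q
      rw [SimpleGraph.dist_comm] at this
      simp only [SimpleGraph.Walk.length_cons] at hp
      show G.dist a w ≤ n
      omega

def Ray (G : SimpleGraph V) (C : Set V) : Prop :=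
  ∃ p : ℕ → V, Function.Injective p ∧ Set.range p = C ∧ ∃ K : ℕ, ∀ n, G.dist (p n) (p (n+1)) ≤ K

/-- states of the recursion -/
def Good (G : SimpleGraph V) (C : Set V) (s : List V × V) : Prop :=
  s.1.Nodup ∧ (∀ z ∈ s.1, z ∈ C) ∧ s.1.IsChain (fun x y => G.dist x y ≤ 3) ∧
    (∀ y ∈ s.1.getLast?, G.dist y s.2 ≤ 3) ∧ s.2 ∈ C \ {z | z ∈ s.1} ∧
    OneEnd G (C \ {z | z ∈ s.1})

lemma good_step (hc : G.Connected) (hlf : ∀ v, (G.neighborSet v).Finite) {C : Set V}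
    (s : List V × V) (hs : Good G C s) (T : Set V) (hT : T.Finite) :
    ∃ s', Good G C s' ∧ s.1 <+: s'.1 ∧ s.1.length < s'.1.length ∧ ∀ z ∈ C, z ∈ T → z ∈ s'.1 := by
  obtain ⟨l0, x⟩ := s
  obtain ⟨h1, h2, h3, h4, h5, h6⟩ := hs
  dsimp only at h1 h2 h3 h4 h5 h6
  obtain ⟨l, x', g1, g2, g3, g4, g5, g6, g7, g8⟩ := step hc hlf h6 h5 hT
  have hset : C \ {z | z ∈ l0 ++ l} = (C \ {z | z ∈ l0}) \ {z | z ∈ l} := by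
    ext z; simp [and_assoc]
  refine ⟨(l0 ++ l, x'), ⟨?_, ?_, ?_, ?_, ?_, ?_⟩, ?_, ?_, ?_⟩
  · rw [List.nodup_append]
    refine ⟨h1, g1, ?_⟩
    rintro a ha b hb rfl
    exact (g2 a hb).2 ha
  · intro z hz
    rcases List.mem_append.1 hz with hz | hz
    · exact h2 z hz
    · exact (g2 z hz).1
  · refine List.isChain_append.2 ⟨h3, g4, ?_⟩
    intro a ha b hb
    rw [g5] at hb
    simp only [Option.mem_def, Option.some.injEq] at hb
    subst hb
    exact h4 a ha
  · intro y hy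
    have hl : l ≠ [] := by rintro rfl; simp at g5
    rw [List.getLast?_append_of_ne_nil _ hl] at hy
    exact g6 y hy
  · show x' ∈ C \ {z | z ∈ l0 ++ l}
    rw [hset]; exact g7
  · show OneEnd G (C \ {z | z ∈ l0 ++ l})
    rw [hset]; exact g8
  · exact List.prefix_append _ _
  · have hl : l ≠ [] := by rintro rfl; simp at g5
    have := List.length_pos_of_ne_nil hl
    simp only [List.length_append]
    omega
  · intro z hz hzT
    by_cases hz0 : z ∈ l0
    · exact List.mem_append_left _ hz0
    · exact List.mem_append_right _ (g3 z ⟨hz, hz0⟩ hzT)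

lemma ray_of_oneEnd (hc : G.Connected) (hlf : ∀ v, (G.neighborSet v).Finite) {C : Set V}
    (hC : OneEnd G C) : Ray G C := by
  obtain ⟨x, hx⟩ := hC.1.nonempty
  have h0 : Good G C ([], x) := by
    refine ⟨by simp, by simp, by simp, by simp, by simpa using hx, ?_⟩
    simpa using hC
  choose f f1 f2 f3 f4 using fun (s : {s // Good G C s}) (n : ℕ) =>
    good_step hc hlf s.1 s.2 {v | G.dist x v ≤ n} (ball_finite hc hlf x n)
  let st : ℕ → {s // Good G C s} := fun n =>
    Nat.rec ⟨([], x), h0⟩ (fun n s => ⟨f s n, f1 s n⟩) n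
  have st_succ : ∀ n, (st (n+1)).1 = f (st n) n := fun n => rfl
  let L : ℕ → List V := fun n => (st n).1.1
  have hpre : ∀ n, L n <+: L (n+1) := fun n => f2 (st n) n
  have hlt : ∀ n, (L n).length < (L (n+1)).length := fun n => f3 (st n) n
  have hlen : ∀ n, n ≤ (L n).length := by
    intro n
    induction n with
    | zero => simp
    | succ n ih => have := hlt n; omega
  have hpre' : ∀ m n, m ≤ n → L m <+: L n := by
    intro m n h
    induction n, h using Nat.le_induction with
    | base => exact List.prefix_refl _
    | succ n _ ih => exact ih.trans (hpre n)
  have hk : ∀ k, k < (L (k+1)).length := fun k => hlen (k+1)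
  let p : ℕ → V := fun k => (L (k+1))[k]'(hk k)
  have hp : ∀ n k (h : k < (L n).length), p k = (L n)[k] := by
    intro n k h
    rcases le_total (k+1) n with h' | h'
    · exact (hpre' _ _ h').getElem (hk k)
    · exact ((hpre' _ _ h').getElem h).symm
  refine ⟨p, ?_, ?_, 3, ?_⟩
  · intro i j hij
    have hi : i < (L (i+j+1)).length := by have := hlen (i+j+1); omega
    have hj : j < (L (i+j+1)).length := by have := hlen (i+j+1); omega
    rw [hp (i+j+1) i hi, hp (i+j+1) j hj] at hij
    exact (List.Nodup.getElem_inj_iff (st (i+j+1)).2.1).1 hij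
  · ext z
    constructor
    · rintro ⟨k, rfl⟩
      exact (st (k+1)).2.2.1 _ (List.getElem_mem _)
    · intro hz
      have : z ∈ L (G.dist x z + 1) := f4 (st (G.dist x z)) (G.dist x z) z hz
        (show G.dist x z ≤ G.dist x z from le_rfl)
      obtain ⟨i, hi, h⟩ := List.getElem_of_mem this
      exact ⟨i, by rw [hp (G.dist x z + 1) i hi, h]⟩
  · intro n
    have hch := (st (n+2)).2.2.2.1
    have h2 : n + 1 < (L (n+2)).length := hlen (n+2)
    rw [hp (n+2) n (by omega), hp (n+2) (n+1) h2]
    exact List.isChain_iff_getElem.1 hch n h2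

lemma Ray.insert {C : Set V} (h : Ray G C) {a : V} (ha : a ∉ C) : Ray G (insert a C) := by
  obtain ⟨p, hp, hr, K, hK⟩ := h
  refine ⟨fun n => Nat.casesOn n a p, ?_, ?_, max K (G.dist a (p 0)), ?_⟩
  · rintro (_ | i) (_ | j) h
    · rfl
    · exact absurd (hr ▸ ⟨j, h.symm⟩) ha
    · exact absurd (hr ▸ ⟨i, h⟩) ha
    · exact congrArg _ (hp h)
  · ext z
    constructor
    · rintro ⟨(_ | i), rfl⟩
      · exact Or.inl rfl
      · exact Or.inr (hr ▸ ⟨i, rfl⟩)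
    · rintro (rfl | hz)
      · exact ⟨0, rfl⟩
      · rw [← hr] at hz
        obtain ⟨i, rfl⟩ := hz
        exact ⟨i+1, rfl⟩
  · rintro (_ | n)
    · exact le_max_right _ _
    · exact (hK n).trans (le_max_left _ _)

lemma Ray.union {C T : Set V} (h : Ray G C) (hT : T.Finite) : Ray G (C ∪ T) := by
  induction T, hT using Set.Finite.induction_on with
  | empty => simpa using h
  | insert _ _ ih =>
    rename_i a T _ _
    rw [Set.union_insert]
    by_cases ha : a ∈ C ∪ T
    · rwa [Set.insert_eq_of_mem ha]
    · exact ih.insert ha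

def BiRay (G : SimpleGraph V) : Prop :=
  ∃ P : ℤ → V, Function.Bijective P ∧ ∃ K : ℕ, ∀ n, G.dist (P n) (P (n+1)) ≤ K

lemma biRay_of_rays {C : Set V} (h1 : Ray G C) (h2 : Ray G Cᶜ) : BiRay G := by
  obtain ⟨p, hp, hr, K, hK⟩ := h1
  obtain ⟨q, hq, hs, M, hM⟩ := h2
  have hpC : ∀ i, p i ∈ C := fun i => hr ▸ ⟨i, rfl⟩
  have hqC : ∀ i, q i ∉ C := fun i => by
    have : q i ∈ Cᶜ := hs ▸ ⟨i, rfl⟩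
    exact this
  refine ⟨fun k => Int.casesOn k p q, ⟨?_, ?_⟩, max (max K M) (G.dist (q 0) (p 0)), ?_⟩
  · rintro (i | i) (j | j) h
    · exact congrArg _ (hp h)
    · have h' : p i = q j := h
      exact absurd (h' ▸ hpC i) (hqC j)
    · have h' : q i = p j := h
      exact absurd (h' ▸ hpC j) (hqC i)
    · exact congrArg _ (hq h)
  · intro z
    by_cases hz : z ∈ C
    · rw [← hr] at hz
      obtain ⟨i, rfl⟩ := hz
      exact ⟨Int.ofNat i, rfl⟩
    · have hz : z ∈ Cᶜ := hz
      rw [← hs] at hz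
      obtain ⟨i, rfl⟩ := hz
      exact ⟨Int.negSucc i, rfl⟩
  · rintro (n | (_ | n))
    · exact (hK n).trans ((le_max_left _ _).trans (le_max_left _ _))
    · exact le_max_right _ _
    · have : G.dist (q (n+1)) (q n) ≤ M := by rw [SimpleGraph.dist_comm]; exact hM n
      have e : Int.negSucc (n+1) + 1 = Int.negSucc n := by omega
      rw [e]
      exact this.trans ((le_max_right _ _).trans (le_max_left _ _))

lemma biRay_of_ray (hc : G.Connected) (h : Ray G Set.univ) : BiRay G := by
  obtain ⟨p, hp, hr, K, hK⟩ := h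
  have h2 : ∀ n, G.dist (p n) (p (n+2)) ≤ 2 * K := by
    intro n
    have t := hc.dist_triangle (u := p n) (v := p (n+1)) (w := p (n+2))
    have := hK n
    have : G.dist (p (n+1)) (p (n+2)) ≤ K := hK (n+1)
    omega
  refine biRay_of_rays (C := Set.range fun n => p (2*n))
    ⟨fun n => p (2*n), ?_, rfl, 2*K, fun n => h2 (2*n)⟩
    ⟨fun n => p (2*n+1), ?_, ?_, 2*K, fun n => h2 (2*n+1)⟩
  · intro i j h
    have := hp h
    omega
  · intro i j h
    have := hp h
    omega
  · ext z
    constructor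
    · rintro ⟨i, rfl⟩ ⟨j, h⟩
      have := hp h
      omega
    · intro hz
      have : z ∈ Set.range p := hr ▸ trivial
      obtain ⟨k, rfl⟩ := this
      rcases Nat.even_or_odd' k with ⟨j, rfl | rfl⟩
      · exact absurd ⟨j, rfl⟩ hz
      · exact ⟨j, rfl⟩

/-- Bilipschitz graph from a bi-ray. -/
lemma bilip_of_biRay (hc : G.Connected) (h : BiRay G) :
    ∃ (W : Type u) (Γ' : SimpleGraph W), Γ'.Connected ∧
       BilipEquiv (graphDist G) (graphDist Γ') ∧ BiInfHamPath Γ' := by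
  obtain ⟨P, hP, K0, hK0⟩ := h
  let K := K0 + 1
  have hK : ∀ n, G.dist (P n) (P (n+1)) ≤ K := fun n => (hK0 n).trans (Nat.le_succ _)
  let H : SimpleGraph V :=
    { Adj := fun u v => u ≠ v ∧ G.dist u v ≤ K
      symm := ⟨fun u v h => ⟨h.1.symm, by rw [SimpleGraph.dist_comm]; exact h.2⟩⟩
      loopless := ⟨fun u h => h.1 rfl⟩ }
  have hle : G ≤ H := by
    intro u v huv
    refine ⟨huv.ne, ?_⟩
    rw [SimpleGraph.dist_eq_one_iff_adj.2 huv]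
    exact Nat.succ_le_succ (Nat.zero_le _)
  have hH : H.Connected := hc.mono hle
  refine ⟨V, H, hH, ⟨id, K, Function.bijective_id, by positivity, ?_⟩, P, hP, ?_⟩
  · intro u v
    have a1 : H.dist u v ≤ G.dist u v := by
      obtain ⟨p, hp⟩ := hc.exists_walk_length_eq_dist u v
      rw [← hp, ← SimpleGraph.Walk.length_map (SimpleGraph.Hom.ofLE hle) p]
      exact SimpleGraph.dist_le _
    have a2 : G.dist u v ≤ K * H.dist u v := by
      obtain ⟨p, hp⟩ := hH.exists_walk_length_eq_dist u v
      rw [← hp]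
      clear hp a1
      induction p with
      | nil => simp
      | cons h p ih =>
        rename_i a b c
        have t := hc.dist_triangle (u := a) (v := b) (w := c)
        have := h.2
        simp only [SimpleGraph.Walk.length_cons]
        rw [Nat.mul_succ]
        omega
    have hKpos : (1:ℝ) ≤ (K:ℝ) := by exact_mod_cast Nat.succ_le_succ (Nat.zero_le _)
    simp only [graphDist, id]
    constructor
    · rw [one_div, inv_mul_le_iff₀ (by positivity)]
      exact_mod_cast a2
    · have b1 : (H.dist u v : ℝ) ≤ G.dist u v := by exact_mod_cast a1
      have b2 : (0:ℝ) ≤ G.dist u v := by positivity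
      nlinarith
  · intro k
    refine ⟨fun h => ?_, hK k⟩
    have := hP.1 h
    omega

/-- Walk in `G` versus `G - A`. -/
lemma walk_del (A : Finset (Sym2 V)) {u v : V} (p : G.Walk u v) :
    (G.deleteEdges (A : Set (Sym2 V))).Reachable u v ∨
    ∃ a, (∃ e ∈ A, a ∈ e) ∧ (G.deleteEdges (A : Set (Sym2 V))).Reachable u a ∧
      G.dist u a ≤ p.length := by
  induction p with
  | nil => exact Or.inl (SimpleGraph.Reachable.refl _)
  | cons h p ih =>
    rename_i a b c
    by_cases hA : s(a, b) ∈ A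
    · exact Or.inr ⟨a, ⟨_, hA, Sym2.mem_mk_left _ _⟩, SimpleGraph.Reachable.refl _, by simp⟩
    · have hab : (G.deleteEdges (A : Set (Sym2 V))).Adj a b := by
        rw [SimpleGraph.deleteEdges_adj]; exact ⟨h, by simpa using hA⟩
      rcases ih with ih | ⟨x, h1, h2, h3⟩
      · exact Or.inl (hab.reachable.trans ih)
      · refine Or.inr ⟨x, h1, hab.reachable.trans h2, ?_⟩
        rcases Nat.eq_zero_or_pos (G.dist a x) with h0 | h0
        · omega
        · obtain ⟨q, hq⟩ := (h.reachable.trans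
            (h2.mono (SimpleGraph.deleteEdges_le _))).exists_walk_length_eq_dist
          obtain ⟨q', hq'⟩ := (h2.mono (SimpleGraph.deleteEdges_le _)).exists_walk_length_eq_dist
          have := SimpleGraph.dist_le (SimpleGraph.Walk.cons h q')
          simp only [SimpleGraph.Walk.length_cons] at this ⊢
          omega

lemma ends_finite (A : Finset (Sym2 V)) : {a : V | ∃ e ∈ A, a ∈ e}.Finite := by
  have : {a : V | ∃ e ∈ A, a ∈ e} = ⋃ e ∈ (A : Set (Sym2 V)), {a | a ∈ e} := by
    ext; simp
  rw [this]
  refine A.finite_toSet.biUnion (fun e _ => ?_)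
  induction e with
  | _ x y =>
    refine (Set.toFinite {x, y}).subset ?_
    intro z hz
    simpa using hz

/-- forward direction -/
lemma ends_of_biRay (hc : G.Connected) (hlf : ∀ v, (G.neighborSet v).Finite)
    (h : BiRay G) : graphEndsLE G 2 := by
  obtain ⟨P, hP, K, hK⟩ := h
  intro A
  set H := G.deleteEdges (A : Set (Sym2 V)) with hH
  let cp : ℤ → H.ConnectedComponent := fun k => H.connectedComponentMk (P k)
  have hbad : {k : ℤ | cp k ≠ cp (k+1)}.Finite := by
    have hf : (⋃ a ∈ {a : V | ∃ e ∈ A, a ∈ e}, {v | G.dist a v ≤ K}).Finite :=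
      (ends_finite A).biUnion (fun a _ => ball_finite hc hlf a K)
    refine (hf.preimage (f := P) hP.1.injOn).subset ?_
    intro k hk
    obtain ⟨p, hp⟩ := hc.exists_walk_length_eq_dist (P k) (P (k+1))
    rcases walk_del A p with h | ⟨a, h1, h2, h3⟩
    · exact absurd (SimpleGraph.ConnectedComponent.sound h) hk
    · simp only [Set.mem_preimage, Set.mem_iUnion]
      refine ⟨a, h1, ?_⟩
      show G.dist a (P k) ≤ K
      rw [SimpleGraph.dist_comm]
      have := hK k
      omega
  obtain ⟨M, hM⟩ := hbad.bddAbove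
  obtain ⟨m, hm⟩ := hbad.bddBelow
  have hup : ∀ k, M + 1 ≤ k → cp k = cp (M+1) := by
    intro k hk
    induction k, hk using Int.le_induction with
    | base => rfl
    | succ k hk ih =>
      rw [← ih]
      by_contra hne
      have := hM (show k ∈ {k : ℤ | cp k ≠ cp (k+1)} from fun h => hne h.symm)
      omega
  have hdown : ∀ k, k ≤ m → cp k = cp m := by
    intro k hk
    induction k, hk using Int.le_induction_down with
    | base => rfl
    | pred k hk ih =>
      rw [← ih]
      by_contra hne
      have := hm (show k - 1 ∈ {k : ℤ | cp k ≠ cp (k+1)} from fun h => hne (by simpa using h))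
      omega
  have hsub : {c : H.ConnectedComponent | c.supp.Infinite} ⊆ {cp m, cp (M+1)} := by
    intro c hcinf
    by_contra hne
    apply hcinf
    refine ((Set.finite_Icc m (M+1)).image P).subset ?_
    intro v hv
    obtain ⟨k, rfl⟩ := hP.2 v
    have hv' : cp k = c := hv
    refine ⟨k, ⟨?_, ?_⟩, rfl⟩
    · by_contra hlt
      exact hne (Or.inl (by rw [← hv', hdown k (by omega)]))
    · by_contra hlt
      exact hne (Or.inr (by rw [← hv', hup k (by omega)]; rfl))
  exact (Set.encard_le_encard hsub).trans (by
    refine (Set.encard_insert_le _ _).trans ?_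
    rw [Set.encard_singleton]
    norm_num)

lemma biRay_of_bilip (hc : G.Connected) {W : Type u} {H : SimpleGraph W}
    (hb : BilipEquiv (graphDist G) (graphDist H)) (hh : BiInfHamPath H) : BiRay G := by
  obtain ⟨f, c, hf, hcpos, hfc⟩ := hb
  obtain ⟨P, hP, hadj⟩ := hh
  let e := Equiv.ofBijective f hf
  refine ⟨fun k => e.symm (P k), e.symm.bijective.comp hP, ⌈c⌉₊, ?_⟩
  intro n
  have h1 := (hfc (e.symm (P n)) (e.symm (P (n+1)))).1
  have h2 : ∀ w, f (e.symm w) = w := fun w => e.apply_symm_apply w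
  rw [h2, h2] at h1
  simp only [graphDist] at h1
  rw [SimpleGraph.dist_eq_one_iff_adj.2 (hadj n), one_div, inv_mul_le_iff₀ hcpos] at h1
  have h3 : (G.dist (e.symm (P n)) (e.symm (P (n+1))) : ℝ) ≤ ⌈c⌉₊ := by
    have := Nat.le_ceil c
    push_cast at h1
    linarith
  exact_mod_cast h3

/-- Cutting lemma. -/
lemma cut (hlf : ∀ v, (G.neighborSet v).Finite) (C : Set V) (A0 : Finset (Sym2 V))
    (hA0 : ∀ a ∈ C, ∀ b ∉ C, G.Adj a b → s(a, b) ∈ A0) (F : Set V) (hF : F.Finite) :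
    ∃ A : Finset (Sym2 V),
      (∀ x ∈ C \ F, ∀ y, (G.deleteEdges (A : Set (Sym2 V))).Reachable x y ↔ R G (C \ F) x y) ∧
      (∀ a ∉ C, ∀ b ∉ C, a ∉ F → b ∉ F → s(a, b) ∉ A) := by
  classical
  have hfin : {e : Sym2 V | ∃ a b, G.Adj a b ∧ e = s(a, b) ∧
      ((a ∈ F) ∨ (a ∈ C ∧ b ∉ C))}.Finite := by
    refine (((hF.biUnion (fun s _ => (hlf s).image (fun b => s(s, b))))).union
      A0.finite_toSet).subset ?_
    rintro e ⟨a, b, hab, rfl, h | h⟩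
    · left
      simp only [Set.mem_iUnion]
      exact ⟨a, h, b, hab, rfl⟩
    · exact Or.inr (hA0 a h.1 b h.2 hab)
  refine ⟨hfin.toFinset, ?_, ?_⟩
  · intro x hx y
    rw [SimpleGraph.reachable_iff_reflTransGen]
    constructor
    · intro h
      induction h with
      | refl => exact R.refl _
      | tail h1 h ih =>
        rename_i b c
        refine ih.trans ?_
        have hb : b ∈ C \ F := ih.mem hx
        rw [SimpleGraph.deleteEdges_adj] at h
        have h2 := h.2
        simp only [Set.Finite.coe_toFinset, Set.mem_ofPred_eq, not_exists, not_and, not_or] at h2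
        have hcF : c ∉ F := (h2 c b h.1.symm Sym2.eq_swap).1
        have hcC : c ∈ C := by
          by_contra hcC
          exact (h2 b c h.1 rfl).2 hb.1 hcC
        exact R.one h.1 hb ⟨hcC, hcF⟩
    · intro h
      induction h with
      | refl => exact Relation.ReflTransGen.refl
      | tail h1 h ih =>
        rename_i b c
        refine ih.tail ?_
        rw [SimpleGraph.deleteEdges_adj]
        refine ⟨h.1, ?_⟩
        simp only [Set.Finite.coe_toFinset, Set.mem_ofPred_eq]
        rintro ⟨p, q, hpq, he, hh⟩
        have hb := h.2.1
        have hc := h.2.2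
        rcases Sym2.eq_iff.1 he with ⟨rfl, rfl⟩ | ⟨rfl, rfl⟩
        · exact hh.elim hb.2 (fun t => t.2 hc.1)
        · exact hh.elim hc.2 (fun t => t.2 hb.1)
  · intro a ha b hb haF hbF
    simp only [Set.Finite.mem_toFinset, Set.mem_ofPred_eq]
    rintro ⟨p, q, hpq, he, hh⟩
    rcases Sym2.eq_iff.1 he with ⟨rfl, rfl⟩ | ⟨rfl, rfl⟩
    · exact hh.elim haF (fun t => ha t.1)
    · exact hh.elim hbF (fun t => hb t.1)

lemma supp_eq (H : SimpleGraph V) (x : V) :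
    (H.connectedComponentMk x).supp = {z | H.Reachable x z} := by
  ext z
  simp only [SimpleGraph.ConnectedComponent.mem_supp_iff, SimpleGraph.ConnectedComponent.eq,
    Set.mem_ofPred_eq]
  exact ⟨fun h => h.symm, fun h => h.symm⟩

lemma no_three (h : graphEndsLE G 2) (A : Finset (Sym2 V)) (x y z : V)
    (hx : {t | (G.deleteEdges (A : Set (Sym2 V))).Reachable x t}.Infinite)
    (hy : {t | (G.deleteEdges (A : Set (Sym2 V))).Reachable y t}.Infinite)
    (hz : {t | (G.deleteEdges (A : Set (Sym2 V))).Reachable z t}.Infinite)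
    (hxy : ¬ (G.deleteEdges (A : Set (Sym2 V))).Reachable x y)
    (hxz : ¬ (G.deleteEdges (A : Set (Sym2 V))).Reachable x z)
    (hyz : ¬ (G.deleteEdges (A : Set (Sym2 V))).Reachable y z) : False := by
  set H := G.deleteEdges (A : Set (Sym2 V)) with hH
  have h2 := h A
  rw [← hH] at h2
  have hsub : {H.connectedComponentMk x, H.connectedComponentMk y, H.connectedComponentMk z} ⊆
      {c : H.ConnectedComponent | c.supp.Infinite} := by
    rintro c (rfl | rfl | rfl)
    · rw [Set.mem_ofPred_eq, supp_eq]; exact hx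
    · rw [Set.mem_ofPred_eq, supp_eq]; exact hy
    · rw [Set.mem_ofPred_eq, supp_eq]; exact hz
  have h3 := (Set.encard_le_encard hsub).trans h2
  have h4 : ({H.connectedComponentMk x, H.connectedComponentMk y, H.connectedComponentMk z} :
      Set H.ConnectedComponent).encard = 3 := by
    rw [Set.encard_eq_three]
    refine ⟨_, _, _, ?_, ?_, ?_, rfl⟩ <;> rw [Ne, SimpleGraph.ConnectedComponent.eq] <;> assumption
  rw [h4] at h3
  exact absurd h3 (by decide)

lemma oneEnd_of_two (hlf : ∀ v, (G.neighborSet v).Finite)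
    (h : graphEndsLE G 2) (A : Finset (Sym2 V)) (x z : V)
    (hx : {t | (G.deleteEdges (A : Set (Sym2 V))).Reachable x t}.Infinite)
    (hz : {t | (G.deleteEdges (A : Set (Sym2 V))).Reachable z t}.Infinite)
    (hxz : ¬ (G.deleteEdges (A : Set (Sym2 V))).Reachable x z) :
    OneEnd G {t | (G.deleteEdges (A : Set (Sym2 V))).Reachable x t} := by
  set H := G.deleteEdges (A : Set (Sym2 V)) with hH
  set C : Set V := {t | H.Reachable x t} with hC
  refine ⟨hx, ?_, ?_⟩
  · apply cn_of_center x
    intro b hb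
    have hb' := (SimpleGraph.reachable_iff_reflTransGen _ _).1 hb
    clear hb
    induction hb' with
    | refl => exact R.refl _
    | tail h1 h ih =>
      rename_i p q
      refine ih.trans (R.one ((SimpleGraph.deleteEdges_adj.1 h).1) ?_ ?_)
      · exact (SimpleGraph.reachable_iff_reflTransGen _ _).2 h1
      · exact (SimpleGraph.reachable_iff_reflTransGen _ _).2 (h1.tail h)
  · intro F0 hF0
    have hCF : C \ F0 = C \ (F0 ∩ C) := by ext; simp
    rw [hCF]
    intro y hy w hw hyi hwi
    set F := F0 ∩ C with hF
    have hFf : F.Finite := hF0.subset Set.inter_subset_left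
    obtain ⟨B, hB1, hB2⟩ := cut hlf C A (by
      intro a ha b hb hab
      by_contra hnA
      apply hb
      have : H.Adj a b := SimpleGraph.deleteEdges_adj.2 ⟨hab, by simpa using hnA⟩
      exact SimpleGraph.Reachable.trans ha this.reachable) F hFf
    by_contra hcon
    have hzC : z ∉ C := hxz
    refine no_three h B y w z ?_ ?_ ?_ ?_ ?_ ?_
    · convert hyi using 3; exact hB1 y hy _
    · convert hwi using 3; exact hB1 w hw _
    · refine hz.mono ?_
      intro t ht
      have ht' := (SimpleGraph.reachable_iff_reflTransGen _ _).1 ht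
      clear ht
      induction ht' with
      | refl => exact SimpleGraph.Reachable.refl _
      | tail h1 h ih =>
        rename_i p q
        refine SimpleGraph.Reachable.trans ih (SimpleGraph.Adj.reachable ?_)
        have hp : p ∉ C := fun hp => hxz (SimpleGraph.Reachable.trans hp
          ((SimpleGraph.reachable_iff_reflTransGen _ _).2 h1).symm)
        have hq : q ∉ C := fun hq => hxz (SimpleGraph.Reachable.trans hq
          ((SimpleGraph.reachable_iff_reflTransGen _ _).2 (h1.tail h)).symm)
        refine SimpleGraph.deleteEdges_adj.2 ⟨(SimpleGraph.deleteEdges_adj.1 h).1, ?_⟩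
        simpa using hB2 p hp q hq (fun h => hp h.2) (fun h => hq h.2)
    · rwa [hB1 y hy]
    · rw [hB1 y hy]; exact fun hr => hzC (hr.mem hy).1
    · rw [hB1 w hw]; exact fun hr => hzC (hr.mem hw).1

lemma biRay_of_ends [Infinite V] (hc : G.Connected) (hlf : ∀ v, (G.neighborSet v).Finite)
    (h : graphEndsLE G 2) : BiRay G := by
  by_cases hex : ∃ (A : Finset (Sym2 V)) (x z : V),
    {t | (G.deleteEdges (A : Set (Sym2 V))).Reachable x t}.Infinite ∧
    {t | (G.deleteEdges (A : Set (Sym2 V))).Reachable z t}.Infinite ∧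
    ¬ (G.deleteEdges (A : Set (Sym2 V))).Reachable x z
  · obtain ⟨A, x, z, hx, hz, hxz⟩ := hex
    have r1 := ray_of_oneEnd hc hlf (oneEnd_of_two hlf h A x z hx hz hxz)
    have r2 := ray_of_oneEnd hc hlf (oneEnd_of_two hlf h A z x hz hx (fun h => hxz h.symm))
    set H := G.deleteEdges (A : Set (Sym2 V)) with hH
    have hrest : ({t | H.Reachable x t} ∪ {t | H.Reachable z t})ᶜ.Finite := by
      have hf : (⋃ a ∈ {a ∈ {a : V | ∃ e ∈ A, a ∈ e} | {t | H.Reachable a t}.Finite},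
          {t | H.Reachable a t}).Finite :=
        ((ends_finite A).subset (Set.sep_subset _ _)).biUnion (fun a ha => ha.2)
      refine hf.subset ?_
      intro v hv
      have hvx : ¬ H.Reachable x v := fun h => hv (Or.inl h)
      have hvz : ¬ H.Reachable z v := fun h => hv (Or.inr h)
      obtain ⟨p⟩ := hc.preconnected v x
      rcases walk_del A p with h' | ⟨a, h1, h2, _⟩
      · exact absurd h'.symm hvx
      · simp only [Set.mem_iUnion]
        refine ⟨a, ⟨h1, ?_⟩, h2.symm⟩
        by_contra hinf
        exact no_three h A x z a hx hz hinf hxz (fun h => hvx (h.trans h2.symm))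
          (fun h => hvz (h.trans h2.symm))
    have r3 := r2.union hrest
    refine biRay_of_rays r1 ?_
    convert r3 using 1
    ext v
    simp only [Set.mem_compl_iff, Set.mem_union, Set.mem_ofPred_eq]
    constructor
    · intro h; tauto
    · rintro (h | h) h'
      · exact hxz (h'.trans h.symm)
      · exact h (Or.inl h')
  · push Not at hex
    apply biRay_of_ray hc
    apply ray_of_oneEnd hc hlf
    refine ⟨Set.infinite_univ, ?_, ?_⟩
    · intro a _ b _
      have := (SimpleGraph.reachable_iff_reflTransGen _ _).1 (hc.preconnected a b)
      induction this with
      | refl => exact R.refl _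
      | tail _ h ih => exact (ih trivial).trans (R.one h trivial trivial)
    · intro F hF x hx y hy hxi hyi
      obtain ⟨B, hB1, _⟩ := cut hlf Set.univ (∅ : Finset (Sym2 V)) (by simp) F hF
      rw [← hB1 x hx]
      refine hex B x y ?_ ?_
      · convert hxi using 3; exact hB1 x hx _
      · convert hyi using 3; exact hB1 y hy _

end HP

/-- A connected infinite graph of uniformly bounded degree is bilipschitz equivalent to a
graph admitting a bi-infinite Hamiltonian path if and only if it has at most two ends. -/
theorem bilip_to_ham_iff_at_most_two_ends {V : Type u} (Γ : SimpleGraph V) [Infinite V]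
    (hconn : Γ.Connected) (D : ℕ) (hdeg : ∀ v : V, (Γ.neighborSet v).encard ≤ D) :
    (∃ (W : Type u) (Γ' : SimpleGraph W), Γ'.Connected ∧
       BilipEquiv (graphDist Γ) (graphDist Γ') ∧ BiInfHamPath Γ') ↔
    graphEndsLE Γ 2 := by
  have hlf : ∀ v, (Γ.neighborSet v).Finite := fun v =>
    Set.finite_of_encard_le_coe (hdeg v)
  constructor
  · rintro ⟨W, Γ', _, hb, hh⟩
    exact HP.ends_of_biRay hconn hlf (HP.biRay_of_bilip hconn hb hh)
  · intro h
    exact HP.bilip_of_biRay hconn (HP.biRay_of_ends hconn hlf h)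
end
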